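/- Let q be a prime power with ω(q^3 − 1) ≥ 24 or q ≥ 8·10^{12}. Then for every a in F_q there exists a primitive element ξ of F_{q^3} such that ξ + ξ^{-1} is also a primitive element of F_{q^3} and Tr(ξ) = a. -/

import Mathlib

section

open Polynomial

namespace Stp

/-- Coprimality with a Kummer polynomial. -/
theorem coprime_kummer {M : Type*} [Field M] (a : M) (d : ℕ) (hd : 0 < d)
    (H : ∀ e : ℕ, (∃ b : M, b ^ d = a ^ e) → d ∣ e)
    (η : M[X]) (hη : η ≠ 0) (hdeg : η.natDegree < d) :
    IsCoprime η (X ^ d - C a) := by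
  by_contra hcon
  classical
  have hne : EuclideanDomain.gcd η (X ^ d - C a) ≠ 0 :=
    fun h => hη (EuclideanDomain.gcd_eq_zero_iff.1 h).1
  have hnu : ¬ IsUnit (EuclideanDomain.gcd η (X ^ d - C a)) :=
    fun h => hcon (EuclideanDomain.gcd_isUnit_iff.1 h)
  obtain ⟨P, hP, hPd⟩ := WfDvdMonoid.exists_irreducible_factor hnu hne
  have h1 : P ∣ η := hPd.trans (EuclideanDomain.gcd_dvd_left _ _)
  have h2 : P ∣ X ^ d - C a := hPd.trans (EuclideanDomain.gcd_dvd_right _ _)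
  haveI : Fact (Irreducible P) := ⟨hP⟩
  have hroot : (AdjoinRoot.root P) ^ d = algebraMap M (AdjoinRoot P) a := by
    have := AdjoinRoot.mk_eq_zero.2 h2
    simp only [map_sub, map_pow, AdjoinRoot.mk_X, AdjoinRoot.mk_C, sub_eq_zero] at this
    exact this
  have hfin : Module.finrank M (AdjoinRoot P) = P.natDegree := by
    rw [(AdjoinRoot.powerBasis hP.ne_zero).finrank, AdjoinRoot.powerBasis_dim]
  have h3 := congrArg (Algebra.norm M) hroot
  rw [map_pow, Algebra.norm_algebraMap, hfin] at h3
  have h4 := H _ ⟨_, h3⟩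
  have h5 : P.natDegree ≤ η.natDegree := natDegree_le_of_dvd h1 hη
  have h6 := hP.natDegree_pos
  have := Nat.le_of_dvd h6 h4
  omega

theorem natDegree_resultant_le {R : Type*} [CommRing R] (f g : R[X][X]) (m n a b : ℕ)
    (hf : ∀ i, (f.coeff i).natDegree ≤ a) (hg : ∀ i, (g.coeff i).natDegree ≤ b) :
    (resultant f g m n).natDegree ≤ n * a + m * b := by
  rw [resultant, Matrix.det_apply]
  refine natDegree_sum_le_of_forall_le _ _ (fun σ _ => ?_)
  refine (natDegree_smul_le _ _).trans ?_
  refine (natDegree_prod_le _ _).trans ?_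
  rw [Fin.sum_univ_add]
  have e1 : ∑ i : Fin m, (sylvester f g m n (σ (Fin.castAdd n i)) (Fin.castAdd n i)).natDegree ≤ m * b := by
    refine (Finset.sum_le_card_nsmul _ _ b (fun i _ => ?_)).trans (by simp)
    simp only [sylvester, Matrix.of_apply, Fin.addCases_left]
    split_ifs
    · exact hg _
    · simp
  have e2 : ∑ i : Fin n, (sylvester f g m n (σ (Fin.natAdd m i)) (Fin.natAdd m i)).natDegree ≤ n * a := by
    refine (Finset.sum_le_card_nsmul _ _ a (fun i _ => ?_)).trans (by simp)
    simp only [sylvester, Matrix.of_apply, Fin.addCases_right]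
    split_ifs
    · exact hf _
    · simp
  omega

/-- Specialisation `y ↦ x ^ r`, `x ↦ x` on `k[y][x]`. -/
noncomputable def spec (k : Type*) [CommRing k] (r : ℕ) : k[X][X] →+* k[X] :=
  eval₂RingHom (expand k r : k[X] →+* k[X]) X

theorem spec_inj {k : Type*} [Field k] (r : ℕ) (P : k[X][X]) (hdeg : P.natDegree < r)
    (h : spec k r P = 0) : P = 0 := by
  have hr : 0 < r := by omega
  have key : ∀ i l, i < r → (P.coeff i).coeff l = (spec k r P).coeff (i + l * r) := by
    intro i l hi
    simp only [spec, coe_eval₂RingHom]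
    rw [eval₂_eq_sum_range' _ hdeg, finsetSum_coeff]
    rw [Finset.sum_eq_single i]
    · rw [add_comm i, coeff_mul_X_pow]
      exact (coeff_expand_mul hr _ _).symm
    · intro j hj hji
      rw [coeff_mul_X_pow']
      split_ifs with hle
      · change ((expand k r) (P.coeff j)).coeff _ = 0
        rw [coeff_expand hr, if_neg]
        rintro ⟨c, hc⟩
        apply hji
        have hj' := Finset.mem_range.1 hj
        have h1 : i + l * r = j + r * c := by omega
        have := congrArg (· % r) h1
        simpa [Nat.add_mul_mod_self_right, Nat.mod_eq_of_lt hi, Nat.mod_eq_of_lt hj'] using this.symm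
      · rfl
    · intro hi'; exact absurd (Finset.mem_range.2 hi) hi'
  ext i l
  by_cases hi : i < r
  · rw [key i l hi, h]; simp
  · have : P.coeff i = 0 := coeff_eq_zero_of_natDegree_lt (by omega)
    rw [this]; simp
 
end Stp

end

section

open Polynomial

namespace Stp

theorem mult_C {k : Type*} [Field k] (π G : k[X]) :
    multiplicity (C π : k[X][X]) (C G) = multiplicity π G := by
  have : emultiplicity (C π : k[X][X]) (C G) = emultiplicity π G := by
    rw [emultiplicity_eq_emultiplicity_iff]
    intro n
    rw [← C_pow]
    constructor
    · intro h
      have := (C_dvd_iff_dvd_coeff _ _).1 h 0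
      simpa using this
    · intro h; exact map_dvd C h
  unfold multiplicity
  rw [this]

theorem mult_const {k : Type*} [Field k] (π Gs : k[X]) (hπ : Irreducible π) (hG : Gs ≠ 0) :
    ¬ (C π : k[X][X]) ∣ Gs.map C := by
  intro h
  have := (C_dvd_iff_dvd_coeff _ _).1 h Gs.natDegree
  rw [coeff_map] at this
  apply hπ.not_isUnit
  refine isUnit_of_dvd_unit this ?_
  rw [isUnit_C]
  exact isUnit_iff_ne_zero.2 (by simpa using hG)

theorem dvd_of_pow_eq {k : Type*} [Field k] (d : ℕ) (G Gs : k[X]) (hG0 : G ≠ 0) (hGs : Gs ≠ 0)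
    (hG : ∀ e, (∀ π : k[X], Irreducible π → d ∣ e * multiplicity π G) → d ∣ e)
    (e : ℕ) (u v : k[X][X]) (hu : u ≠ 0) (hv : v ≠ 0)
    (h : u ^ d * (G.map C) ^ e = (C Gs) ^ e * v ^ d) : d ∣ e := by
  apply hG
  intro π hπ
  have h' := congrArg (Bivariate.swap (R := k)) h
  simp only [map_mul, map_pow, Bivariate.swap_C, Bivariate.swap_map_C] at h'
  have hp : Prime (C π : k[X][X]) := prime_C_iff.2 hπ.prime
  have hu' : Bivariate.swap u ≠ 0 := by simpa using hu
  have hv' : Bivariate.swap v ≠ 0 := by simpa using hv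
  have fin : ∀ z : k[X][X], z ≠ 0 → FiniteMultiplicity (C π : k[X][X]) z :=
    fun z hz => FiniteMultiplicity.of_prime_left hp hz
  have hCG : (C G : k[X][X]) ≠ 0 := by simpa using hG0
  have hGm : (Gs.map C : k[X][X]) ≠ 0 := by
    rw [Ne, Polynomial.map_eq_zero_iff C_injective]; exact hGs
  have h2 := congrArg (multiplicity (C π : k[X][X])) h'
  rw [multiplicity_mul hp (fin _ (by positivity)), multiplicity_mul hp (fin _ (by positivity)),
    FiniteMultiplicity.multiplicity_pow hp (fin _ hu'), FiniteMultiplicity.multiplicity_pow hp (fin _ hv'),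
    FiniteMultiplicity.multiplicity_pow hp (fin _ hCG), FiniteMultiplicity.multiplicity_pow hp (fin _ hGm),
    mult_C, multiplicity_eq_zero.2 (mult_const π Gs hπ hGs), mul_zero, zero_add] at h2
  exact (Nat.dvd_add_right (dvd_mul_right d _)).1 (h2 ▸ dvd_mul_right d _)

theorem nonvanish {k : Type*} [Field k] (d w r a D : ℕ) (hd : 0 < d) (hr : r = d * w + 1)
    (G Gs : k[X]) (hG0 : G ≠ 0) (hGs : Gs ≠ 0) (hGGs : expand k r Gs = G ^ r)
    (hG : ∀ e, (∀ π : k[X], Irreducible π → d ∣ e * multiplicity π G) → d ∣ e)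
    (hD : G.natDegree ≤ D)
    (η : k[X][X][X]) (hη : η ≠ 0) (hηd : η.natDegree < d)
    (hηa : ∀ i, (η.coeff i).natDegree ≤ a) (hlt : d * a + (d - 1) * D < r) :
    (η.map (spec k r)).eval (G ^ w) ≠ 0 := by
  intro h0
  set Gx : k[X][X] := G.map C with hGx
  have hGx0 : Gx ≠ 0 := by
    rw [Ne, hGx, Polynomial.map_eq_zero_iff C_injective]; exact hG0
  have hCGs : (C Gs : k[X][X]) ≠ 0 := by simpa using hGs
  set f : k[X][X][X] := C Gx * X ^ d - C (C Gs) with hf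
  have hfdeg : f.natDegree = d := by
    rw [hf, natDegree_sub_C, natDegree_C_mul_X_pow _ _ hGx0]
  let M := FractionRing k[X][X]
  let φ : k[X][X] →+* M := algebraMap _ _
  have hφ : Function.Injective φ := IsFractionRing.injective _ _
  have hcop : IsCoprime (η.map φ) (f.map φ) := by
    have e1 : f.map φ = C (φ Gx) * (X ^ d - C (φ (C Gs) / φ Gx)) := by
      have : φ Gx ≠ 0 := by simpa using (map_ne_zero_iff φ hφ).2 hGx0
      rw [hf, mul_sub, ← C_mul, mul_div_cancel₀ _ this]
      simp
    have hu : IsUnit (C (φ Gx)) := isUnit_C.2 (isUnit_iff_ne_zero.2 ((map_ne_zero_iff φ hφ).2 hGx0))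
    rw [e1, isCoprime_mul_unit_left_right hu]
    apply coprime_kummer _ _ hd
    · rintro e ⟨b, hb⟩
      obtain ⟨u, v, hv, rfl⟩ := IsFractionRing.div_surjective (A := k[X][X]) b
      have hv0 : v ≠ 0 := nonZeroDivisors.ne_zero hv
      have hGx' : φ Gx ≠ 0 := (map_ne_zero_iff φ hφ).2 hGx0
      have hv' : φ v ≠ 0 := (map_ne_zero_iff φ hφ).2 hv0
      have hGs' : φ (C Gs) ≠ 0 := (map_ne_zero_iff φ hφ).2 hCGs
      have hb' : φ u ^ d * φ Gx ^ e = φ (C Gs) ^ e * φ v ^ d := by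
        change (φ u / φ v) ^ d = _ at hb
        rw [div_pow, div_pow, div_eq_div_iff (by positivity) (by positivity)] at hb
        exact hb
      have hb2 : u ^ d * Gx ^ e = (C Gs) ^ e * v ^ d := by
        apply hφ; simpa using hb'
      have hu0 : u ≠ 0 := by
        rintro rfl
        rw [zero_pow hd.ne', zero_mul] at hb2
        exact (mul_ne_zero (pow_ne_zero e hCGs) (pow_ne_zero d hv0)) hb2.symm
      exact dvd_of_pow_eq d G Gs hG0 hGs hG e u v hu0 hv0 hb2
    · rwa [Ne, Polynomial.map_eq_zero_iff hφ]
    · rwa [natDegree_map_eq_of_injective hφ]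
  have hres : resultant η f ≠ 0 := by
    intro hz
    have := resultant_ne_zero _ _ hcop
    rw [natDegree_map_eq_of_injective hφ, natDegree_map_eq_of_injective hφ, resultant_map_map, hz,
      map_zero] at this
    exact this rfl
  obtain ⟨p, q, hp, hq, hpq⟩ := exists_mul_add_mul_eq_C_resultant η f le_rfl le_rfl (by right; omega)
  have hspec : spec k r (resultant η f) = 0 := by
    have h2 := congrArg (fun z => (z.map (spec k r)).eval (G ^ w)) hpq
    simp only [Polynomial.map_add, Polynomial.map_mul, eval_add, eval_mul, h0, map_C, eval_C,
      zero_mul, zero_add] at h2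
    rw [← h2]
    have : (f.map (spec k r)).eval (G ^ w) = 0 := by
      simp only [hf, Polynomial.map_sub, Polynomial.map_mul, map_C, Polynomial.map_pow, map_X,
        eval_sub, eval_mul, eval_C, eval_pow, eval_X]
      have s1 : spec k r Gx = G := by
        simp only [spec, hGx, coe_eval₂RingHom, eval₂_map]
        have : ((expand k r : k[X] →+* k[X]).comp C) = C := by ext; simp
        rw [this, eval₂_C_X]
      have s2 : spec k r (C Gs) = G ^ r := by
        simp only [spec, coe_eval₂RingHom, eval₂_C]
        exact hGGs
      rw [s1, s2, hr, ← pow_mul, mul_comm d w, pow_succ]; ring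
    rw [this]; ring
  refine hres (spec_inj r _ ?_ hspec)
  refine lt_of_le_of_lt (natDegree_resultant_le _ _ _ _ a D hηa ?_) ?_
  · intro i
    rw [hf, coeff_sub, coeff_C_mul, coeff_X_pow, coeff_C]
    refine (natDegree_sub_le _ _).trans (max_le ?_ ?_)
    · split_ifs
      · rw [mul_one]; exact natDegree_map_le.trans hD
      · simp
    · split_ifs <;> simp
  · rw [hfdeg]
    refine lt_of_le_of_lt ?_ hlt
    gcongr
    omega

end Stp

end

section

open Polynomial

namespace Stp

set_option maxHeartbeats 1000000 in
theorem stepanov {k : Type*} [Field k] [Fintype k] [DecidableEq k] (p m r : ℕ) [Fact p.Prime] [CharP k p]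
    (hrp : r = p ^ m) (hcard : Fintype.card k = r ^ 2) (d w D : ℕ) (hd : 0 < d)
    (hr : r = d * w + 1) (G : k[X]) (hG0 : G ≠ 0)
    (hG : ∀ e, (∀ π : k[X], Irreducible π → d ∣ e * multiplicity π G) → d ∣ e)
    (hD : G.natDegree ≤ D) (hw : D * (d * D + 3 * d + 2) + D + 3 < w) (c : k) :
    d * (Finset.univ.filter (fun x : k => G.eval x ≠ 0 ∧ (G.eval x) ^ (w * (r + 1)) = c)).card
      ≤ r ^ 2 + 2 * d * (D + 1) * r := by
  obtain ⟨A, hA⟩ : ∃ A, w = A + D := ⟨w - D, by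
    omega⟩
  have hA0 : 0 < A := by omega
  set J := w + 1 + (D + 2) with hJ
  set W := G ^ w with hW
  set N := r * A + J + D * r with hN
  let ι := Fin d × Fin J × Fin A
  let v : ι → k[X] := fun t => C (c ^ (t.1 : ℕ)) * X ^ ((t.2.2 : ℕ) * r + (t.2.1 : ℕ)) * W ^ (d - 1 - (t.1 : ℕ))
  have hWdeg : ∀ i, (W ^ i).natDegree ≤ i * (w * D) := by
    intro i
    refine natDegree_pow_le.trans (Nat.mul_le_mul_left _ ?_)
    exact natDegree_pow_le.trans (Nat.mul_le_mul_left _ hD)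
  have hdw : ∀ i, i ≤ d - 1 → i * (w * D) ≤ D * r := by
    intro i hi
    rw [hr]
    have : i * w ≤ d * w := Nat.mul_le_mul_right _ (by omega)
    nlinarith
  have hv : ∀ t, v t ∈ degreeLT k N := by
    intro t
    rw [mem_degreeLT]
    have h1 : (v t).natDegree < N := by
      have h2 := hWdeg (d - 1 - (t.1 : ℕ))
      have h3 := hdw (d - 1 - (t.1 : ℕ)) (Nat.sub_le _ _)
      have h4 : (C (c ^ (t.1 : ℕ)) * X ^ ((t.2.2 : ℕ) * r + (t.2.1 : ℕ)) : k[X]).natDegree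
        ≤ (t.2.2 : ℕ) * r + (t.2.1 : ℕ) := natDegree_C_mul_X_pow_le _ _
      have h5 : (v t).natDegree ≤ _ := natDegree_mul_le
      have h6 := t.2.1.2
      have h7 : (t.2.2 : ℕ) * r ≤ r * A := by
        rw [mul_comm]; exact Nat.mul_le_mul_left _ t.2.2.2.le
      omega
    exact lt_of_le_of_lt degree_le_natDegree (by exact_mod_cast h1)
  let v' : ι → degreeLT k N := fun t => ⟨v t, hv t⟩
  have hdep : ¬ LinearIndependent k v' := by
    intro hli
    have : Module.Finite k (degreeLT k N) := Module.Finite.equiv (degreeLTEquiv k N).symm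
    have h1 := hli.fintype_card_le_finrank
    rw [(degreeLTEquiv k N).finrank_eq] at h1
    simp only [ι, Fintype.card_prod, Fintype.card_fin, Module.finrank_fin_fun] at h1
    have h2 : N < d * (J * A) := by
      rw [hN, hJ, hr]
      have hd1 : 1 ≤ d := hd
      obtain ⟨d', rfl⟩ : ∃ d', d = d' + 1 := ⟨d - 1, by omega⟩
      subst hA
      nlinarith [Nat.zero_le (d' * A), Nat.zero_le (d' * D), Nat.zero_le (d' * D * D),Nat.zero_le (D * D), Nat.zero_le (d' * D * A), Nat.zero_le (D * A)]
    omega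
  obtain ⟨b, hb0, t0, ht0⟩ := Fintype.not_linearIndependent_iff.1 hdep
  have hb : ∑ t, C (b t) * v t = 0 := by
    have := congrArg (Submodule.subtype _) hb0
    simpa [v', smul_eq_C_mul] using this
  let a : ι → k := fun t => b t ^ r
  have ha : ∀ t, a t ^ r = b t := by
    intro t
    simp only [a]
    rw [← pow_mul, ← pow_two, ← hcard, FiniteField.pow_card]
  let η : k[X][X][X] := ∑ t : ι, monomial (t.1 : ℕ) (monomial (t.2.2 : ℕ) (monomial (t.2.1 : ℕ) (a t)))
  have hηc : ∀ t : ι, ((η.coeff t.1).coeff t.2.2).coeff t.2.1 = a t := by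
    intro t
    simp only [η, finsetSum_coeff]
    rw [Finset.sum_eq_single t]
    · simp
    · intro s _ hst
      rw [coeff_monomial]
      split_ifs with h1
      · rw [coeff_monomial]
        split_ifs with h2
        · rw [coeff_monomial]
          split_ifs with h3
          · exact absurd (Prod.ext (Fin.ext h1) (Prod.ext (Fin.ext h3) (Fin.ext h2))) hst
          · rfl
        · simp
      · simp
    · simp
  have hη0 : η ≠ 0 := by
    intro h
    have := hηc t0
    rw [h] at this
    simp only [coeff_zero] at this
    have h2 := ha t0
    rw [← this] at h2
    apply ht0
    rw [← h2, zero_pow]; omega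
  have hηd : η.natDegree < d := by
    have : η.natDegree ≤ d - 1 := natDegree_sum_le_of_forall_le _ _ (fun t _ =>
      (natDegree_monomial_le _).trans (by have := t.1.2; omega))
    omega
  have hηa : ∀ i, (η.coeff i).natDegree ≤ A - 1 := by
    intro i
    simp only [η, finsetSum_coeff]
    refine natDegree_sum_le_of_forall_le _ _ (fun t _ => ?_)
    rw [coeff_monomial]
    split_ifs
    · exact (natDegree_monomial_le _).trans (by have := t.2.2.2; omega)
    · simp
  have hGs : expand k r (G.map (iterateFrobenius k p m)) = G ^ r := by
    rw [← map_expand, hrp, map_iterateFrobenius_expand]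
  have hGs0 : G.map (iterateFrobenius k p m) ≠ 0 := by
    rw [Ne, Polynomial.map_eq_zero_iff (RingHom.injective _)]; exact hG0
  have hg0 := nonvanish d w r (A - 1) D hd hr G _ hG0 hGs0 hGs hG hD η hη0 hηd hηa (by
    rw [hr, hA]
    obtain ⟨A', rfl⟩ : ∃ A', A = A' + 1 := ⟨A - 1, by omega⟩
    obtain ⟨d', rfl⟩ : ∃ d', d = d' + 1 := ⟨d - 1, by omega⟩
    simp only [Nat.add_sub_cancel]
    nlinarith)
  set g := (η.map (spec k r)).eval (G ^ w) with hg
  have hgeq : g = ∑ t : ι, C (a t) * X ^ ((t.2.1 : ℕ) * r) * X ^ (t.2.2 : ℕ) * W ^ (t.1 : ℕ) := by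
    simp only [hg, η, Polynomial.map_sum, eval_finsetSum, map_monomial, eval_monomial]
    refine Finset.sum_congr rfl (fun t _ => ?_)
    congr 1
    simp only [spec, coe_eval₂RingHom, eval₂_monomial]
    congr 1
    change expand k r _ = _
    rw [expand_monomial, C_mul_X_pow_eq_monomial]
  have hgdeg : g.natDegree ≤ (A - 1) + (J - 1) * r + D * r := by
    rw [hgeq]
    refine natDegree_sum_le_of_forall_le _ _ (fun t _ => ?_)
    refine natDegree_mul_le.trans ?_
    have h2 := hWdeg (t.1 : ℕ)
    have h3 := hdw (t.1 : ℕ) (by have := t.1.2; omega)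
    have h4 : (C (a t) * X ^ ((t.2.1 : ℕ) * r) * X ^ (t.2.2 : ℕ) : k[X]).natDegree
      ≤ (t.2.1 : ℕ) * r + t.2.2 := by
      refine natDegree_mul_le.trans ?_
      exact Nat.add_le_add (natDegree_C_mul_X_pow_le _ _) (natDegree_X_pow_le _)
    have h5 : (t.2.1 : ℕ) * r ≤ (J - 1) * r := Nat.mul_le_mul_right _ (by have := t.2.1.2; omega)
    have h6 := t.2.2.2
    omega
  have hroot : ∀ x : k, G.eval x ≠ 0 → (G.eval x) ^ (w * (r + 1)) = c → g.IsRoot x := by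
    intro x hx hxc
    have hWx : W.eval x ≠ 0 := by rw [hW, eval_pow]; exact pow_ne_zero _ hx
    have hWr : W.eval x ^ r * W.eval x = c := by
      rw [hW, eval_pow, ← hxc, ← pow_succ, ← pow_mul]
    have hxr : (x ^ r) ^ r = x := by
      rw [← pow_mul, ← pow_two, ← hcard, FiniteField.pow_card]
    have hchar : ∀ (s : Finset ι) (F : ι → k), (∑ t ∈ s, F t) ^ r = ∑ t ∈ s, F t ^ r := by
      intro s F; rw [hrp]; exact sum_pow_char_pow _ _ _ _
    have key : (g.eval x) ^ r * (W.eval x) ^ (d - 1) = 0 := by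
      have e := congrArg (eval x) hb
      rw [eval_finsetSum, eval_zero] at e
      rw [← e, hgeq, eval_finsetSum, hchar, Finset.sum_mul]
      refine Finset.sum_congr rfl (fun t _ => ?_)
      simp only [v, eval_mul, eval_C, eval_pow, eval_X]
      have ht : (W.eval x) ^ (d - 1) = W.eval x ^ (t.1 : ℕ) * W.eval x ^ (d - 1 - (t.1 : ℕ)) := by
        rw [← pow_add]; congr 1; have := t.1.2; omega
      rw [ht, ← hWr, ← ha t]
      have e3 : x ^ ((t.2.1 : ℕ) * r) = (x ^ r) ^ (t.2.1 : ℕ) := by rw [mul_comm, pow_mul]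
      have e4 : ((x ^ r) ^ (t.2.1 : ℕ)) ^ r = x ^ (t.2.1 : ℕ) := by
        rw [← pow_mul, mul_comm, pow_mul, hxr]
      rw [e3]
      simp only [mul_pow]
      rw [e4, pow_add, pow_mul]
      have e5 : (W.eval x ^ (t.1 : ℕ)) ^ r = (W.eval x ^ r) ^ (t.1 : ℕ) := by
        rw [← pow_mul, ← pow_mul, mul_comm]
      rw [e5]; ring
    rcases mul_eq_zero.1 key with h | h
    · exact pow_eq_zero_iff (by omega) |>.1 h
    · exact absurd h (pow_ne_zero _ hWx)
  have hcardle : (Finset.univ.filter (fun x : k => G.eval x ≠ 0 ∧ (G.eval x) ^ (w * (r + 1)) = c)).card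
      ≤ g.natDegree := by
    refine le_trans (Finset.card_le_card (t := g.roots.toFinset) ?_) ((Multiset.toFinset_card_le _).trans (card_roots' _))
    intro x hx
    rw [Finset.mem_filter] at hx
    rw [Multiset.mem_toFinset, mem_roots hg0]
    exact hroot x hx.2.1 hx.2.2
  have hfin : d * ((A - 1) + (J - 1) * r + D * r) ≤ r ^ 2 + 2 * d * (D + 1) * r := by
    obtain ⟨A', rfl⟩ : ∃ A', A = A' + 1 := ⟨A - 1, by omega⟩
    have hJ1 : J - 1 = A' + 1 + D + (D + 2) := by omega
    rw [hJ1, Nat.add_sub_cancel]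
    have h1 : d * A' ≤ r := by rw [hr, hA]; nlinarith
    have h2 : d * (A' + 1 + D) = r - 1 := by rw [hr, hA]; simp
    have h3 : d * (A' + 1 + D) * r + r = r * r := by
      rw [h2, Nat.sub_mul, one_mul, Nat.sub_add_cancel]
      exact Nat.le_mul_of_pos_left _ (by omega)
    have e1 : d * (A' + (A' + 1 + D + (D + 2)) * r + D * r)
      = d * A' + d * (A' + 1 + D) * r + 2 * d * (D + 1) * r := by ring
    rw [e1, pow_two]
    omega
  exact (Nat.mul_le_mul_left d (hcardle.trans hgdeg)).trans hfin

end Stp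

end

section

open Polynomial

namespace Stp

theorem mult_one_of_sep {k : Type*} [Field k] (P : k[X]) (hP : P ≠ 0) (hs : IsCoprime P (derivative P))
    (π : k[X]) (hπ : Irreducible π) (h : π ∣ P) : multiplicity π P = 1 := by
  have hfin : FiniteMultiplicity π P := FiniteMultiplicity.of_prime_left hπ.prime hP
  rw [hfin.multiplicity_eq_iff]
  refine ⟨by simpa using h, ?_⟩
  rintro ⟨c, hc⟩
  have hd : π ∣ derivative P := by
    rw [hc]
    simp only [derivative_mul, derivative_pow]
    refine dvd_add ?_ ?_
    · refine Dvd.dvd.mul_right ?_ _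
      refine Dvd.dvd.mul_right ?_ _
      simp
    · refine Dvd.dvd.mul_right ?_ _
      exact dvd_pow_self _ (by norm_num)
  exact hπ.not_isUnit (hs.isUnit_of_dvd' h hd)

theorem mult_mul_pow {k : Type*} [Field k] (P R : k[X]) (hP : P ≠ 0) (hR : R ≠ 0) (hPR : IsCoprime P R)
    (A B : ℕ) (π : k[X]) (hπ : Irreducible π) (h : π ∣ P) :
    multiplicity π (P ^ A * R ^ B) = A * multiplicity π P := by
  have fin : ∀ z : k[X], z ≠ 0 → FiniteMultiplicity π z :=
    fun z hz => FiniteMultiplicity.of_prime_left hπ.prime hz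
  have hnd : ¬ π ∣ R := fun h' => hπ.not_isUnit (hPR.isUnit_of_dvd' h h')
  rw [multiplicity_mul hπ.prime (fin _ (by positivity)), FiniteMultiplicity.multiplicity_pow hπ.prime (fin _ hP),
    FiniteMultiplicity.multiplicity_pow hπ.prime (fin _ hR), multiplicity_eq_zero.2 hnd]
  simp

theorem hG_of {k : Type*} [Field k] (p : ℕ) [Fact p.Prime] [CharP k p] (d A B Q : ℕ) (c : k)
    (hQ : 1 < Q) (hpQ : p ∣ Q) (hdQ : d ∣ Q - 1)
    (hAB : ∀ e, d ∣ e * A → d ∣ e * B → d ∣ e) :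
    ∀ e, (∀ π : k[X], Irreducible π →
      d ∣ e * multiplicity π ((X ^ Q - X + C c) ^ A * ((X ^ Q - X + C c) ^ 2 + 1) ^ B)) → d ∣ e := by
  intro e he
  set Z : k[X] := X ^ Q - X + C c with hZ
  have hQ0 : (Q : k[X]) = 0 := by
    have : ((p : ℕ) : k[X]) = 0 := CharP.cast_eq_zero _ _
    obtain ⟨t, rfl⟩ := hpQ
    push_cast; rw [this, zero_mul]
  have hdZ : derivative Z = -1 := by
    simp [hZ, derivative_X_pow]
    exact hQ0
  have hZdeg : Z.natDegree = Q := by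
    have h1 : (X ^ Q - X + C c : k[X]) = X ^ Q + (-X + C c) := by ring
    rw [hZ, h1, natDegree_add_eq_left_of_natDegree_lt, natDegree_X_pow]
    rw [natDegree_X_pow]
    refine lt_of_le_of_lt (natDegree_add_le _ _) ?_
    simpa using hQ
  have hZ0 : Z ≠ 0 := by intro h; rw [h] at hZdeg; simp at hZdeg; omega
  have hZ2deg : (Z ^ 2 + 1).natDegree = 2 * Q := by
    have := natDegree_add_C (p := Z ^ 2) (a := 1)
    rw [C_1] at this
    rw [this, natDegree_pow, hZdeg]
  have hZ20 : Z ^ 2 + 1 ≠ 0 := by intro h; rw [h] at hZ2deg; simp at hZ2deg; omega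
  have hcop : IsCoprime Z (Z ^ 2 + 1) := ⟨-Z, 1, by ring⟩
  have exπ : ∀ P : k[X], P.natDegree ≠ 0 → ∃ π, Irreducible π ∧ π ∣ P := by
    intro P hP
    apply WfDvdMonoid.exists_irreducible_factor
    · intro h; exact hP (natDegree_eq_zero_of_isUnit h)
    · rintro rfl; simp at hP
  apply hAB
  · obtain ⟨π, hπ, hd⟩ := exπ Z (by omega)
    have := he π hπ
    rwa [mult_mul_pow Z _ hZ0 hZ20 hcop A B π hπ hd, mult_one_of_sep Z hZ0 (by rw [hdZ]; exact isCoprime_one_right.neg_right) π hπ hd, mul_one] at this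
  · by_cases h2 : p = 2
    · subst h2
      have h20 : (2 : k[X]) = 0 := by exact_mod_cast CharP.cast_eq_zero k[X] 2
      have hsq : Z ^ 2 + 1 = (Z + 1) ^ 2 := by linear_combination (-Z) * h20
      have hZ1deg : (Z + 1).natDegree = Q := by
        have := natDegree_add_C (p := Z) (a := 1)
        rw [C_1] at this
        rw [this, hZdeg]
      have hZ10 : Z + 1 ≠ 0 := by intro h; rw [h] at hZ1deg; simp at hZ1deg; omega
      obtain ⟨π, hπ, hd⟩ := exπ (Z + 1) (by omega)
      have := he π hπ
      rw [mul_comm, mul_comm (Z ^ A), hsq, ← pow_mul, mult_mul_pow (Z + 1) Z hZ10 hZ0 ⟨1, -1, by ring⟩ (2 * B) A π hπ hd,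
        mult_one_of_sep (Z + 1) hZ10 (by simp [hdZ, isCoprime_one_right.neg_right]) π hπ hd, mul_one] at this
      have hodd : Nat.Coprime d 2 := by
        rw [Nat.coprime_comm, Nat.prime_two.coprime_iff_not_dvd]
        intro h
        have := h.trans hdQ
        omega
      apply hodd.dvd_of_dvd_mul_left
      convert this using 1; ring
    · have h20 : (2 : k) ≠ 0 := by
        intro h
        have h3 : ((2 : ℕ) : k) = 0 := by exact_mod_cast h
        have h4 := (CharP.cast_eq_zero_iff k p 2).1 h3
        exact h2 ((Nat.prime_dvd_prime_iff_eq Fact.out Nat.prime_two).1 h4)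
      obtain ⟨π, hπ, hd⟩ := exπ (Z ^ 2 + 1) (by omega)
      have := he π hπ
      rw [mul_comm (Z ^ A), mult_mul_pow (Z ^ 2 + 1) Z hZ20 hZ0 hcop.symm B A π hπ hd,
        mult_one_of_sep (Z ^ 2 + 1) hZ20 ?_ π hπ hd, mul_one] at this
      · exact this
      · have : derivative (Z ^ 2 + 1) = C (-2) * Z := by
          simp [derivative_pow, hdZ]
        rw [this]
        refine ⟨1, C (2⁻¹) * Z, ?_⟩
        have : (C (2⁻¹) * C (-2) : k[X]) = -1 := by
          rw [← C_mul]
          have : (2⁻¹ * (-2) : k) = -1 := by field_simp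
          rw [this]; simp
        linear_combination (Z ^ 2) * this

end Stp

end

section

open Polynomial

namespace Stp

theorem norm_mulChar_le_one {K : Type*} [Field K] [Finite K] (χ : MulChar K ℂ) (x : K) : ‖χ x‖ ≤ 1 := by
  by_cases hx : IsUnit x
  · obtain ⟨u, rfl⟩ := hx
    have hfin := isOfFinOrder_of_finite u
    obtain ⟨n, hn, h⟩ := hfin.exists_pow_eq_one
    have : (χ (u : K)) ^ n = 1 := by
      rw [← map_pow, ← Units.val_pow_eq_pow_val, h]; simp
    exact (Complex.norm_eq_one_of_pow_eq_one this hn.ne').le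
  · rw [χ.map_nonunit hx]; simp

theorem sum_units_eq_zero {K : Type*} [Field K] [Fintype K] [DecidableEq K] (χ : MulChar K ℂ) (hχ : χ ≠ 1) :
    ∑ v : Kˣ, χ (v : K) = 0 := by
  obtain ⟨b, hb⟩ := MulChar.ne_one_iff.mp hχ
  refine eq_zero_of_mul_eq_self_left hb ?_
  rw [Finset.mul_sum]
  refine (Finset.sum_congr rfl (fun v _ => ?_)).trans (Equiv.sum_comp (Equiv.mulLeft b) (fun v : Kˣ => χ (v : K)))
  simp

theorem charsum_le {K : Type*} [Field K] [Fintype K] [DecidableEq K] (ρ : MulChar K ℂ) (d e : ℕ)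
    (hρ : orderOf ρ = d) (hd : 1 < d) (hde : d * e = Fintype.card K - 1) {Z : Type*} (s : Finset Z)
    (f : Z → Kˣ) (T : ℝ)
    (hT : ∀ v : Kˣ, (d : ℝ) * ((s.filter (fun z => (f z) ^ e = v ^ e)).card : ℝ) ≤ T) :
    ‖∑ z ∈ s, ρ (f z)‖ ≤ T - s.card := by
  have hcardU : Fintype.card Kˣ = d * e := by rw [Fintype.card_units, hde]
  have hpos : 0 < d * e := hcardU ▸ Fintype.card_pos
  have he : 0 < e := Nat.pos_of_mul_pos_left hpos
  obtain ⟨g, hg⟩ := IsCyclic.exists_generator (α := Kˣ)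
  have hog : orderOf g = d * e := by rw [orderOf_eq_card_of_forall_mem_zpowers hg, Nat.card_eq_fintype_card, hcardU]
  have htriv : ∀ t : Kˣ, t ^ e = 1 → ρ (t : K) = 1 := by
    intro t ht
    obtain ⟨k, rfl⟩ := (mem_powers_iff_mem_zpowers.2 (hg t))
    simp only at ht
    rw [← pow_mul] at ht
    have h1 := orderOf_dvd_of_pow_eq_one ht
    rw [hog] at h1
    have h2 : d ∣ k := Nat.dvd_of_mul_dvd_mul_right he h1
    obtain ⟨j, rfl⟩ := h2
    have h3 : ρ ^ d = 1 := hρ ▸ pow_orderOf_eq_one ρ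
    simp only [Units.val_pow_eq_pow_val, map_pow]
    rw [pow_mul]
    have : ρ (g : K) ^ d = 1 := by
      rw [← MulChar.pow_apply_coe, h3]; simp
    rw [this, one_pow]
  set E := (Finset.univ.filter (fun v : Kˣ => v ^ e = 1)).card with hE
  have hEe : e ≤ E := by
    have ho : orderOf (g ^ d) = e := by
      rw [orderOf_pow, hog, Nat.gcd_mul_right_left, Nat.mul_div_cancel_left _ (by omega)]
    have : (Finset.image (fun i => (g ^ d) ^ i) (Finset.range e)).card ≤ E := by
      apply Finset.card_le_card
      intro x hx
      obtain ⟨i, hi, rfl⟩ := Finset.mem_image.1 hx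
      simp only [Finset.mem_filter, Finset.mem_univ, true_and]
      rw [← pow_mul, mul_comm, pow_mul, ← ho, pow_orderOf_eq_one, one_pow]
    rw [Finset.card_image_of_injOn, Finset.card_range] at this
    · exact this
    · intro i hi j hj hij
      exact pow_injOn_Iio_orderOf (by simpa [ho] using hi) (by simpa [ho] using hj) hij
  have hfib : ∀ u : Kˣ, (Finset.univ.filter (fun v : Kˣ => u ^ e = v ^ e)).card = E := by
    intro u
    rw [hE]
    refine Finset.card_bij (fun v _ => v * u⁻¹) ?_ ?_ ?_
    · intro v hv
      simp only [Finset.mem_filter, Finset.mem_univ, true_and] at hv ⊢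
      rw [mul_pow, inv_pow, hv, mul_inv_cancel]
    · intro a _ b _ h; simpa using h
    · intro b hb
      simp only [Finset.mem_filter, Finset.mem_univ, true_and] at hb
      exact ⟨b * u, by simp [mul_pow, hb], by simp⟩
  let N : Kˣ → ℂ := fun v => ((s.filter (fun z => (f z) ^ e = v ^ e)).card : ℂ)
  have h1 : ∑ v : Kˣ, ρ (v : K) * N v = E * ∑ z ∈ s, ρ (f z) := by
    have : ∀ v, ρ ((v : Kˣ) : K) * N v = ∑ z ∈ s, if (f z) ^ e = v ^ e then ρ (f z) else 0 := by
      intro v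
      simp only [N]
      rw [Finset.card_filter]
      push_cast
      rw [Finset.mul_sum]
      refine Finset.sum_congr rfl (fun z _ => ?_)
      split_ifs with h
      · rw [mul_one]
        have h2 : ρ ((v * (f z)⁻¹ : Kˣ) : K) = 1 := htriv _ (by rw [mul_pow, inv_pow, h, mul_inv_cancel])
        have h3 : (v : K) = ((v * (f z)⁻¹ : Kˣ) : K) * (f z : K) := by simp
        rw [h3, map_mul, h2, one_mul]
      · simp
    rw [Finset.sum_congr rfl (fun v _ => this v), Finset.sum_comm, Finset.mul_sum]
    refine Finset.sum_congr rfl (fun z _ => ?_)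
    rw [← Finset.sum_filter, Finset.sum_const, hfib, nsmul_eq_mul]
  have h2 : ∑ v : Kˣ, ((s.filter (fun z => (f z) ^ e = v ^ e)).card : ℝ) = s.card * E := by
    have : ∑ v : Kˣ, (s.filter (fun z => (f z) ^ e = v ^ e)).card = s.card * E := by
      simp only [Finset.card_filter]
      rw [Finset.sum_comm, Finset.sum_congr rfl (fun z _ => (Finset.card_filter _ _).symm.trans (hfib (f z)))]
      simp
    exact_mod_cast this
  have hρ1 : ρ ≠ 1 := by rintro rfl; rw [orderOf_one] at hρ; omega
  have h3 : ∑ v : Kˣ, ρ (v : K) * N v = ∑ v : Kˣ, ρ (v : K) * (N v - (T / d : ℝ)) := by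
    simp only [mul_sub, Finset.sum_sub_distrib]
    rw [← Finset.sum_mul, sum_units_eq_zero ρ hρ1]; simp
  have hd0 : (0 : ℝ) < d := by positivity
  have h4 : ‖∑ v : Kˣ, ρ (v : K) * N v‖ ≤ e * T - s.card * E := by
    rw [h3]
    refine (norm_sum_le _ _).trans ?_
    have : ∀ v : Kˣ, ‖ρ (v : K) * (N v - (T / d : ℝ))‖ ≤ T / d - ((s.filter (fun z => (f z) ^ e = v ^ e)).card : ℝ) := by
      intro v
      rw [norm_mul]
      refine (mul_le_of_le_one_left (norm_nonneg _) (norm_mulChar_le_one ρ _)).trans ?_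
      have hle : ((s.filter (fun z => (f z) ^ e = v ^ e)).card : ℝ) ≤ T / d := by
        rw [le_div_iff₀ hd0, mul_comm]; exact hT v
      have : N v - ((T / d : ℝ) : ℂ) = ((((s.filter (fun z => (f z) ^ e = v ^ e)).card : ℝ) - T / d : ℝ) : ℂ) := by
        simp [N]
      rw [this, Complex.norm_real, Real.norm_eq_abs, abs_sub_comm, abs_of_nonneg (by linarith)]
    refine (Finset.sum_le_sum (fun v _ => this v)).trans (le_of_eq ?_)
    rw [Finset.sum_sub_distrib, h2, Finset.sum_const, Finset.card_univ, hcardU, nsmul_eq_mul]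
    push_cast; field_simp
  rw [h1, norm_mul, Complex.norm_natCast] at h4
  have hT0 : 0 ≤ T := le_trans (by positivity) (hT 1)
  have hE0 : (0 : ℝ) < E := by exact_mod_cast lt_of_lt_of_le he hEe
  have h5 : (e : ℝ) * T ≤ E * T := mul_le_mul_of_nonneg_right (by exact_mod_cast hEe) hT0
  have h6 : (E : ℝ) * ‖∑ z ∈ s, ρ (f z)‖ ≤ E * (T - s.card) := by linarith
  exact le_of_mul_le_mul_left h6 hE0

end Stp

end

section

open Polynomial

namespace Stp

theorem exists_common_root {K : Type*} [Field K] [Fintype K] (χA χB : MulChar K ℂ) (h : χA ≠ 1 ∨ χB ≠ 1) :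
    ∃ (ρ : MulChar K ℂ) (A B : ℕ), 0 < A ∧ 0 < B ∧ χA = ρ ^ A ∧ χB = ρ ^ B ∧ 1 < orderOf ρ ∧
      ∀ e, orderOf ρ ∣ e * A → orderOf ρ ∣ e * B → orderOf ρ ∣ e := by
  classical
  have hcyc : IsCyclic (MulChar K ℂ) := by
    obtain ⟨φ⟩ := MulChar.mulEquiv_units K ℂ
    exact isCyclic_of_surjective φ.symm φ.symm.surjective
  let H := Subgroup.closure {χA, χB}
  obtain ⟨⟨ρ, hρH⟩, hρ⟩ := IsCyclic.exists_generator (α := H)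
  have hgen : ∀ χ ∈ H, ∃ A, 0 < A ∧ χ = ρ ^ A := by
    intro χ hχ
    obtain ⟨i, hi⟩ := mem_powers_iff_mem_zpowers.2 (hρ ⟨χ, hχ⟩)
    have hi' : ρ ^ i = χ := congrArg Subtype.val hi
    refine ⟨i + orderOf ρ, by have := orderOf_pos ρ; omega, ?_⟩
    rw [pow_add, pow_orderOf_eq_one, mul_one, hi']
  obtain ⟨A, hA, hχA⟩ := hgen χA (Subgroup.subset_closure (by simp))
  obtain ⟨B, hB, hχB⟩ := hgen χB (Subgroup.subset_closure (by simp))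
  refine ⟨ρ, A, B, hA, hB, hχA, hχB, ?_, ?_⟩
  · by_contra hle
    have h1 : orderOf ρ = 1 := by have := orderOf_pos ρ; omega
    rw [orderOf_eq_one_iff] at h1
    subst h1
    simp at hχA hχB
    tauto
  · intro e h1 h2
    have hker : H ≤ (powMonoidHom e : MulChar K ℂ →* MulChar K ℂ).ker := by
      rw [Subgroup.closure_le]
      intro χ hχ
      rw [SetLike.mem_coe, MonoidHom.mem_ker, powMonoidHom_apply]
      rcases hχ with rfl | hχ
      · rw [hχA, ← pow_mul, mul_comm]; exact orderOf_dvd_iff_pow_eq_one.1 h1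
      · rw [Set.mem_singleton_iff.1 hχ, hχB, ← pow_mul, mul_comm]; exact orderOf_dvd_iff_pow_eq_one.1 h2
    have := hker hρH
    rw [MonoidHom.mem_ker, powMonoidHom_apply] at this
    exact orderOf_dvd_of_pow_eq_one this

/-- The mixed character sum over an extension `L` of `K`. -/
noncomputable def cs (K L : Type*) [Field K] [Field L] [Fintype L] [Algebra K L]
    (χA χB : MulChar K ℂ) (ψ : AddChar K ℂ) : ℂ :=
  ∑ x : L, χA (Algebra.norm K x) * χB (Algebra.norm K (x ^ 2 + 1)) * ψ (Algebra.trace K L x)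

theorem norm_addChar_le {K : Type*} [Field K] [Finite K] (ψ : AddChar K ℂ) (x : K) : ‖ψ x‖ = 1 :=
  AddChar.norm_apply ψ x

theorem kummer_bound {K L : Type*} [Field K] [Fintype K] [Field L] [Fintype L] [Algebra K L] (m : ℕ)
    (hm : Module.finrank K L = 2 * m) (ρ : MulChar K ℂ) (A B : ℕ) (hd : 1 < orderOf ρ)
    (hAB : ∀ e, orderOf ρ ∣ e * A → orderOf ρ ∣ e * B → orderOf ρ ∣ e) (c : L)
    (w D : ℕ) (hDdef : D = (A + 2 * B) * Fintype.card K)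
    (hr : Fintype.card K ^ m = orderOf ρ * w + 1)
    (hw : D * (orderOf ρ * D + 3 * orderOf ρ + 2) + D + 3 < w) :
    ‖∑ z : L, ρ (Algebra.norm K ((z ^ Fintype.card K - z + c) ^ A * ((z ^ Fintype.card K - z + c) ^ 2 + 1) ^ B))‖
      ≤ (2 * orderOf ρ * (D + 1) + D : ℕ) * (Fintype.card K : ℝ) ^ m := by
  classical
  set Q := Fintype.card K with hQ
  set d := orderOf ρ with hdd
  obtain ⟨p, hp⟩ := CharP.exists K
  have hpp : Fact p.Prime := ⟨CharP.char_is_prime K p⟩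
  obtain ⟨l, hl⟩ := FiniteField.card K p
  have hpL : CharP L p := charP_of_injective_algebraMap (algebraMap K L).injective p
  have hcardL : Fintype.card L = (Q ^ m) ^ 2 := by
    rw [Module.card_eq_pow_finrank (K := K) (V := L), hm, ← pow_mul, mul_comm]
  have hQ1 : 1 < Q := Fintype.one_lt_card
  obtain ⟨e, he⟩ : d ∣ Q - 1 := MulChar.orderOf_dvd_card_sub_one _ ρ
  set G : L[X] := (X ^ Q - X + C c) ^ A * ((X ^ Q - X + C c) ^ 2 + 1) ^ B with hG
  have hZdeg : (X ^ Q - X + C c : L[X]).natDegree = Q := by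
    have h1 : (X ^ Q - X + C c : L[X]) = X ^ Q + (-X + C c) := by ring
    rw [h1, natDegree_add_eq_left_of_natDegree_lt, natDegree_X_pow]
    rw [natDegree_X_pow]
    refine lt_of_le_of_lt (natDegree_add_le _ _) ?_
    simpa using hQ1
  have hZ0 : (X ^ Q - X + C c : L[X]) ≠ 0 := by intro h; rw [h] at hZdeg; simp at hZdeg; omega
  have hZ2deg : ((X ^ Q - X + C c : L[X]) ^ 2 + 1).natDegree = 2 * Q := by
    have := natDegree_add_C (p := (X ^ Q - X + C c : L[X]) ^ 2) (a := 1)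
    rw [C_1] at this
    rw [this, natDegree_pow, hZdeg]
  have hZ20 : (X ^ Q - X + C c : L[X]) ^ 2 + 1 ≠ 0 := by intro h; rw [h] at hZ2deg; simp at hZ2deg; omega
  have hG0 : G ≠ 0 := mul_ne_zero (pow_ne_zero _ hZ0) (pow_ne_zero _ hZ20)
  have hGD : G.natDegree ≤ D := by
    rw [hG, natDegree_mul (pow_ne_zero _ hZ0) (pow_ne_zero _ hZ20), natDegree_pow, natDegree_pow, hZdeg, hZ2deg, hDdef]
    apply le_of_eq; ring
  have hmult := hG_of (k := L) p d A B Q c hQ1 (by rw [hQ, hl.2]; exact dvd_pow_self _ l.2.ne') ⟨e, he⟩ hAB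
  have hstep := fun c' : L => stepanov (k := L) p (l * m) (Q ^ m) (by rw [hQ, hl.2, pow_mul]) hcardL d w D (by omega) hr G hG0 hmult hGD hw c'
  set s := Finset.univ.filter (fun z : L => G.eval z ≠ 0) with hs
  let f : L → Kˣ := fun z => if h : Algebra.norm K (G.eval z) ≠ 0 then Units.mk0 _ h else 1
  have hf : ∀ z ∈ s, (f z : K) = Algebra.norm K (G.eval z) := by
    intro z hz
    have hz' : G.eval z ≠ 0 := (Finset.mem_filter.1 hz).2
    have : Algebra.norm K (G.eval z) ≠ 0 := by rwa [Ne, Algebra.norm_eq_zero_iff]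
    simp only [f, dif_pos this, Units.val_mk0]
  have hexp : (∑ i ∈ Finset.range (2 * m), Q ^ i) * e = w * (Q ^ m + 1) := by
    have h1 := Nat.geomSum_eq (m := Q) hQ1 (2 * m)
    have h2 : (∑ i ∈ Finset.range (2 * m), Q ^ i) * (Q - 1) + 1 = Q ^ (2 * m) := by
      have := Nat.pred_mul_geom_sum_le
      have h := geom_sum_mul_add (Q - 1) (2 * m)
      rwa [Nat.sub_add_cancel hQ1.le] at h
    have h3 : Q ^ (2 * m) = (d * w + 1) * (d * w + 1) := by rw [← hr]; ring
    rw [h3, he] at h2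
    rw [hr]
    have hd0 : 0 < d := by omega
    apply Nat.eq_of_mul_eq_mul_left hd0
    nlinarith
  have hbound := charsum_le ρ d e hdd.symm hd he.symm s f ((Q ^ m : ℝ) ^ 2 + 2 * d * (D + 1) * (Q ^ m : ℝ)) (by
    intro v
    have h1 := hstep (algebraMap K L ((v : K) ^ e))
    have h2 : (s.filter (fun z => (f z) ^ e = v ^ e)).card ≤
      (Finset.univ.filter (fun x : L => G.eval x ≠ 0 ∧ (G.eval x) ^ (w * (Q ^ m + 1)) = algebraMap K L ((v : K) ^ e))).card := by
      apply Finset.card_le_card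
      intro z hz
      rw [Finset.mem_filter] at hz
      simp only [Finset.mem_filter, Finset.mem_univ, true_and]
      refine ⟨(Finset.mem_filter.1 hz.1).2, ?_⟩
      have h3 : (f z : K) ^ e = (v : K) ^ e := by
        have := congrArg Units.val hz.2
        simpa using this
      rw [← h3, hf z hz.1, map_pow, FiniteField.algebraMap_norm_eq_pow_sum, ← pow_mul, hm, Nat.card_eq_fintype_card, hexp]
    have h4 := (Nat.mul_le_mul_left d h2).trans h1
    exact_mod_cast h4)
  have hscard : (Q ^ m : ℝ) ^ 2 - D ≤ s.card := by
    have h1 : Fintype.card L ≤ s.card + D := by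
      rw [← Finset.card_univ, ← Finset.card_filter_add_card_filter_not (s := (Finset.univ : Finset L)) (fun z : L => G.eval z ≠ 0)]
      refine Nat.add_le_add_left ?_ _
      refine le_trans (Finset.card_le_card (t := G.roots.toFinset) ?_) ((Multiset.toFinset_card_le _).trans ((card_roots' _).trans hGD))
      intro z hz
      rw [Multiset.mem_toFinset, mem_roots hG0]
      simpa using hz
    rw [hcardL] at h1
    have : ((Q ^ m : ℝ)) ^ 2 ≤ s.card + D := by exact_mod_cast h1
    linarith
  have hsum : ∑ z : L, ρ (Algebra.norm K ((z ^ Q - z + c) ^ A * ((z ^ Q - z + c) ^ 2 + 1) ^ B)) = ∑ z ∈ s, ρ (f z) := by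
    have hev : ∀ z : L, G.eval z = (z ^ Q - z + c) ^ A * ((z ^ Q - z + c) ^ 2 + 1) ^ B := by
      intro z; simp [hG]
    have h0 : ∑ z ∈ s, ρ (f z) = ∑ z ∈ s, ρ (Algebra.norm K (G.eval z)) :=
      Finset.sum_congr rfl (fun z hz => by rw [hf z hz])
    rw [h0, hs, Finset.sum_filter]
    refine Finset.sum_congr rfl (fun z _ => ?_)
    split_ifs with h
    · rw [hev]
    · rw [← hev, not_not.1 h, (Algebra.norm_eq_zero_iff (R := K) (S := L)).2 rfl, MulChar.map_zero]
  rw [hsum]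
  refine hbound.trans ?_
  have h1 : (1 : ℝ) ≤ (Q : ℝ) ^ m := one_le_pow₀ (by exact_mod_cast hQ1.le)
  push_cast
  have h2 : (D : ℝ) ≤ D * (Q : ℝ) ^ m := le_mul_of_one_le_right (by positivity) h1
  nlinarith

universe u v
theorem cs_bound {K : Type u} [Field K] [Fintype K] (χA χB : MulChar K ℂ) (h : χA ≠ 1 ∨ χB ≠ 1) (ψ : AddChar K ℂ) :
    ∃ C : ℝ, ∀ (L : Type v) [Field L] [Fintype L] [Algebra K L] (m : ℕ),
      Module.finrank K L = 2 * m → ‖cs K L χA χB ψ‖ ≤ C * (Fintype.card K : ℝ) ^ m := by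
  obtain ⟨ρ, A, B, hA, hB, rfl, rfl, hd, hAB⟩ := exists_common_root χA χB h
  set Q := Fintype.card K with hQ
  set d := orderOf ρ with hdd
  set D := (A + 2 * B) * Q with hD
  set w0 := D * (d * D + 3 * d + 2) + D + 3 with hw0
  refine ⟨((2 * d * (D + 1) + D : ℕ) : ℝ) + (d * w0 + 1 : ℕ), ?_⟩
  intro L _ _ _ m hm
  have hQ1 : 1 < Q := Fintype.one_lt_card
  have hQm : (0 : ℝ) ≤ (Q : ℝ) ^ m := by positivity
  have hcardL : Fintype.card L = (Q ^ m) ^ 2 := by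
    rw [Module.card_eq_pow_finrank (K := K) (V := L), hm, ← pow_mul, mul_comm]
  have hdvd : d ∣ Q ^ m - 1 := by
    refine (MulChar.orderOf_dvd_card_sub_one _ ρ).trans ?_
    simpa using Nat.sub_dvd_pow_sub_pow Q 1 m
  obtain ⟨w, hw⟩ := hdvd
  have hr : Q ^ m = d * w + 1 := by
    have : 0 < Q ^ m := by positivity
    omega
  by_cases hlarge : w0 < w
  · have hk := fun c : L => kummer_bound m hm ρ A B hd hAB c w D hD hr hlarge
    set T : ℝ := (2 * d * (D + 1) + D : ℕ) * (Q : ℝ) ^ m with hT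
    have hshift : ∀ z : L, cs K L (ρ ^ A) (ρ ^ B) ψ = ∑ x : L,
        ρ (Algebra.norm K ((z ^ Q - z + x) ^ A * ((z ^ Q - z + x) ^ 2 + 1) ^ B)) * ψ (Algebra.trace K L x) := by
      intro z
      rw [cs, ← Equiv.sum_comp (Equiv.addLeft (z ^ Q - z))]
      refine Finset.sum_congr rfl (fun x _ => ?_)
      simp only [Equiv.coe_addLeft]
      have ht : Algebra.trace K L (z ^ Q) = Algebra.trace K L z := by
        have := Algebra.trace_eq_of_algEquiv (FiniteField.frobeniusAlgEquivOfAlgebraic K L) z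
        simpa [FiniteField.coe_frobeniusAlgEquivOfAlgebraic] using this
      rw [map_add (Algebra.trace K L), map_sub, ht, sub_self, zero_add, MulChar.pow_apply' _ hA.ne', MulChar.pow_apply' _ hB.ne',
        map_mul, map_pow, map_pow, map_mul, map_pow, map_pow]
    have havg : (Fintype.card L : ℂ) * cs K L (ρ ^ A) (ρ ^ B) ψ = ∑ x : L, (∑ z : L,
        ρ (Algebra.norm K ((z ^ Q - z + x) ^ A * ((z ^ Q - z + x) ^ 2 + 1) ^ B))) * ψ (Algebra.trace K L x) := by
      simp only [Finset.sum_mul]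
      rw [Finset.sum_comm, ← Finset.sum_congr rfl (fun z _ => hshift z)]
      simp
    have hn := congrArg norm havg
    rw [norm_mul, Complex.norm_natCast] at hn
    have h1 : (Fintype.card L : ℝ) * ‖cs K L (ρ ^ A) (ρ ^ B) ψ‖ ≤ Fintype.card L * T := by
      rw [hn]
      refine (norm_sum_le _ _).trans ?_
      refine (Finset.sum_le_card_nsmul _ _ T (fun x _ => ?_)).trans (by simp)
      rw [norm_mul, norm_addChar_le, mul_one]
      exact hk x
    have h2 : ‖cs K L (ρ ^ A) (ρ ^ B) ψ‖ ≤ T := le_of_mul_le_mul_left h1 (by exact_mod_cast Fintype.card_pos)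
    refine h2.trans ?_
    rw [hT, add_mul]
    have : (0 : ℝ) ≤ ((d * w0 + 1 : ℕ) : ℝ) * (Q : ℝ) ^ m := by positivity
    linarith
  · have h1 : ‖cs K L (ρ ^ A) (ρ ^ B) ψ‖ ≤ Fintype.card L := by
      rw [cs]
      refine (norm_sum_le _ _).trans ?_
      refine (Finset.sum_le_card_nsmul _ _ 1 (fun x _ => ?_)).trans (by simp)
      rw [norm_mul, norm_mul, norm_addChar_le, mul_one]
      exact mul_le_one₀ (norm_mulChar_le_one _ _) (norm_nonneg _) (norm_mulChar_le_one _ _)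
    refine h1.trans ?_
    have h2 : Q ^ m ≤ d * w0 + 1 := by
      rw [hr]
      have : d * w ≤ d * w0 := Nat.mul_le_mul_left _ (by omega)
      omega
    have h3 : ((Q : ℝ) ^ m) ≤ ((d * w0 + 1 : ℕ) : ℝ) := by exact_mod_cast h2
    rw [hcardL, add_mul]
    push_cast at *
    have h4 : (0 : ℝ) ≤ (2 * d * (D + 1) + D) * (Q : ℝ) ^ m := by positivity
    nlinarith

end Stp

end

section

open Polynomial

namespace Stp

/-- the value of the norm of `h` modulo `X^2+1` -/
noncomputable def R2 {K : Type*} [Field K] (h : K[X]) : K :=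
  (h %ₘ (X ^ 2 + 1)).coeff 0 ^ 2 + (h %ₘ (X ^ 2 + 1)).coeff 1 ^ 2

theorem monic_X2 {K : Type*} [Field K] : (X ^ 2 + 1 : K[X]).Monic := by
  have := monic_X_pow_add_C (1 : K) (n := 2) (by norm_num)
  simpa using this

theorem natDegree_X2 {K : Type*} [Field K] : (X ^ 2 + 1 : K[X]).natDegree = 2 := by
  have := natDegree_X_pow_add_C (n := 2) (r := (1 : K))
  simpa using this

theorem R2_of_decomp {K : Type*} [Field K] (h g : K[X]) (a b : K)
    (e : h = (X ^ 2 + 1) * g + (C b * X + C a)) : R2 h = a ^ 2 + b ^ 2 := by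
  have hm : h %ₘ (X ^ 2 + 1) = C b * X + C a := by
    rw [e]
    refine (div_modByMonic_unique g _ monic_X2 ⟨by ring, ?_⟩).2
    refine lt_of_le_of_lt degree_linear_le ?_
    rw [degree_eq_natDegree monic_X2.ne_zero, natDegree_X2]; norm_num
  rw [R2, hm]; simp

theorem exists_decomp {K : Type*} [Field K] (h : K[X]) :
    ∃ (g : K[X]) (a b : K), h = (X ^ 2 + 1) * g + (C b * X + C a) := by
  refine ⟨h /ₘ (X ^ 2 + 1), (h %ₘ (X ^ 2 + 1)).coeff 0, (h %ₘ (X ^ 2 + 1)).coeff 1, ?_⟩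
  have h1 := modByMonic_add_div h (X ^ 2 + 1 : K[X])
  have h2 : (h %ₘ (X ^ 2 + 1)).natDegree < 2 := by
    have := natDegree_modByMonic_lt h (monic_X2 (K := K)) (by
      intro h; have := congrArg natDegree h; rw [natDegree_X2] at this; simp at this)
    rwa [natDegree_X2] at this
  have h3 := eq_X_add_C_of_natDegree_le_one (show (h %ₘ (X ^ 2 + 1)).natDegree ≤ 1 by omega)
  rw [← h3, add_comm]; exact h1.symm

theorem R2_mul {K : Type*} [Field K] (h k : K[X]) : R2 (h * k) = R2 h * R2 k := by
  obtain ⟨g, a, b, e⟩ := exists_decomp h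
  obtain ⟨g', a', b', e'⟩ := exists_decomp k
  rw [R2_of_decomp h g a b e, R2_of_decomp k g' a' b' e',
    R2_of_decomp (h * k) ((X ^ 2 + 1) * g * g' + g * (C b' * X + C a') + g' * (C b * X + C a) +
      C b * C b') (a * a' - b * b') (a * b' + b * a') (by rw [e, e']; simp; ring)]
  ring

theorem R2_eval {K Ω : Type*} [Field K] [Field Ω] [Algebra K Ω] (i : Ω) (hi : i ^ 2 = -1)
    (h : K[X]) : algebraMap K Ω (R2 h) = aeval i h * aeval (-i) h := by
  obtain ⟨g, a, b, e⟩ := exists_decomp h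
  rw [R2_of_decomp h g a b e]
  have h1 : aeval i h = algebraMap K Ω b * i + algebraMap K Ω a := by
    rw [e]; simp [hi]
  have h2 : aeval (-i) h = - algebraMap K Ω b * i + algebraMap K Ω a := by
    rw [e]; simp [hi]
  rw [h1, h2, map_add, map_pow, map_pow]
  linear_combination (algebraMap K Ω b) ^ 2 * hi

theorem R2_one {K : Type*} [Field K] : R2 (1 : K[X]) = 1 := by
  rw [R2_of_decomp 1 0 1 0 (by simp)]; simp

variable {K : Type*} [Field K] [Fintype K]

noncomputable def lam (χA χB : MulChar K ℂ) (ψ : AddChar K ℂ) (h : K[X]) : ℂ :=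
  χA ((-1) ^ h.natDegree * h.coeff 0) * χB (R2 h) * ψ (-h.nextCoeff)

theorem lam_one (χA χB : MulChar K ℂ) (ψ : AddChar K ℂ) : lam χA χB ψ 1 = 1 := by
  simp [lam, R2_one, nextCoeff]

theorem lam_mul (χA χB : MulChar K ℂ) (ψ : AddChar K ℂ) {h k : K[X]} (hh : h.Monic)
    (hk : k.Monic) : lam χA χB ψ (h * k) = lam χA χB ψ h * lam χA χB ψ k := by
  have e : (-1 : K) ^ (h.natDegree + k.natDegree) * (h.coeff 0 * k.coeff 0) =
    ((-1) ^ h.natDegree * h.coeff 0) * ((-1) ^ k.natDegree * k.coeff 0) := by ring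
  rw [lam, lam, lam, hh.natDegree_mul hk, hh.nextCoeff_mul hk, R2_mul, mul_coeff_zero, neg_add,
    AddChar.map_add_eq_mul, e]
  simp only [map_mul]
  ring

theorem lam_pow (χA χB : MulChar K ℂ) (ψ : AddChar K ℂ) {h : K[X]} (hh : h.Monic) (n : ℕ) :
    lam χA χB ψ (h ^ n) = lam χA χB ψ h ^ n := by
  induction n with
  | zero => simp [lam_one]
  | succ n ih => rw [pow_succ, lam_mul _ _ _ (hh.pow n) hh, ih, pow_succ]

theorem norm_sq_add_one {S : Type*} [Field S] [Algebra K S] (pb : PowerBasis K S) :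
    Algebra.norm K (pb.gen ^ 2 + 1) = R2 (minpoly K pb.gen) := by
  classical
  obtain ⟨i, hi⟩ := IsAlgClosed.exists_pow_nat_eq (-1 : AlgebraicClosure K) (n := 2) (by norm_num)
  apply (algebraMap K (AlgebraicClosure K)).injective
  rw [R2_eval i hi, Algebra.norm_eq_matrix_det pb.basis, ← charpoly_leftMulMatrix]
  set M := Algebra.leftMulMatrix pb.basis pb.gen with hM
  have key : ∀ j : AlgebraicClosure K, aeval j M.charpoly =
      (j • (1 : Matrix (Fin pb.dim) (Fin pb.dim) (AlgebraicClosure K)) - M.map (algebraMap K _)).det := by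
    intro j
    rw [aeval_def, ← eval_map, ← Matrix.charpoly_map, Matrix.eval_charpoly]
    congr 2
    rw [Matrix.smul_one_eq_diagonal]
    ext a b; by_cases hab : a = b <;> simp [Matrix.scalar, Matrix.diagonal, hab]
  rw [key, key, ← Matrix.det_mul, RingHom.map_det]
  congr 1
  simp only [map_add, map_pow, map_one, ← hM]
  have e : (algebraMap K (AlgebraicClosure K)).mapMatrix M = M.map (algebraMap K _) := rfl
  rw [e]
  simp only [sub_mul, mul_sub, smul_mul_assoc, one_mul, mul_smul_comm, mul_one, neg_smul, mul_neg, smul_sub,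
    smul_smul]
  rw [show i * i = -1 by rw [← hi]; ring]
  simp [pow_two]
  abel

theorem term_eq {L : Type*} [Field L] [Fintype L] [Algebra K L] (χA χB : MulChar K ℂ)
    (ψ : AddChar K ℂ) (x : L) :
    χA (Algebra.norm K x) * χB (Algebra.norm K (x ^ 2 + 1)) * ψ (Algebra.trace K L x) =
      lam χA χB ψ (minpoly K x ^ (Module.finrank (IntermediateField.adjoin K {x}) L)) := by
  have hx : IsIntegral K x := .of_finite K x
  haveI : Module.Finite K L := Module.Finite.of_finite
  rw [lam_pow _ _ _ (minpoly.monic hx)]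
  set k := Module.finrank (IntermediateField.adjoin K {x}) L
  let pb := IntermediateField.adjoin.powerBasis hx
  have hg : pb.gen = IntermediateField.AdjoinSimple.gen K x := rfl
  have hmin : minpoly K pb.gen = minpoly K x := IntermediateField.minpoly_gen K x
  have h1 : Algebra.norm K x = ((-1) ^ (minpoly K x).natDegree * (minpoly K x).coeff 0) ^ k := by
    rw [Algebra.norm_eq_norm_adjoin, ← hg, Algebra.PowerBasis.norm_gen_eq_coeff_zero_minpoly,
      ← pb.natDegree_minpoly, hmin]
  have h2 : Algebra.norm K (x ^ 2 + 1) = R2 (minpoly K x) ^ k := by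
    rw [← hmin, ← norm_sq_add_one, ← map_pow, ← Algebra.norm_algebraMap, Algebra.norm_norm, hg]
    simp
  have h3 : Algebra.trace K L x = k • (-(minpoly K x).nextCoeff) := by
    rw [trace_eq_trace_adjoin, trace_adjoinSimpleGen hx]
  rw [h1, h2, h3, lam, AddChar.map_nsmul_eq_pow, map_pow, map_pow, mul_pow, mul_pow]

end Stp

end

section

open Polynomial

namespace Stp

variable {K : Type*} [Field K] [Fintype K]

theorem card_minpoly_eq {L : Type*} [Field L] [Fintype L] [Algebra K L] (P : K[X])
    (hP : Irreducible P) (hm : P.Monic) [DecidableEq K[X]] :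
    (Finset.univ.filter (fun x : L => minpoly K x = P)).card =
      if P.natDegree ∣ Module.finrank K L then P.natDegree else 0 := by
  classical
  haveI : Module.Finite K L := Module.Finite.of_finite
  split_ifs with hd
  · have h1 := hP.natDegree_dvd_iff_dvd_X_pow_card_pow_sub_X.1 hd
    have hc : Nat.card K ^ Module.finrank K L = Fintype.card L := by
      rw [Module.card_eq_pow_finrank (K := K) (V := L), Nat.card_eq_fintype_card]
    rw [hc] at h1
    have hs : (P.map (algebraMap K L)).Splits := by
      refine Splits.of_dvd (IsSplittingField.splits L (X ^ Fintype.card L - X : K[X])) ?_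
        (map_dvd (mapRingHom (algebraMap K L)) h1)
      exact (Polynomial.map_ne_zero_iff (algebraMap K L).injective).2
        (FiniteField.X_pow_card_sub_X_ne_zero _ Fintype.one_lt_card)
    have hsep : P.Separable := PerfectField.separable_of_irreducible hP
    rw [← card_rootSet_eq_natDegree hsep hs, Fintype.card_subtype]
    congr 1
    ext x
    simp only [Finset.mem_filter, Finset.mem_univ, true_and]
    rw [mem_rootSet]
    constructor
    · rintro rfl; exact ⟨hP.ne_zero, minpoly.aeval _ _⟩
    · rintro ⟨-, h⟩; exact (minpoly.eq_of_irreducible_of_monic hP h hm).symm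
  · rw [Finset.card_eq_zero, Finset.filter_eq_empty_iff]
    rintro x - rfl
    exact hd (minpoly.degree_dvd (.of_finite K x))

theorem finrank_adjoin_eq {L : Type*} [Field L] [Fintype L] [Algebra K L] (x : L) :
    Module.finrank (IntermediateField.adjoin K {x}) L * (minpoly K x).natDegree = Module.finrank K L := by
  haveI : Module.Finite K L := Module.Finite.of_finite
  rw [← IntermediateField.adjoin.finrank (.of_finite K x), mul_comm, Module.finrank_mul_finrank]

theorem sum_aux (n d m : ℕ) (hd : 0 < d) (h : m * d ≤ n) :
    ∑ j ∈ Finset.range n, (if d ∣ (j + 1) ∧ (j + 1) / d ≤ m then d else 0) = d * m := by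
  rw [← Finset.sum_filter, Finset.sum_const, smul_eq_mul, mul_comm]
  congr 1
  refine Eq.trans (Eq.symm ?_) (Finset.card_range m)
  refine Finset.card_bij (fun a _ => (a + 1) * d - 1) ?_ ?_ ?_
  · intro a ha
    have ha' := Finset.mem_range.1 ha
    have h1 : (a + 1) * d ≤ m * d := Nat.mul_le_mul_right _ ha'
    have h2 : 0 < (a + 1) * d := by positivity
    have h3 : (a + 1) * d - 1 + 1 = (a + 1) * d := by omega
    simp only [Finset.mem_filter, Finset.mem_range, h3]
    refine ⟨by omega, Dvd.intro_left _ rfl, ?_⟩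
    rw [Nat.mul_div_cancel _ hd]; omega
  · intro a _ b _ hab
    have h2 : 0 < (a + 1) * d := by positivity
    have h3 : 0 < (b + 1) * d := by positivity
    have : (a + 1) * d = (b + 1) * d := by omega
    have := Nat.eq_of_mul_eq_mul_right hd this
    omega
  · intro b hb
    simp only [Finset.mem_filter, Finset.mem_range] at hb
    obtain ⟨hb1, ⟨c, hc⟩, hb3⟩ := hb
    rw [hc, Nat.mul_div_cancel_left _ hd] at hb3
    have : 0 < c := by
      rcases Nat.eq_zero_or_pos c with h | h
      · subst h; omega
      · exact h
    refine ⟨c - 1, by simp; omega, ?_⟩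
    rw [Nat.sub_add_cancel this, mul_comm]; omega

theorem count_eq (L : ℕ → Type) [∀ j, Field (L j)] [∀ j, Fintype (L j)] [∀ j, Algebra K (L j)]
    (hL : ∀ j, Module.finrank K (L j) = j + 1) (h : K[X]) (hh : h.Monic) [DecidableEq K[X]]
    [DecidableRel fun a b : K[X] => a ∣ b] :
    ∑ j ∈ Finset.range h.natDegree, (Finset.univ.filter (fun x : L j =>
      minpoly K x ^ Module.finrank (IntermediateField.adjoin K {x}) (L j) ∣ h)).card = h.natDegree := by
  classical
  have h0 := hh.ne_zero
  set F := UniqueFactorizationMonoid.normalizedFactors h with hF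
  have hprod : F.prod = h := by
    rw [UniqueFactorizationMonoid.prod_normalizedFactors_eq h0, hh.normalize_eq_self]
  have hirr : ∀ P ∈ F, Irreducible P := fun P hP =>
    UniqueFactorizationMonoid.irreducible_of_normalized_factor P hP
  have hmon : ∀ P ∈ F, P.Monic := fun P hP => by
    have := UniqueFactorizationMonoid.normalize_normalized_factor P hP
    rw [← this]; exact monic_normalize (hirr P hP).ne_zero
  have hdeg : h.natDegree = ∑ P ∈ F.toFinset, P.natDegree * F.count P := by
    conv_lhs => rw [← hprod]
    rw [natDegree_multiset_prod_of_monic _ hmon, Finset.sum_multiset_map_count]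
    refine Finset.sum_congr rfl fun P _ => ?_
    rw [smul_eq_mul, mul_comm]
  have hdvd : ∀ P : K[X], Irreducible P → P.Monic → ∀ k, P ^ k ∣ h ↔ k ≤ F.count P := by
    intro P hP hPm k
    rw [pow_dvd_iff_le_emultiplicity,
      UniqueFactorizationMonoid.emultiplicity_eq_count_normalizedFactors hP h0,
      hPm.normalize_eq_self]
    exact Nat.cast_le
  have hj : ∀ j, (Finset.univ.filter (fun x : L j =>
      minpoly K x ^ Module.finrank (IntermediateField.adjoin K {x}) (L j) ∣ h)).card =
      ∑ P ∈ F.toFinset, if P.natDegree ∣ (j + 1) ∧ (j + 1) / P.natDegree ≤ F.count P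
        then P.natDegree else 0 := by
    intro j
    have hxx : ∀ x : L j, IsIntegral K x := fun x => .of_finite K x
    rw [Finset.card_eq_sum_card_fiberwise (f := fun x => minpoly K x) (t := F.toFinset)]
    · refine Finset.sum_congr rfl fun P hP => ?_
      have hP' := Multiset.mem_toFinset.1 hP
      have hPi := hirr P hP'
      have hPm := hmon P hP'
      have hcard := card_minpoly_eq (L := L j) P hPi hPm
      rw [hL] at hcard
      have hiff : ∀ x : L j, minpoly K x = P →
          (minpoly K x ^ Module.finrank (IntermediateField.adjoin K {x}) (L j) ∣ h ↔
            (j + 1) / P.natDegree ≤ F.count P) := by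
        intro x hx
        have := finrank_adjoin_eq (K := K) x
        rw [hx, hL] at this
        rw [hx, hdvd P hPi hPm, ← this, Nat.mul_div_cancel _ hPi.natDegree_pos]
      by_cases hle : (j + 1) / P.natDegree ≤ F.count P
      · simp only [hle, and_true]
        rw [← hcard]
        congr 1
        ext x
        simp only [Finset.mem_filter, Finset.mem_univ, true_and]
        constructor
        · exact fun h => h.2
        · exact fun h => ⟨(hiff x h).2 hle, h⟩
      · simp only [hle, and_false, if_false]
        rw [Finset.card_eq_zero, Finset.filter_eq_empty_iff]
        intro x hx hxP
        exact hle ((hiff x hxP).1 (by simpa using hx))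
    · intro x hx
      simp only [Finset.coe_filter, Finset.mem_univ, true_and, Set.mem_setOf_eq] at hx
      rw [Finset.mem_coe, Multiset.mem_toFinset, ← Multiset.one_le_count_iff_mem]
      rw [← hdvd _ (minpoly.irreducible (hxx x)) (minpoly.monic (hxx x)), pow_one]
      refine dvd_trans (dvd_pow_self _ ?_) hx
      haveI : Module.Finite K (L j) := Module.Finite.of_finite
      have := finrank_adjoin_eq (K := K) x
      rw [hL] at this
      intro h0; rw [h0] at this; omega
  rw [Finset.sum_congr rfl (fun j _ => hj j), Finset.sum_comm, hdeg]
  refine Finset.sum_congr rfl fun P hP => ?_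
  apply sum_aux _ _ _ (hirr P (Multiset.mem_toFinset.1 hP)).natDegree_pos
  rw [mul_comm]
  exact Finset.single_le_sum (f := fun P : K[X] => P.natDegree * F.count P) (fun _ _ => Nat.zero_le _) hP

end Stp

end

section

open Polynomial

namespace Stp

variable {K : Type*} [Field K] [Fintype K]

open Classical in
/-- the finset of monic polynomials of degree `n` -/
noncomputable def Mon (K : Type*) [Field K] [Fintype K] (n : ℕ) : Finset K[X] :=
  (Finset.univ : Finset (Fin n → K)).image (fun v => X ^ n + ∑ i : Fin n, C (v i) * X ^ (i : ℕ))

theorem mem_Mon {n : ℕ} {h : K[X]} : h ∈ Mon K n ↔ h.Monic ∧ h.natDegree = n := by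
  classical
  rw [Mon, Finset.mem_image]
  have hd : ∀ v : Fin n → K, (∑ i : Fin n, C (v i) * X ^ (i : ℕ)).degree < (n : WithBot ℕ) := by
    intro v
    refine lt_of_le_of_lt (degree_sum_le _ _) ?_
    rw [Finset.sup_lt_iff (by exact WithBot.bot_lt_coe n)]
    intro i _
    exact lt_of_le_of_lt (degree_C_mul_X_pow_le _ _) (by exact_mod_cast i.2)
  constructor
  · rintro ⟨v, -, rfl⟩
    refine ⟨monic_X_pow_add (hd v), ?_⟩
    rw [natDegree_add_eq_left_of_degree_lt, natDegree_X_pow]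
    rw [degree_X_pow]; exact hd v
  · rintro ⟨hm, hn⟩
    refine ⟨fun i => h.coeff i, Finset.mem_univ _, ?_⟩
    conv_rhs => rw [hm.as_sum, hn]
    rw [Finset.sum_range]

noncomputable def cn (χA χB : MulChar K ℂ) (ψ : AddChar K ℂ) (n : ℕ) : ℂ :=
  ∑ h ∈ Mon K n, lam χA χB ψ h

theorem cn_zero (χA χB : MulChar K ℂ) (ψ : AddChar K ℂ) : cn χA χB ψ 0 = 1 := by
  have : Mon K 0 = {1} := by
    ext h; rw [mem_Mon, Finset.mem_singleton]
    constructor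
    · rintro ⟨h1, h2⟩; exact h1.natDegree_eq_zero.1 h2
    · rintro rfl; simp
  rw [cn, this, Finset.sum_singleton, lam_one]

theorem cn_rec (χA χB : MulChar K ℂ) (ψ : AddChar K ℂ)
    (L : ℕ → Type) [∀ j, Field (L j)] [∀ j, Fintype (L j)] [∀ j, Algebra K (L j)]
    (hL : ∀ j, Module.finrank K (L j) = j + 1) (n : ℕ) :
    (n : ℂ) * cn χA χB ψ n =
      ∑ j ∈ Finset.range n, cs K (L j) χA χB ψ * cn χA χB ψ (n - 1 - j) := by
  classical
  have h1 : (n : ℂ) * cn χA χB ψ n = ∑ h ∈ Mon K n, ∑ j ∈ Finset.range n, ∑ x : L j,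
      if minpoly K x ^ Module.finrank (IntermediateField.adjoin K {x}) (L j) ∣ h then
        lam χA χB ψ h else 0 := by
    rw [cn, Finset.mul_sum]
    refine Finset.sum_congr rfl fun h hh => ?_
    obtain ⟨hm, hn⟩ := mem_Mon.1 hh
    have := count_eq L hL h hm
    rw [hn] at this
    conv_lhs => rw [← this, Nat.cast_sum, Finset.sum_mul]
    refine Finset.sum_congr rfl fun j _ => ?_
    rw [← Finset.sum_filter, Finset.sum_const, nsmul_eq_mul]
  rw [h1, Finset.sum_comm]
  refine Finset.sum_congr rfl fun j hj => ?_
  have hj' := Finset.mem_range.1 hj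
  rw [Finset.sum_comm, cs, Finset.sum_mul]
  refine Finset.sum_congr rfl fun x _ => ?_
  rw [term_eq]
  set P := minpoly K x ^ Module.finrank (IntermediateField.adjoin K {x}) (L j) with hP
  have hPm : P.Monic := (minpoly.monic (.of_finite K x)).pow _
  have hPd : P.natDegree = j + 1 := by
    rw [hP, natDegree_pow, finrank_adjoin_eq, hL]
  rw [← Finset.sum_filter, cn, Finset.mul_sum]
  symm
  refine Finset.sum_bij (fun g _ => P * g) ?_ ?_ ?_ ?_
  · intro g hg
    obtain ⟨hm, hn⟩ := mem_Mon.1 hg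
    rw [Finset.mem_filter, mem_Mon]
    refine ⟨⟨hPm.mul hm, ?_⟩, dvd_mul_right _ _⟩
    rw [hPm.natDegree_mul hm, hPd, hn]; omega
  · intro a _ b _ hab
    exact mul_left_cancel₀ hPm.ne_zero hab
  · intro h hh
    rw [Finset.mem_filter, mem_Mon] at hh
    obtain ⟨⟨hm, hn⟩, g, hg⟩ := hh
    have hgm : g.Monic := by
      rw [hg] at hm; exact hPm.of_mul_monic_left hm
    refine ⟨g, ?_, hg.symm⟩
    rw [mem_Mon]
    refine ⟨hgm, ?_⟩
    rw [hg, hPm.natDegree_mul hgm, hPd] at hn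
    omega
  · intro g hg
    rw [lam_mul _ _ _ hPm (mem_Mon.1 hg).1]

end Stp

end

section

open Polynomial

namespace Stp

variable {K : Type*} [Field K] [Fintype K]

theorem exists_sq_add_sq (c : K) : ∃ u v : K, u ^ 2 + v ^ 2 = c := by
  by_cases h2 : ringChar K = 2
  · obtain ⟨u, hu⟩ := FiniteField.isSquare_of_char_two h2 c
    exact ⟨u, 0, by rw [hu]; ring⟩
  · obtain ⟨a, b, hab⟩ := FiniteField.exists_root_sum_quadratic (f := (X ^ 2 : K[X]))
      (g := X ^ 2 - C c) (degree_X_pow 2) (degree_X_pow_sub_C (by decide) _)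
      (FiniteField.odd_card_of_char_ne_two h2)
    refine ⟨a, b, ?_⟩
    rw [← sub_eq_zero]
    simpa only [eval_C, eval_X, eval_pow, eval_sub, ← add_sub_assoc] using hab

theorem cn_zero_of (χA χB : MulChar K ℂ) (ψ : AddChar K ℂ) (n : ℕ) (f : K[X] → K[X]) (z : ℂ)
    (hz : z ≠ 1) (hf : ∀ h ∈ Mon K n, f h ∈ Mon K n)
    (hi : ∀ h ∈ Mon K n, ∀ h' ∈ Mon K n, f h = f h' → h = h')
    (hl : ∀ h ∈ Mon K n, lam χA χB ψ (f h) = z * lam χA χB ψ h) : cn χA χB ψ n = 0 := by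
  have h1 : cn χA χB ψ n = z * cn χA χB ψ n := by
    conv_rhs => rw [cn, Finset.mul_sum]
    rw [cn]
    symm
    refine Finset.sum_bij (fun h _ => f h) hf (fun a ha b hb => hi a ha b hb) ?_
      (fun h hh => (hl h hh).symm)
    intro b hb
    obtain ⟨a, ha, hab⟩ := Finset.surjOn_of_injOn_of_card_le f (s := Mon K n) (t := Mon K n)
      (fun h hh => hf h hh) (fun a ha b hb => hi a ha b hb) le_rfl hb
    exact ⟨a, ha, hab⟩
  have h2 : (1 - z) * cn χA χB ψ n = 0 := by linear_combination h1
  rcases mul_eq_zero.1 h2 with h | h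
  · exact absurd (by linear_combination -h) hz
  · exact h

theorem Mon_add {n : ℕ} {h d : K[X]} (hh : h ∈ Mon K n) (hd : d.degree < n) : h + d ∈ Mon K n := by
  obtain ⟨h1, h2⟩ := mem_Mon.1 hh
  have h3 : d.degree < h.degree := by rw [degree_eq_natDegree h1.ne_zero, h2]; exact hd
  rw [mem_Mon]
  exact ⟨h1.add_of_left h3, by rw [natDegree_add_eq_left_of_degree_lt h3, h2]⟩

theorem R2_add (h d : K[X]) : R2 (h + (X ^ 2 + 1) * d) = R2 h := by
  obtain ⟨g, a, b, e⟩ := exists_decomp h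
  rw [R2_of_decomp h g a b e, R2_of_decomp _ (g + d) a b (by rw [e]; ring)]

theorem lam_Mon (χA χB : MulChar K ℂ) (ψ : AddChar K ℂ) {n : ℕ} (hn : 0 < n) {h : K[X]}
    (hh : h ∈ Mon K n) : lam χA χB ψ h =
      χA ((-1) ^ n * h.coeff 0) * χB (R2 h) * ψ (-h.coeff (n - 1)) := by
  obtain ⟨h1, h2⟩ := mem_Mon.1 hh
  rw [lam, nextCoeff_of_natDegree_pos (by omega), h2]

theorem cn_eq_zero_psi (χA χB : MulChar K ℂ) (ψ : AddChar K ℂ) (hψ : ψ ≠ 1) (n : ℕ) (hn : 4 ≤ n) :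
    cn χA χB ψ n = 0 := by
  obtain ⟨t, ht⟩ := AddChar.ne_one_iff.1 hψ
  set d : K[X] := (X ^ 2 + 1) * (C (-t) * X ^ (n - 3)) with hd
  have hdd : d = C (-t) * X ^ (n - 1) + C (-t) * X ^ (n - 3) := by
    have : n - 1 = (n - 3) + 2 := by omega
    rw [hd, this, pow_add]; ring
  have hdeg : d.degree < n := by
    rw [hdd]
    refine lt_of_le_of_lt (degree_add_le _ _) (max_lt ?_ ?_)
    · exact lt_of_le_of_lt (degree_C_mul_X_pow_le _ _) (by exact_mod_cast (by omega : n - 1 < n))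
    · exact lt_of_le_of_lt (degree_C_mul_X_pow_le _ _) (by exact_mod_cast (by omega : n - 3 < n))
  refine cn_zero_of χA χB ψ n (fun h => h + d) (ψ t) ht (fun h hh => Mon_add hh hdeg)
    (fun a _ b _ hab => add_right_cancel hab) ?_
  intro h hh
  rw [lam_Mon _ _ _ (by omega) hh, lam_Mon _ _ _ (by omega) (Mon_add hh hdeg), hd, R2_add, ← hd, hdd]
  have e1 : (h + (C (-t) * X ^ (n - 1) + C (-t) * X ^ (n - 3))).coeff 0 = h.coeff 0 := by
    simp only [coeff_add, coeff_C_mul, coeff_X_pow]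
    rw [if_neg (by omega), if_neg (by omega)]; simp
  have e2 : (h + (C (-t) * X ^ (n - 1) + C (-t) * X ^ (n - 3))).coeff (n - 1) = h.coeff (n - 1) - t := by
    simp only [coeff_add, coeff_C_mul, coeff_X_pow]
    rw [if_pos True.intro, if_neg (by omega)]; ring
  rw [e1, e2, neg_sub, sub_eq_add_neg, AddChar.map_add_eq_mul]; ring

theorem cn_eq_zero_A (χA χB : MulChar K ℂ) (hA : χA ≠ 1) (n : ℕ) (hn : 4 ≤ n) :
    cn χA χB 1 n = 0 := by
  obtain ⟨g, hg⟩ : ∃ g : Kˣ, χA g ≠ 1 := by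
    by_contra hcon
    push Not at hcon
    exact hA (MulChar.ext fun a => by rw [hcon a]; simp)
  have hdeg : ∀ s : K, ((X ^ 2 + 1) * C s : K[X]).degree < n := by
    intro s
    refine lt_of_le_of_lt (degree_mul_le _ _) ?_
    rw [degree_eq_natDegree monic_X2.ne_zero, natDegree_X2]
    calc ((2 : ℕ) : WithBot ℕ) + (C s).degree ≤ (2 : ℕ) + 0 := by
          gcongr; exact degree_C_le
      _ < n := by rw [add_zero]; exact_mod_cast (by omega : 2 < n)
  have h0 : ∀ (h : K[X]) (s : K), (h + (X ^ 2 + 1) * C s).coeff 0 = h.coeff 0 + s := by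
    intro h s; simp
  refine cn_zero_of χA χB 1 n (fun h => h + (X ^ 2 + 1) * C ((g - 1) * h.coeff 0)) (χA g) hg
    (fun h hh => Mon_add hh (hdeg _)) ?_ ?_
  · intro a _ b _ hab
    have h1 := congrArg (fun p : K[X] => p.coeff 0) hab
    simp only [h0] at h1
    have h2 : (g : K) * a.coeff 0 = g * b.coeff 0 := by linear_combination h1
    have h3 := mul_left_cancel₀ g.ne_zero h2
    simp only [h3] at hab
    exact add_right_cancel hab
  · intro h hh
    rw [lam_Mon _ _ _ (by omega) hh, lam_Mon _ _ _ (by omega) (Mon_add hh (hdeg _)), R2_add, h0]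
    have : (-1) ^ n * (h.coeff 0 + (g - 1) * h.coeff 0) = (g : K) * ((-1) ^ n * h.coeff 0) := by ring
    rw [this, map_mul]; simp only [AddChar.one_apply]; ring

theorem cn_eq_zero_B (χA χB : MulChar K ℂ) (hB : χB ≠ 1) (n : ℕ) (hn : 4 ≤ n) :
    cn χA χB 1 n = 0 := by
  obtain ⟨g, hg⟩ : ∃ g : Kˣ, χB g ≠ 1 := by
    by_contra hcon
    push Not at hcon
    exact hB (MulChar.ext fun a => by rw [hcon a]; simp)
  obtain ⟨u, v, huv⟩ := exists_sq_add_sq (g : K)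
  have huv0 : u ^ 2 + v ^ 2 ≠ 0 := by rw [huv]; exact g.ne_zero
  let al : K[X] → K := fun h => (h %ₘ (X ^ 2 + 1)).coeff 0
  let be : K[X] → K := fun h => (h %ₘ (X ^ 2 + 1)).coeff 1
  have hR : ∀ h, R2 h = al h ^ 2 + be h ^ 2 := fun h => rfl
  have hmod : ∀ (h g : K[X]) (a b : K), h = (X ^ 2 + 1) * g + (C b * X + C a) →
      al h = a ∧ be h = b := by
    intro h g a b e
    have hm : h %ₘ (X ^ 2 + 1) = C b * X + C a := by
      rw [e]
      refine (div_modByMonic_unique g _ monic_X2 ⟨by ring, ?_⟩).2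
      refine lt_of_le_of_lt degree_linear_le ?_
      rw [degree_eq_natDegree monic_X2.ne_zero, natDegree_X2]; norm_num
    simp only [al, be, hm]; simp
  let f : K[X] → K[X] := fun h => h + (C (v * al h + u * be h - be h) * X +
    C (al h - (u * al h - v * be h)) * X ^ 2)
  have hfm : ∀ h, al (f h) = u * al h - v * be h ∧ be (f h) = v * al h + u * be h := by
    intro h
    obtain ⟨g, a, b, e⟩ := exists_decomp h
    obtain ⟨ha, hb⟩ := hmod h g a b e
    refine hmod _ (g + C (a - (u * a - v * b))) _ _ ?_
    simp only [f, ha, hb]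
    conv_lhs => rw [e]
    simp; ring
  have hdeg : ∀ s t : K, (C s * X + C t * X ^ 2 : K[X]).degree < n := by
    intro s t
    refine lt_of_le_of_lt (degree_add_le _ _) (max_lt ?_ ?_)
    · exact lt_of_le_of_lt (degree_C_mul_X_le _) (by exact_mod_cast (by omega : 1 < n))
    · exact lt_of_le_of_lt (degree_C_mul_X_pow_le _ _) (by exact_mod_cast (by omega : 2 < n))
  refine cn_zero_of χA χB 1 n f (χB g) hg (fun h hh => Mon_add hh (hdeg _ _)) ?_ ?_
  · intro a _ b _ hab
    have h1 := hfm a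
    have h2 := hfm b
    rw [hab] at h1
    have e1 : u * al a - v * be a = u * al b - v * be b := by rw [← h1.1, h2.1]
    have e2 : v * al a + u * be a = v * al b + u * be b := by rw [← h1.2, h2.2]
    have e3 : al a = al b := by
      apply mul_left_cancel₀ huv0
      linear_combination u * e1 + v * e2
    have e4 : be a = be b := by
      apply mul_left_cancel₀ huv0
      linear_combination u * e2 - v * e1
    simp only [f, e3, e4] at hab
    exact add_right_cancel hab
  · intro h hh
    rw [lam_Mon _ _ _ (by omega) hh, lam_Mon _ _ _ (by omega) (Mon_add hh (hdeg _ _))]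
    have e0 : (f h).coeff 0 = h.coeff 0 := by simp [f]
    have e1 : R2 (f h) = g * R2 h := by
      rw [hR, hR, (hfm h).1, (hfm h).2, ← huv]; ring
    have ef : f h = h + (C (v * al h + u * be h - be h) * X +
      C (al h - (u * al h - v * be h)) * X ^ 2) := rfl
    rw [← ef, e0, e1, map_mul χB]; simp only [AddChar.one_apply]; ring

theorem cn_eq_zero (χA χB : MulChar K ℂ) (h : χA ≠ 1 ∨ χB ≠ 1) (ψ : AddChar K ℂ) (n : ℕ)
    (hn : 4 ≤ n) : cn χA χB ψ n = 0 := by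
  by_cases hψ : ψ = 1
  · subst hψ
    rcases h with h | h
    · exact cn_eq_zero_A χA χB h n hn
    · exact cn_eq_zero_B χA χB h n hn
  · exact cn_eq_zero_psi χA χB ψ hψ n hn

end Stp

end

section

open Polynomial

namespace Stp

theorem le_of_pow_le (w ρ C : ℝ) (hw : 0 ≤ w) (hρ : 0 < ρ) (h : ∀ m : ℕ, 1 ≤ m → w ^ m ≤ C * ρ ^ m) : w ≤ ρ := by
  by_contra hcon
  push Not at hcon
  have h1 : 1 < w / ρ := (one_lt_div hρ).2 hcon
  obtain ⟨m, hm⟩ := pow_unbounded_of_one_lt C h1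
  have h2 : C < (w / ρ) ^ (m + 1) := lt_of_lt_of_le hm (pow_le_pow_right₀ h1.le (by omega))
  have h3 := h (m + 1) (by omega)
  rw [div_pow, lt_div_iff₀ (by positivity)] at h2
  linarith

theorem pow_sum_aux (z1 z2 z3 : ℂ) (ρ C : ℝ) (hρ : 0 < ρ)
    (h : ∀ m : ℕ, 1 ≤ m → ‖z1 ^ m + z2 ^ m + z3 ^ m‖ ≤ C * ρ ^ m) : ‖z1‖ ≤ ρ := by
  obtain ⟨g0, g1, g2, D, hD, hg⟩ : ∃ g0 g1 g2 D : ℂ, D ≠ 0 ∧ ∀ m : ℕ,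
      g0 * (z1 ^ m + z2 ^ m + z3 ^ m) + g1 * (z1 ^ (m + 1) + z2 ^ (m + 1) + z3 ^ (m + 1)) +
      g2 * (z1 ^ (m + 2) + z2 ^ (m + 2) + z3 ^ (m + 2)) = D * z1 ^ m := by
    by_cases h2 : z2 = z1
    · by_cases h3 : z3 = z1
      · exact ⟨1, 0, 0, 3, by norm_num, fun m => by rw [h2, h3]; ring⟩
      · refine ⟨-z3, 1, 0, 2 * (z1 - z3), ?_, fun m => by rw [h2]; ring⟩
        exact mul_ne_zero two_ne_zero (sub_ne_zero.2 (Ne.symm h3))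
    · by_cases h3 : z3 = z1
      · refine ⟨-z2, 1, 0, 2 * (z1 - z2), ?_, fun m => by rw [h3]; ring⟩
        exact mul_ne_zero two_ne_zero (sub_ne_zero.2 (Ne.symm h2))
      · refine ⟨z2 * z3, -(z2 + z3), 1, (z1 - z2) * (z1 - z3), ?_, fun m => by ring⟩
        exact mul_ne_zero (sub_ne_zero.2 (Ne.symm h2)) (sub_ne_zero.2 (Ne.symm h3))
  have hDn : 0 < ‖D‖ := norm_pos_iff.2 hD
  refine le_of_pow_le _ ρ ((‖g0‖ * C + ‖g1‖ * C * ρ + ‖g2‖ * C * ρ ^ 2) / ‖D‖) (norm_nonneg _) hρ ?_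
  intro m hm
  rw [div_mul_eq_mul_div, le_div_iff₀ hDn, ← norm_pow, mul_comm, ← norm_mul, ← hg m]
  refine (norm_add₃_le).trans ?_
  rw [norm_mul, norm_mul, norm_mul]
  have e0 := mul_le_mul_of_nonneg_left (h m hm) (norm_nonneg g0)
  have e1 := mul_le_mul_of_nonneg_left (h (m + 1) (by omega)) (norm_nonneg g1)
  have e2 := mul_le_mul_of_nonneg_left (h (m + 2) (by omega)) (norm_nonneg g2)
  refine (add_le_add (add_le_add e0 e1) e2).trans (le_of_eq ?_)
  ring

theorem cubic_roots (c1 c2 c3 : ℂ) : ∃ w1 w2 w3 : ℂ, c1 = -(w1 + w2 + w3) ∧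
    c2 = w1 * w2 + w1 * w3 + w2 * w3 ∧ c3 = -(w1 * w2 * w3) := by
  obtain ⟨w1, h1⟩ : ∃ w1 : ℂ, w1 ^ 3 + c1 * w1 ^ 2 + c2 * w1 + c3 = 0 := by
    have hd : (Cubic.toPoly ⟨1, c1, c2, c3⟩ : ℂ[X]).degree = 3 := Cubic.degree_of_a_ne_zero one_ne_zero
    obtain ⟨w, hw⟩ := IsAlgClosed.exists_root (Cubic.toPoly ⟨1, c1, c2, c3⟩ : ℂ[X]) (by rw [hd]; norm_num)
    refine ⟨w, ?_⟩
    simpa [Cubic.toPoly, IsRoot] using hw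
  -- quadratic factor X^2 + (c1 + w1) X + (c2 + w1 c1 + w1^2)
  obtain ⟨s, hs⟩ := IsAlgClosed.exists_pow_nat_eq
    ((c1 + w1) ^ 2 - 4 * (c2 + w1 * c1 + w1 ^ 2)) (n := 2) (by norm_num)
  refine ⟨w1, (-(c1 + w1) + s) / 2, (-(c1 + w1) - s) / 2, by ring, ?_, ?_⟩
  · linear_combination (1 / 4) * hs
  · linear_combination h1 - (w1 / 4) * hs

theorem newton (S c : ℕ → ℂ) (w1 w2 w3 : ℂ) (hc0 : c 0 = 1) (hc1 : c 1 = -(w1 + w2 + w3))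
    (hc2 : c 2 = w1 * w2 + w1 * w3 + w2 * w3) (hc3 : c 3 = -(w1 * w2 * w3))
    (hc : ∀ n, 4 ≤ n → c n = 0)
    (hrec : ∀ n : ℕ, (n : ℂ) * c n = ∑ j ∈ Finset.range n, S j * c (n - 1 - j)) :
    ∀ n, S n = -(w1 ^ (n + 1) + w2 ^ (n + 1) + w3 ^ (n + 1)) := by
  have h0 : S 0 = -(w1 ^ 1 + w2 ^ 1 + w3 ^ 1) := by
    have := hrec 1
    simp [hc0, hc1] at this
    rw [← this]; ring
  have h1 : S 1 = -(w1 ^ 2 + w2 ^ 2 + w3 ^ 2) := by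
    have := hrec 2
    simp [Finset.sum_range_succ, hc0, hc1, hc2, h0] at this
    linear_combination -this
  have h2 : S 2 = -(w1 ^ 3 + w2 ^ 3 + w3 ^ 3) := by
    have := hrec 3
    simp [Finset.sum_range_succ, hc0, hc1, hc2, hc3, h0, h1] at this
    linear_combination -this
  intro n
  induction n using Nat.strong_induction_on with
  | _ n ih =>
    rcases n with _ | _ | _ | n
    · exact h0
    · exact h1
    · exact h2
    · have := hrec (n + 4)
      rw [hc (n + 4) (by omega), mul_zero, Finset.sum_range_succ, Finset.sum_range_succ,
        Finset.sum_range_succ, Finset.sum_range_succ, Finset.sum_eq_zero] at this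
      · rw [show n + 4 - 1 - n = 3 by omega, show n + 4 - 1 - (n + 1) = 2 by omega,
          show n + 4 - 1 - (n + 2) = 1 by omega, show n + 4 - 1 - (n + 3) = 0 by omega,
          hc0, hc1, hc2, hc3, ih n (by omega), ih (n + 1) (by omega), ih (n + 2) (by omega)] at this
        show S (n + 3) = _
        linear_combination -this
      · intro j hj
        have := Finset.mem_range.1 hj
        rw [hc _ (by omega), mul_zero]

universe u

theorem weil {K : Type u} [Field K] [Fintype K] (χA χB : MulChar K ℂ) (h : χA ≠ 1 ∨ χB ≠ 1)
    (ψ : AddChar K ℂ) :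
    ‖∑ x : K, χA x * χB (x ^ 2 + 1) * ψ x‖ ≤ 3 * Real.sqrt (Fintype.card K) := by
  classical
  obtain ⟨p, hp⟩ := CharP.exists K
  have : Fact (Nat.Prime p) := ⟨CharP.char_is_prime K p⟩
  let L : ℕ → Type := fun j => FiniteField.Extension K p (j + 1)
  letI : ∀ j, Field (L j) := fun j => inferInstanceAs (Field (FiniteField.Extension K p (j + 1)))
  have : ∀ j, Finite (L j) := fun j => inferInstanceAs (Finite (FiniteField.Extension K p (j + 1)))
  letI : ∀ j, Fintype (L j) := fun j => Fintype.ofFinite _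
  letI : ∀ j, Algebra K (L j) := fun j =>
    inferInstanceAs (Algebra K (FiniteField.Extension K p (j + 1)))
  have hL : ∀ j, Module.finrank K (L j) = j + 1 := fun j => FiniteField.finrank_extension K p (j + 1)
  have hrec := cn_rec χA χB ψ L hL
  obtain ⟨w1, w2, w3, h1, h2, h3⟩ := cubic_roots (cn χA χB ψ 1) (cn χA χB ψ 2) (cn χA χB ψ 3)
  have hS := newton (fun j => cs K (L j) χA χB ψ) (cn χA χB ψ) w1 w2 w3 (cn_zero _ _ _) h1 h2 h3
    (fun n hn => cn_eq_zero χA χB h ψ n hn) hrec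
  obtain ⟨C, hC⟩ := cs_bound.{u, 0} χA χB h ψ
  set Q : ℝ := (Fintype.card K : ℝ) with hQ
  have hQ0 : 0 < Q := by rw [hQ]; exact_mod_cast Fintype.card_pos
  have hb : ∀ m : ℕ, 1 ≤ m → ‖(w1 ^ 2) ^ m + (w2 ^ 2) ^ m + (w3 ^ 2) ^ m‖ ≤ C * Q ^ m := by
    intro m hm
    have := hC (L (2 * m - 1)) m (by rw [hL]; omega)
    have e := hS (2 * m - 1)
    rw [e, norm_neg, show 2 * m - 1 + 1 = 2 * m by omega] at this
    simpa only [← pow_mul] using this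
  have hroot : ∀ w : ℂ, ‖w ^ 2‖ ≤ Q → ‖w‖ ≤ Real.sqrt Q := by
    intro w hw
    apply Real.le_sqrt_of_sq_le
    rwa [← norm_pow]
  have b1 := hroot w1 (pow_sum_aux _ _ _ Q C hQ0 hb)
  have b2 := hroot w2 (pow_sum_aux (w2 ^ 2) (w1 ^ 2) (w3 ^ 2) Q C hQ0 (fun m hm => by
    have := hb m hm; rwa [add_comm ((w2 ^ 2) ^ m)]))
  have b3 := hroot w3 (pow_sum_aux (w3 ^ 2) (w2 ^ 2) (w1 ^ 2) Q C hQ0 (fun m hm => by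
    have := hb m hm
    rwa [show (w3 ^ 2) ^ m + (w2 ^ 2) ^ m + (w1 ^ 2) ^ m =
      (w1 ^ 2) ^ m + (w2 ^ 2) ^ m + (w3 ^ 2) ^ m by ring]))
  have hbij : Function.Bijective (algebraMap K (L 0)) := by
    refine Algebra.finrank_eq_one_iff_bijective_algebraMap.1 ?_
    rw [hL 0]
  have e : ∑ x : K, χA x * χB (x ^ 2 + 1) * ψ x = cs K (L 0) χA χB ψ := by
    rw [cs, ← hbij.sum_comp]
    refine Finset.sum_congr rfl fun x _ => ?_
    rw [← map_one (algebraMap K (L 0)), ← map_pow, ← map_add, Algebra.norm_algebraMap,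
      Algebra.norm_algebraMap, Algebra.trace_algebraMap, hL]
    simp
  have e0 := hS 0
  simp only [zero_add, pow_one] at e0
  rw [e, e0, norm_neg]
  refine norm_add₃_le.trans ?_
  linarith

end Stp

end

section

open Polynomial

namespace Stp

variable {Γ ι α : Type*} [CommGroup Γ] [Fintype Γ] [DecidableEq ι]

open Classical in
/-- average of the character `e` over the subgroup `H` -/
noncomputable def avg (H : Subgroup Γ) (e : Γ →* ℂ) : ℂ := (Nat.card H : ℂ)⁻¹ * ∑ h : H, e h

theorem avg_eq (H : Subgroup Γ) (e : Γ →* ℂ) :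
    ((∀ h ∈ H, e h = 1) ∧ avg H e = 1) ∨ ((∃ h ∈ H, e h ≠ 1) ∧ avg H e = 0) := by
  classical
  have hc : (Nat.card H : ℂ) ≠ 0 := Nat.cast_ne_zero.2 Nat.card_pos.ne'
  by_cases h : ∀ h ∈ H, e h = 1
  · left
    refine ⟨h, ?_⟩
    rw [avg, Finset.sum_congr rfl (fun (x : H) _ => h (x : Γ) x.2)]
    simp only [Finset.sum_const, Finset.card_univ, nsmul_eq_mul, mul_one]
    rw [← Nat.card_eq_fintype_card, inv_mul_cancel₀ hc]
  · right
    push Not at h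
    refine ⟨h, ?_⟩
    obtain ⟨g, hg, hne⟩ := h
    have h1 : ∑ h : H, e h = e g * ∑ h : H, e h := by
      rw [Finset.mul_sum, ← Equiv.sum_comp (Equiv.mulLeft (⟨g, hg⟩ : H))]
      refine Finset.sum_congr rfl fun x _ => ?_
      simp
    have h2 : (1 - e g) * ∑ h : H, e h = 0 := by linear_combination h1
    rcases mul_eq_zero.1 h2 with h | h
    · exact absurd (by linear_combination -h) hne
    · rw [avg, h, mul_zero]

theorem avg_split (H : Subgroup Γ) (X : Finset α) (ev : α → Γ →* ℂ) (w : α → ℂ) (γ : Γ) (B : ℝ)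
    (hB : ∀ h ∈ H, h ≠ 1 → ‖∑ x ∈ X, ev x (γ * h) * w x‖ ≤ B) :
    ‖∑ x ∈ X, ev x γ * avg H (ev x) * w x - (Nat.card H : ℂ)⁻¹ * ∑ x ∈ X, ev x γ * w x‖ ≤
      (1 - (Nat.card H : ℝ)⁻¹) * B := by
  classical
  have hc : (0 : ℝ) < Nat.card H := Nat.cast_pos.2 Nat.card_pos
  have e1 : ∑ x ∈ X, ev x γ * avg H (ev x) * w x =
      (Nat.card H : ℂ)⁻¹ * ∑ h : H, ∑ x ∈ X, ev x (γ * h) * w x := by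
    rw [Finset.sum_comm, Finset.mul_sum]
    refine Finset.sum_congr rfl fun x _ => ?_
    rw [avg, ← Finset.sum_mul]
    simp only [map_mul, ← Finset.mul_sum]
    ring
  rw [e1, ← Finset.add_sum_erase _ _ (Finset.mem_univ (1 : H))]
  simp only [OneMemClass.coe_one, mul_one]
  rw [mul_add, add_sub_cancel_left, norm_mul, norm_inv, RCLike.norm_natCast]
  have e2 : ‖∑ h ∈ Finset.univ.erase (1 : H), ∑ x ∈ X, ev x (γ * h) * w x‖ ≤
      ((Nat.card H : ℝ) - 1) * B := by
    refine (norm_sum_le _ _).trans ?_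
    have : ∀ h ∈ Finset.univ.erase (1 : H), ‖∑ x ∈ X, ev x (γ * h) * w x‖ ≤ B := by
      intro h hh
      refine hB h h.2 ?_
      have := (Finset.mem_erase.1 hh).1
      intro h1; exact this (Subtype.ext h1)
    refine (Finset.sum_le_card_nsmul _ _ _ this).trans (le_of_eq ?_)
    rw [Finset.card_erase_of_mem (Finset.mem_univ _), Finset.card_univ, nsmul_eq_mul,
      ← Nat.card_eq_fintype_card, Nat.cast_sub Nat.card_pos, Nat.cast_one]
  refine (mul_le_mul_of_nonneg_left e2 (inv_nonneg.2 hc.le)).trans (le_of_eq ?_)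
  field_simp

theorem sieve_aux (X : Finset α) (ev : α → Γ →* ℂ) (H : ι → Subgroup Γ) (B : ℝ)
    (hB : ∀ γ, γ ≠ 1 → ‖∑ x ∈ X, ev x γ‖ ≤ B) (s : Finset ι)
    (hs : ∀ i ∈ s, 1 < Nat.card (H i))
    (hind : ∀ i ∈ s, ∀ t ⊆ s, i ∉ t → Disjoint (H i) (⨆ j ∈ t, H j)) :
    (∀ γ, γ ∉ (⨆ j ∈ s, H j) → ‖∑ x ∈ X, ev x γ * ∏ i ∈ s, (1 - avg (H i) (ev x))‖ ≤
      (∏ i ∈ s, (1 - (Nat.card (H i) : ℝ)⁻¹)) * (2 ^ s.card * B)) ∧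
    ‖∑ x ∈ X, ∏ i ∈ s, (1 - avg (H i) (ev x)) -
      ((∏ i ∈ s, (1 - (Nat.card (H i) : ℝ)⁻¹) : ℝ) : ℂ) * X.card‖ ≤
      (∏ i ∈ s, (1 - (Nat.card (H i) : ℝ)⁻¹)) * ((2 ^ s.card - 1) * B) := by
  classical
  induction s using Finset.induction_on with
  | empty =>
    constructor
    · intro γ hγ
      have : γ ≠ 1 := by
        rintro rfl; exact hγ (one_mem _)
      simpa using hB γ this
    · simp
  | insert i s his ih =>
    obtain ⟨ih1, ih2⟩ := ih (fun j hj => hs j (Finset.mem_insert_of_mem hj))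
      (fun j hj t ht => hind j (Finset.mem_insert_of_mem hj) t (ht.trans (Finset.subset_insert _ _)))
    have hi := hs i (Finset.mem_insert_self _ _)
    set n : ℝ := (Nat.card (H i) : ℝ) with hn
    have hn1 : 1 < n := by rw [hn]; exact_mod_cast hi
    have hn0 : 0 ≤ 1 - n⁻¹ := by
      have := inv_le_one_of_one_le₀ hn1.le; linarith
    set θ : ℝ := ∏ i ∈ s, (1 - (Nat.card (H i) : ℝ)⁻¹) with hθ
    have hsplit : ∀ γ, ∑ x ∈ X, ev x γ * ∏ i ∈ insert i s, (1 - avg (H i) (ev x)) =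
        (1 - (n : ℂ)⁻¹) * ∑ x ∈ X, ev x γ * ∏ i ∈ s, (1 - avg (H i) (ev x)) -
        (∑ x ∈ X, ev x γ * avg (H i) (ev x) * ∏ i ∈ s, (1 - avg (H i) (ev x)) -
          (Nat.card (H i) : ℂ)⁻¹ * ∑ x ∈ X, ev x γ * ∏ i ∈ s, (1 - avg (H i) (ev x))) := by
      intro γ
      have : (n : ℂ) = Nat.card (H i) := by simp [hn]
      rw [this, sub_mul, one_mul, sub_sub, add_sub_cancel, ← Finset.sum_sub_distrib]
      refine Finset.sum_congr rfl fun x _ => ?_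
      rw [Finset.prod_insert his]; ring
    have hnn : ‖(1 - (n : ℂ)⁻¹)‖ = 1 - n⁻¹ := by
      rw [← Complex.ofReal_inv, ← Complex.ofReal_one, ← Complex.ofReal_sub, Complex.norm_real,
        Real.norm_of_nonneg hn0]
    rw [Finset.prod_insert his, Finset.card_insert_of_notMem his]
    have hsup : (⨆ j ∈ insert i s, H j) = H i ⊔ ⨆ j ∈ s, H j := Finset.iSup_insert i s H
    constructor
    · intro γ hγ
      rw [hsup] at hγ
      have hγh : ∀ h ∈ H i, γ * h ∉ ⨆ j ∈ s, H j := by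
        intro h hh hcon
        apply hγ
        have : γ = h⁻¹ * (γ * h) := by rw [mul_comm γ, inv_mul_cancel_left]
        rw [this]
        exact Subgroup.mul_mem_sup (inv_mem hh) hcon
      rw [hsplit]
      refine (norm_sub_le _ _).trans ?_
      have e1 := avg_split (H i) X ev (fun x => ∏ i ∈ s, (1 - avg (H i) (ev x))) γ _
        (fun h hh _ => ih1 (γ * h) (hγh h hh))
      have e2 := ih1 γ (by simpa using hγh 1 (one_mem _))
      rw [norm_mul, hnn]
      refine (add_le_add (mul_le_mul_of_nonneg_left e2 hn0) e1).trans (le_of_eq ?_)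
      rw [← hn, pow_succ]; ring
    · have h1 := hsplit 1
      simp only [map_one, one_mul] at h1
      rw [h1]
      have e1 := avg_split (H i) X ev (fun x => ∏ i ∈ s, (1 - avg (H i) (ev x))) 1 _
        (fun h hh hne => ih1 (1 * h) (by
          rw [one_mul]
          intro hcon
          have hd := hind i (Finset.mem_insert_self _ _) s (Finset.subset_insert _ _) his
          exact hne ((Subgroup.disjoint_def.1 hd) hh hcon)))
      simp only [map_one, one_mul] at e1
      have e3 : ∀ (a b c d : ℂ), d * a - b - d * c = d * (a - c) - b := by intros; ring
      have e4 : (((1 - n⁻¹) * θ : ℝ) : ℂ) * X.card = (1 - (n : ℂ)⁻¹) * (θ * X.card) := by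
        push_cast; ring
      rw [e4, e3]
      refine (norm_sub_le _ _).trans ?_
      rw [norm_mul, hnn]
      refine (add_le_add (mul_le_mul_of_nonneg_left ih2 hn0) e1).trans (le_of_eq ?_)
      rw [← hn, pow_succ]; ring

theorem sieve (X : Finset α) (ev : α → Γ →* ℂ) (H : ι → Subgroup Γ) (B : ℝ)
    (hB : ∀ γ, γ ≠ 1 → ‖∑ x ∈ X, ev x γ‖ ≤ B) (core rest : Finset ι) (hdis : Disjoint core rest)
    (hs : ∀ i ∈ core ∪ rest, 1 < Nat.card (H i))
    (hind : ∀ i ∈ core ∪ rest, ∀ t ⊆ core ∪ rest, i ∉ t → Disjoint (H i) (⨆ j ∈ t, H j))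
    (δ : ℝ) (hδ : δ = 1 - ∑ i ∈ rest, (Nat.card (H i) : ℝ)⁻¹) (hδ0 : 0 < δ)
    (hineq : 2 ^ core.card * B * (2 * δ + rest.card - 1) < δ * (X.card + B)) :
    ∃ x ∈ X, ∀ i ∈ core ∪ rest, ∃ h ∈ H i, ev x h ≠ 1 := by
  classical
  obtain ⟨h1, h2⟩ := sieve_aux X ev H B hB core (fun i hi => hs i (Finset.mem_union_left _ hi))
    (fun i hi t ht => hind i (Finset.mem_union_left _ hi) t (ht.trans Finset.subset_union_left))
  set θ : ℝ := ∏ i ∈ core, (1 - (Nat.card (H i) : ℝ)⁻¹) with hθ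
  have hθ0 : 0 < θ := by
    refine Finset.prod_pos fun i hi => ?_
    have : (1 : ℝ) < Nat.card (H i) := by exact_mod_cast hs i (Finset.mem_union_left _ hi)
    have := inv_lt_one_of_one_lt₀ this
    linarith
  set w : α → ℂ := fun x => ∏ i ∈ core, (1 - avg (H i) (ev x)) with hw
  set U : ℂ := ∑ x ∈ X, w x with hU
  have h3 : ∀ i ∈ rest, ‖∑ x ∈ X, avg (H i) (ev x) * w x - (Nat.card (H i) : ℂ)⁻¹ * U‖ ≤
      (1 - (Nat.card (H i) : ℝ)⁻¹) * (θ * (2 ^ core.card * B)) := by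
    intro i hi
    have e1 := avg_split (H i) X ev w 1 _ (fun h hh hne => h1 (1 * h) (by
          rw [one_mul]
          intro hcon
          have hd := hind i (Finset.mem_union_right _ hi) core Finset.subset_union_left
            (fun hc => (Finset.disjoint_left.1 hdis hc) hi)
          exact hne ((Subgroup.disjoint_def.1 hd) hh hcon)))
    simp only [map_one, one_mul] at e1
    exact e1
  set Z : ℂ := ∑ x ∈ X, w x * (1 - ∑ i ∈ rest, avg (H i) (ev x)) with hZ
  have hZe : Z = (δ : ℂ) * U - ∑ i ∈ rest, (∑ x ∈ X, avg (H i) (ev x) * w x -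
      (Nat.card (H i) : ℂ)⁻¹ * U) := by
    rw [Finset.sum_sub_distrib, ← Finset.sum_mul, hδ, Finset.sum_comm, hZ, hU]
    push_cast
    have : ∑ x ∈ X, ∑ i ∈ rest, avg (H i) (ev x) * w x =
      ∑ x ∈ X, w x * ∑ i ∈ rest, avg (H i) (ev x) := by
      refine Finset.sum_congr rfl fun x _ => ?_
      rw [← Finset.sum_mul, mul_comm]
    rw [this]
    simp only [mul_sub, mul_one, Finset.sum_sub_distrib]
    ring
  have h4 : ‖∑ i ∈ rest, (∑ x ∈ X, avg (H i) (ev x) * w x - (Nat.card (H i) : ℂ)⁻¹ * U)‖ ≤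
      (rest.card - 1 + δ) * (θ * (2 ^ core.card * B)) := by
    refine (norm_sum_le _ _).trans ((Finset.sum_le_sum h3).trans (le_of_eq ?_))
    rw [← Finset.sum_mul, Finset.sum_sub_distrib, hδ]
    simp
  have h5 : ‖Z - δ * (θ * X.card)‖ ≤ δ * (θ * ((2 ^ core.card - 1) * B)) +
      (rest.card - 1 + δ) * (θ * (2 ^ core.card * B)) := by
    have : Z - δ * (θ * X.card) = δ * (U - θ * X.card) -
      ∑ i ∈ rest, (∑ x ∈ X, avg (H i) (ev x) * w x - (Nat.card (H i) : ℂ)⁻¹ * U) := by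
      rw [hZe]; ring
    rw [this]
    refine (norm_sub_le _ _).trans (add_le_add ?_ h4)
    rw [norm_mul, Complex.norm_real, Real.norm_of_nonneg hδ0.le]
    exact mul_le_mul_of_nonneg_left h2 hδ0.le
  have h6 : 0 < Z.re := by
    have e1 := (Complex.abs_re_le_norm _).trans h5
    rw [abs_le] at e1
    have e2 : (Z - δ * (θ * X.card)).re = Z.re - δ * (θ * X.card) := by
      have : ((δ : ℂ) * (θ * X.card)) = ((δ * (θ * X.card) : ℝ) : ℂ) := by push_cast; rfl
      rw [Complex.sub_re, this, Complex.ofReal_re]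
    rw [e2] at e1
    have e3 := mul_lt_mul_of_pos_left hineq hθ0
    nlinarith [e1.1]
  obtain ⟨x, hx, hpos⟩ : ∃ x ∈ X, 0 < (w x * (1 - ∑ i ∈ rest, avg (H i) (ev x))).re := by
    by_contra hcon
    push Not at hcon
    rw [hZ, Complex.re_sum] at h6
    exact absurd h6 (not_lt.2 (Finset.sum_nonpos hcon))
  refine ⟨x, hx, ?_⟩
  have hcore : ∀ i ∈ core, avg (H i) (ev x) = 0 := by
    intro i hi
    rcases avg_eq (H i) (ev x) with h | h
    · exfalso
      have : w x = 0 := Finset.prod_eq_zero hi (by rw [h.2, sub_self])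
      rw [this] at hpos; simp at hpos
    · exact h.2
  have hw1 : w x = 1 := by
    rw [hw]; exact Finset.prod_eq_one fun i hi => by rw [hcore i hi, sub_zero]
  have hre : ∀ i, 0 ≤ (avg (H i) (ev x)).re := by
    intro i
    rcases avg_eq (H i) (ev x) with h | h <;> rw [h.2] <;> simp
  intro i hi
  rcases avg_eq (H i) (ev x) with h | h
  · exfalso
    rcases Finset.mem_union.1 hi with hi | hi
    · have := hcore i hi
      rw [h.2] at this; exact one_ne_zero this
    · rw [hw1, one_mul, Complex.sub_re, Complex.re_sum, Complex.one_re] at hpos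
      have := Finset.single_le_sum (f := fun i => (avg (H i) (ev x)).re) (fun i _ => hre i) hi
      simp only [h.2, Complex.one_re] at this
      linarith
  · exact h.1

end Stp

end

section

open Polynomial

namespace Stp

theorem T_bound {F E : Type*} [Field F] [Fintype F] [Field E] [Fintype E] [Algebra F E]
    [DecidableEq F] (a : F) (χ1 χ2 : MulChar E ℂ) (h : χ1 ≠ 1 ∨ χ2 ≠ 1) :
    ‖∑ x : E, (if Algebra.trace F E x = a then χ1 x * χ2 (x + x⁻¹) else 0)‖ ≤
      3 * Real.sqrt (Fintype.card E) := by
  classical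
  have hq : (0 : ℝ) < Fintype.card F := by exact_mod_cast Fintype.card_pos
  have hqc : (Fintype.card F : ℂ) ≠ 0 := by exact_mod_cast hq.ne'
  have h' : χ1 * χ2⁻¹ ≠ 1 ∨ χ2 ≠ 1 := by
    by_contra hcon
    push Not at hcon
    obtain ⟨h1, h2⟩ := hcon
    rw [h2, inv_one, mul_one] at h1
    tauto
  have e1 : ∀ x : E, (if Algebra.trace F E x = a then χ1 x * χ2 (x + x⁻¹) else 0) =
      (Fintype.card F : ℂ)⁻¹ * ∑ φ : AddChar F ℂ, φ (-a) *
        ((χ1 * χ2⁻¹) x * χ2 (x ^ 2 + 1) *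
          (φ.compAddMonoidHom (Algebra.trace F E).toAddMonoidHom) x) := by
    intro x
    have e2 : χ1 x * χ2 (x + x⁻¹) = (χ1 * χ2⁻¹) x * χ2 (x ^ 2 + 1) := by
      by_cases hx : x = 0
      · subst hx
        rw [MulChar.mul_apply, MulChar.map_nonunit χ1 not_isUnit_zero]; simp
      · rw [MulChar.mul_apply, MulChar.inv_apply', mul_assoc, ← map_mul]
        congr 2
        field_simp
    have e3 : ∑ φ : AddChar F ℂ, φ (-a) * ((χ1 * χ2⁻¹) x * χ2 (x ^ 2 + 1) *
          (φ.compAddMonoidHom (Algebra.trace F E).toAddMonoidHom) x) =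
        ((χ1 * χ2⁻¹) x * χ2 (x ^ 2 + 1)) * ∑ φ : AddChar F ℂ, φ (Algebra.trace F E x - a) := by
      rw [Finset.mul_sum]
      refine Finset.sum_congr rfl fun φ _ => ?_
      rw [sub_eq_add_neg, AddChar.map_add_eq_mul]
      simp only [AddChar.compAddMonoidHom_apply]
      have : (Algebra.trace F E).toAddMonoidHom x = Algebra.trace F E x := rfl
      rw [this]; ring
    rw [e3, AddChar.sum_apply_eq_ite, e2]
    by_cases hx : Algebra.trace F E x = a
    · rw [if_pos hx, if_pos (sub_eq_zero.2 hx)]; field_simp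
    · rw [if_neg hx, if_neg (fun h => hx (sub_eq_zero.1 h))]; simp
  rw [Finset.sum_congr rfl (fun x _ => e1 x), ← Finset.mul_sum, Finset.sum_comm, norm_mul, norm_inv,
    RCLike.norm_natCast, inv_mul_le_iff₀ hq]
  refine (norm_sum_le _ _).trans ?_
  have : ∀ φ ∈ (Finset.univ : Finset (AddChar F ℂ)), ‖∑ x : E, φ (-a) *
        ((χ1 * χ2⁻¹) x * χ2 (x ^ 2 + 1) *
          (φ.compAddMonoidHom (Algebra.trace F E).toAddMonoidHom) x)‖ ≤
          3 * Real.sqrt (Fintype.card E) := by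
    intro φ _
    rw [← Finset.mul_sum, norm_mul, norm_addChar_le, one_mul]
    exact weil _ _ h' _
  refine (Finset.sum_le_card_nsmul _ _ _ this).trans (le_of_eq ?_)
  rw [Finset.card_univ, AddChar.card_eq, nsmul_eq_mul]

theorem card_X {F E : Type*} [Field F] [Fintype F] [Field E] [Fintype E] [Algebra F E]
    [DecidableEq F] [DecidableEq E] (q : ℕ) (hF : Fintype.card F = q) (hE : Fintype.card E = q ^ 3)
    (a : F) :
    q ^ 2 ≤ (Finset.univ.filter (fun x : {x : E // x ≠ 0 ∧ x ^ 2 + 1 ≠ 0} =>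
      Algebra.trace F E x = a)).card + 3 := by
  classical
  have hq : 0 < q := by rw [← hF]; exact Fintype.card_pos
  have : Module.Finite F E := Module.Finite.of_finite
  have hsurj := Algebra.trace_surjective F E
  have h1 : (Finset.univ.filter (fun x : E => Algebra.trace F E x = a)).card = q ^ 2 := by
    have h2 : ∀ b : F, (Finset.univ.filter (fun x : E => Algebra.trace F E x = b)).card =
        (Finset.univ.filter (fun x : E => Algebra.trace F E x = a)).card := fun b =>
      AddMonoidHom.card_fiber_eq_of_mem_range (Algebra.trace F E).toAddMonoidHom
        (hsurj b) (hsurj a)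
    have h3 := Finset.card_eq_sum_card_fiberwise (f := fun x : E => Algebra.trace F E x)
      (s := Finset.univ) (t := Finset.univ) (fun x _ => by simp)
    rw [Finset.card_univ, hE, Finset.sum_congr rfl (fun b _ => h2 b), Finset.sum_const,
      Finset.card_univ, hF, smul_eq_mul] at h3
    apply Nat.eq_of_mul_eq_mul_left hq
    rw [← h3]; ring
  rw [← h1, ← Finset.card_map (Function.Embedding.subtype (fun x : E => x ≠ 0 ∧ x ^ 2 + 1 ≠ 0))]
  have h4 : (X * (X ^ 2 + 1) : E[X]).natDegree = 3 := by
    rw [natDegree_mul X_ne_zero monic_X2.ne_zero, natDegree_X, natDegree_X2]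
  have h0 : (X * (X ^ 2 + 1) : E[X]) ≠ 0 := mul_ne_zero X_ne_zero monic_X2.ne_zero
  have h5 : (X * (X ^ 2 + 1) : E[X]).roots.toFinset.card ≤ 3 :=
    (Multiset.toFinset_card_le _).trans ((card_roots' _).trans h4.le)
  refine le_trans ?_ (Nat.add_le_add_left h5 _)
  refine le_trans (Finset.card_le_card ?_) (Finset.card_union_le _ _)
  intro x hx
  simp only [Finset.mem_filter, Finset.mem_univ, true_and] at hx
  by_cases hx0 : x ≠ 0 ∧ x ^ 2 + 1 ≠ 0
  · refine Finset.mem_union_left _ (Finset.mem_map.2 ⟨⟨x, hx0⟩, by simp [hx], rfl⟩)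
  · refine Finset.mem_union_right _ ?_
    rw [Multiset.mem_toFinset, mem_roots h0, IsRoot]
    simp only [eval_mul, eval_X, eval_add, eval_pow, eval_one, mul_eq_zero]
    tauto

theorem isCyclic_mulChar (E : Type*) [Field E] [Fintype E] : IsCyclic (MulChar E ℂ) := by
  obtain ⟨φ⟩ := MulChar.mulEquiv_units E ℂ
  exact isCyclic_of_surjective φ.symm φ.symm.surjective

theorem card_mulChar (E : Type*) [Field E] [Fintype E] :
    Nat.card (MulChar E ℂ) = Fintype.card E - 1 := by
  classical
  rw [MulChar.card_eq_card_units_of_hasEnoughRootsOfUnity, Nat.card_eq_fintype_card,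
    Fintype.card_units]

theorem order_of_chars {E : Type*} [Field E] [Fintype E] (x : E) (hx : x ≠ 0)
    (h : ∀ p, p.Prime → p ∣ Fintype.card E - 1 → ∃ χ : MulChar E ℂ, χ ^ p = 1 ∧ χ x ≠ 1) :
    orderOf x = Fintype.card E - 1 := by
  have hn : 0 < Fintype.card E - 1 := by have := Fintype.one_lt_card (α := E); omega
  apply orderOf_eq_of_pow_and_pow_div_prime hn (FiniteField.pow_card_sub_one_eq_one x hx)
  intro p hp hpd hcon
  obtain ⟨χ, h1, h2⟩ := h p hp hpd
  have := isCyclic_mulChar E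
  obtain ⟨g, hg⟩ := IsCyclic.exists_generator (α := MulChar E ℂ)
  have hgo : orderOf g = Fintype.card E - 1 := by
    rw [orderOf_eq_card_of_forall_mem_zpowers hg, card_mulChar]
  obtain ⟨k, hk⟩ := mem_powers_iff_mem_zpowers.2 (hg χ)
  simp only at hk
  apply h2
  rw [← hk, ← pow_mul, ← orderOf_dvd_iff_pow_eq_one, hgo] at h1
  obtain ⟨m, hm⟩ := hpd
  rw [hm, Nat.mul_div_cancel_left _ hp.pos] at hcon
  rw [hm, mul_comm k] at h1
  obtain ⟨j, hj⟩ := Nat.dvd_of_mul_dvd_mul_left hp.pos h1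
  have hk0 : (g ^ k) x = g x ^ k := by
    by_cases hk0 : k = 0
    · subst hk0; rw [pow_zero, pow_zero]; exact MulChar.one_apply (isUnit_iff_ne_zero.2 hx)
    · exact MulChar.pow_apply' g hk0 x
  rw [← hk, hk0, ← map_pow, hj, pow_mul, hcon]; simp

end Stp

end

section

open Polynomial

namespace Stp

/-- characters supported at `b`, of order dividing `p` -/
def HH (E : Type*) [Field E] (i : Bool × ℕ) : Subgroup (Bool → MulChar E ℂ) where
  carrier := {γ | (γ i.1) ^ i.2 = 1 ∧ γ (!i.1) = 1}
  mul_mem' := by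
    rintro x y ⟨h1, h2⟩ ⟨h3, h4⟩
    refine ⟨?_, ?_⟩
    · rw [Pi.mul_apply, mul_pow, h1, h3, one_mul]
    · rw [Pi.mul_apply, h2, h4, one_mul]
  one_mem' := by simp
  inv_mem' := by
    rintro x ⟨h1, h2⟩
    refine ⟨?_, ?_⟩
    · rw [Pi.inv_apply, inv_pow, h1, inv_one]
    · rw [Pi.inv_apply, h2, inv_one]

theorem mem_HH {E : Type*} [Field E] (i : Bool × ℕ) (γ : Bool → MulChar E ℂ) :
    γ ∈ HH E i ↔ (γ i.1) ^ i.2 = 1 ∧ γ (!i.1) = 1 := Iff.rfl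

theorem card_HH {E : Type*} [Field E] [Fintype E] (b : Bool) (p : ℕ)
    (hp : p ∣ Fintype.card E - 1) : Nat.card (HH E (b, p)) = p := by
  have hc := isCyclic_mulChar E
  have h := IsCyclic.card_powMonoidHom_ker (G := MulChar E ℂ) p
  rw [card_mulChar, Nat.gcd_eq_right hp] at h
  refine Eq.trans ?_ h
  have hb : b ≠ !b := by cases b <;> simp
  refine Nat.card_congr ⟨fun γ => ⟨γ.1 b, ?_⟩, fun χ => ⟨Function.update 1 b χ.1, ?_⟩, ?_, ?_⟩
  · exact γ.2.1
  · refine ⟨?_, ?_⟩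
    · simp only [Function.update_self]; exact χ.2
    · simp only; rw [Function.update_of_ne hb.symm]; rfl
  · intro γ
    ext1
    funext c
    by_cases hcb : c = b
    · subst hcb; simp
    · have : c = !b := by cases b <;> cases c <;> simp_all
      simp only [Function.update_of_ne hcb]
      subst this
      exact (γ.2.2).symm
  · intro χ
    ext1; simp

theorem indep_HH {E : Type*} [Field E] [Fintype E] (S : Finset (Bool × ℕ))
    (hS : ∀ i ∈ S, i.2.Prime) (i : Bool × ℕ) (hi : i ∈ S) (t : Finset (Bool × ℕ)) (ht : t ⊆ S)
    (hit : i ∉ t) : Disjoint (HH E i) (⨆ j ∈ t, HH E j) := by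
  classical
  set m := ∏ j ∈ t.filter (fun j => j.1 = i.1), j.2 with hm
  have hcop : Nat.Coprime i.2 m := by
    apply Nat.Coprime.prod_right
    intro j hj
    rw [Finset.mem_filter] at hj
    rw [Nat.coprime_primes (hS i hi) (hS j (ht hj.1))]
    intro h
    apply hit
    have : i = j := Prod.ext hj.2.symm h
    rw [this]; exact hj.1
  have hle : (⨆ j ∈ t, HH E j) ≤
      (powMonoidHom m : MulChar E ℂ →* MulChar E ℂ).ker.comap (Pi.evalMonoidHom _ i.1) := by
    refine iSup₂_le fun j hj γ hγ => ?_
    rw [Subgroup.mem_comap, MonoidHom.mem_ker, powMonoidHom_apply, Pi.evalMonoidHom_apply]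
    by_cases hji : j.1 = i.1
    · have hd : j.2 ∣ m := Finset.dvd_prod_of_mem (fun j : Bool × ℕ => j.2)
        (Finset.mem_filter.2 ⟨hj, hji⟩)
      obtain ⟨c, hc⟩ := hd
      rw [hc, pow_mul, ← hji, hγ.1, one_pow]
    · have : i.1 = !j.1 := by
        rcases i with ⟨_ | _, _⟩ <;> rcases j with ⟨_ | _, _⟩ <;> simp_all
      rw [this, hγ.2, one_pow]
  rw [Subgroup.disjoint_def]
  intro γ h1 h2
  have h3 := hle h2
  rw [Subgroup.mem_comap, MonoidHom.mem_ker, powMonoidHom_apply, Pi.evalMonoidHom_apply] at h3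
  have h4 : γ i.1 = 1 := by
    have h5 := orderOf_dvd_iff_pow_eq_one.2 h1.1
    have h6 := orderOf_dvd_iff_pow_eq_one.2 h3
    have h7 := Nat.dvd_gcd h5 h6
    rw [hcop] at h7
    exact orderOf_eq_one_iff.1 (Nat.dvd_one.1 h7)
  funext c
  by_cases hc : c = i.1
  · rw [hc, h4]; rfl
  · have : c = !i.1 := by
      rcases i with ⟨_ | _, _⟩ <;> cases c <;> simp_all
    rw [this, h1.2]; rfl

/-- evaluation of a pair of characters -/
noncomputable def evv {E : Type*} [Field E] (x : {x : E // x ≠ 0 ∧ x ^ 2 + 1 ≠ 0}) :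
    (Bool → MulChar E ℂ) →* ℂ where
  toFun γ := γ false x.1 * γ true (x.1 + x.1⁻¹)
  map_one' := by
    have h1 : x.1 + x.1⁻¹ ≠ 0 := by
      have h2 := x.2.1
      have h3 := x.2.2
      intro h
      apply h3
      have : x.1 * (x.1 + x.1⁻¹) = 0 := by rw [h, mul_zero]
      rw [mul_add, mul_inv_cancel₀ h2] at this
      rw [sq]; exact this
    rw [Pi.one_apply, Pi.one_apply, MulChar.one_apply (isUnit_iff_ne_zero.2 x.2.1),
      MulChar.one_apply (isUnit_iff_ne_zero.2 h1), one_mul]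
  map_mul' γ γ' := by
    simp only [Pi.mul_apply, MulChar.mul_apply]; ring

theorem criterion (q : ℕ) (hq : 2 ≤ q)
    (F E : Type*) [Field F] [Fintype F] [Field E] [Fintype E] [Algebra F E]
    (hF : Fintype.card F = q) (hE : Fintype.card E = q ^ 3) (a : F)
    (core rest : Finset ℕ) (hdis : Disjoint core rest)
    (hun : core ∪ rest = (q ^ 3 - 1).primeFactors)
    (δ : ℝ) (hδ : δ = 1 - 2 * ∑ p ∈ rest, (p : ℝ)⁻¹) (hδ0 : 0 < δ)
    (hineq : 3 * 4 ^ core.card * (2 * δ + 2 * rest.card - 1) ≤ δ * Real.sqrt q) :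
    ∃ ξ : E, orderOf ξ = q ^ 3 - 1 ∧ orderOf (ξ + ξ⁻¹) = q ^ 3 - 1 ∧ Algebra.trace F E ξ = a := by
  classical
  have hfin : Finite (MulChar E ℂ) := inferInstance
  letI : Fintype (Bool → MulChar E ℂ) := Fintype.ofFinite _
  set X := (Finset.univ.filter (fun x : {x : E // x ≠ 0 ∧ x ^ 2 + 1 ≠ 0} =>
      Algebra.trace F E x = a)) with hX
  have hXc := card_X q hF hE a
  set B : ℝ := 3 * Real.sqrt (Fintype.card E) with hB
  have hun2 : (Finset.univ : Finset Bool) ×ˢ core ∪ (Finset.univ : Finset Bool) ×ˢ rest =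
      (Finset.univ : Finset Bool) ×ˢ (q ^ 3 - 1).primeFactors := by
    rw [← Finset.product_union, hun]
  have hq3 : q ^ 3 - 1 ≠ 0 := by
    have : 2 ^ 3 ≤ q ^ 3 := Nat.pow_le_pow_left hq 3
    omega
  have hdvd : ∀ i : Bool × ℕ, i ∈ (Finset.univ : Finset Bool) ×ˢ (q ^ 3 - 1).primeFactors →
      i.2.Prime ∧ i.2 ∣ Fintype.card E - 1 := by
    intro i hi
    rw [Finset.mem_product] at hi
    rw [hE]
    exact ⟨Nat.prime_of_mem_primeFactors hi.2, Nat.dvd_of_mem_primeFactors hi.2⟩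
  have hsub : ∀ i : Bool × ℕ, i ∈ (Finset.univ : Finset Bool) ×ˢ (q ^ 3 - 1).primeFactors →
      Nat.card (HH E i) = i.2 := fun i hi => card_HH i.1 i.2 (hdvd i hi).2
  obtain ⟨x, hxX, hx⟩ := sieve X evv (HH E) B (by
      intro γ hγ
      have h : γ false ≠ 1 ∨ γ true ≠ 1 := by
        by_contra hcon
        push Not at hcon
        apply hγ
        funext b
        cases b
        · exact hcon.1
        · exact hcon.2
      refine le_trans (le_of_eq ?_) (T_bound a (γ false) (γ true) h)
      congr 1
      rw [hX, Finset.sum_filter]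
      rw [← Fintype.sum_subtype_add_sum_subtype (fun x : E => x ≠ 0 ∧ x ^ 2 + 1 ≠ 0)
        (fun x : E => (if Algebra.trace F E x = a then γ false x * γ true (x + x⁻¹) else 0))]
      rw [Finset.sum_eq_zero (s := (Finset.univ : Finset {x : E // ¬ (x ≠ 0 ∧ x ^ 2 + 1 ≠ 0)})),
        add_zero]
      · rfl
      · rintro ⟨x, hx⟩ -
        simp only
        split_ifs with htr
        · by_cases hx0 : x = 0
          · rw [hx0, MulChar.map_nonunit (γ false) not_isUnit_zero, zero_mul]
          · have hx1 : x ^ 2 + 1 = 0 := by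
              by_contra hh; exact hx ⟨hx0, hh⟩
            have : x + x⁻¹ = 0 := by
              field_simp; simpa using hx1
            rw [this, MulChar.map_nonunit (γ true) not_isUnit_zero, mul_zero]
        · rfl)
    ((Finset.univ : Finset Bool) ×ˢ core) ((Finset.univ : Finset Bool) ×ˢ rest)
    (by
      rw [Finset.disjoint_left] at hdis ⊢
      intro i h1 h2
      rw [Finset.mem_product] at h1 h2
      exact hdis h1.2 h2.2)
    (by
      intro i hi
      rw [hun2] at hi
      rw [hsub i hi]
      exact (hdvd i hi).1.one_lt)
    (by
      intro i hi t ht hit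
      rw [hun2] at hi ht
      exact indep_HH _ (fun j hj => (hdvd j hj).1) i hi t ht hit)
    δ (by
      rw [hδ, Finset.sum_product]
      have : ∀ b : Bool, ∑ p ∈ rest, (Nat.card (HH E (b, p)) : ℝ)⁻¹ = ∑ p ∈ rest, (p : ℝ)⁻¹ := by
        intro b
        refine Finset.sum_congr rfl fun p hp => ?_
        rw [hsub (b, p)]
        rw [← hun]
        exact Finset.mem_product.2 ⟨Finset.mem_univ _, Finset.mem_union_right _ hp⟩
      rw [Finset.sum_congr rfl (fun b _ => this b)]
      simp) hδ0
    (by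
      have hc1 : ((Finset.univ : Finset Bool) ×ˢ core).card = 2 * core.card := by
        rw [Finset.card_product]; simp
      have hc2 : (((Finset.univ : Finset Bool) ×ˢ rest).card : ℝ) = 2 * rest.card := by
        rw [Finset.card_product]; simp
      rw [hc1, hc2, pow_mul]
      have hq0 : (0 : ℝ) < q := by exact_mod_cast (by omega : 0 < q)
      have hB' : B = 3 * ((q : ℝ) * Real.sqrt q) := by
        rw [hB, hE]
        push_cast
        congr 1
        rw [show (q : ℝ) ^ 3 = q ^ 2 * q by ring, Real.sqrt_mul (by positivity),
          Real.sqrt_sq hq0.le]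
      have hs2 : Real.sqrt q * Real.sqrt q = q := Real.mul_self_sqrt hq0.le
      have hs1 : 1 ≤ Real.sqrt q := by
        rw [Real.one_le_sqrt]; exact_mod_cast (by omega : 1 ≤ q)
      have hB3 : 3 < B := by
        rw [hB']
        have : (2 : ℝ) ≤ q := by exact_mod_cast hq
        nlinarith
      have hXr : (q : ℝ) ^ 2 ≤ X.card + 3 := by exact_mod_cast hXc
      calc ((2 : ℝ) ^ 2) ^ core.card * B * (2 * δ + 2 * rest.card - 1)
          = (3 * 4 ^ core.card * (2 * δ + 2 * rest.card - 1)) * (q * Real.sqrt q) := by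
            rw [hB']; norm_num; ring
        _ ≤ (δ * Real.sqrt q) * (q * Real.sqrt q) := by
            apply mul_le_mul_of_nonneg_right hineq (by positivity)
        _ = δ * q ^ 2 := by
            linear_combination δ * q * hs2
        _ < δ * (X.card + B) := by
            apply mul_lt_mul_of_pos_left _ hδ0
            linarith)
  rw [hX, Finset.mem_filter] at hxX
  have key : ∀ b : Bool, ∀ p, p.Prime → p ∣ Fintype.card E - 1 →
      ∃ h ∈ HH E (b, p), evv x h ≠ 1 := by
    intro b p hp hpd
    apply hx
    rw [hun2, Finset.mem_product]
    rw [hE] at hpd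
    exact ⟨Finset.mem_univ _, Nat.mem_primeFactors.2 ⟨hp, hpd, hq3⟩⟩
  have hx0 := x.2.1
  have hx1 : x.1 + x.1⁻¹ ≠ 0 := by
    have h3 := x.2.2
    intro h
    apply h3
    have : x.1 * (x.1 + x.1⁻¹) = 0 := by rw [h, mul_zero]
    rw [mul_add, mul_inv_cancel₀ hx0] at this
    rw [sq]; exact this
  refine ⟨x.1, ?_, ?_, hxX.2⟩
  · rw [← hE]
    apply order_of_chars x.1 hx0
    intro p hp hpd
    obtain ⟨h, h1, h2⟩ := key false p hp hpd
    refine ⟨h false, h1.1, fun hc => h2 ?_⟩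
    have h3 : h true = 1 := h1.2
    change h false x.1 * h true (x.1 + x.1⁻¹) = 1
    rw [hc, h3, MulChar.one_apply (isUnit_iff_ne_zero.2 hx1), one_mul]
  · rw [← hE]
    apply order_of_chars _ hx1
    intro p hp hpd
    obtain ⟨h, h1, h2⟩ := key true p hp hpd
    refine ⟨h true, h1.1, fun hc => h2 ?_⟩
    have h3 : h false = 1 := h1.2
    change h false x.1 * h true (x.1 + x.1⁻¹) = 1
    rw [hc, h3, MulChar.one_apply (isUnit_iff_ne_zero.2 hx0), one_mul]

end Stp

end

section

namespace Stp

/-- the sieve condition -/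
def Good (q : ℕ) : Prop := ∃ core rest : Finset ℕ, ∃ δ : ℝ, Disjoint core rest ∧
  core ∪ rest = (q ^ 3 - 1).primeFactors ∧ δ = 1 - 2 * ∑ p ∈ rest, (p : ℝ)⁻¹ ∧ 0 < δ ∧
  3 * 4 ^ core.card * (2 * δ + 2 * rest.card - 1) ≤ δ * Real.sqrt q

/-- upper bound for a million divided by `p` -/
def iv (p : ℕ) : ℕ := 1000000 / p + 1

/-- sum of `iv` -/
def rs : List ℕ → ℕ
  | [] => 0
  | p :: l => iv p + rs l

/-- product of a list -/
def pr : List ℕ → ℕ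
  | [] => 1
  | p :: l => p * pr l

theorem pr_eq (l : List ℕ) : pr l = l.prod := by
  induction l with
  | nil => rfl
  | cons a l ih => rw [pr, ih, List.prod_cons]

/-- test with `k` primes in the core, `s` others, of inverse sum at most `r` millionths -/
def tst (k s r e Q : ℕ) : Bool :=
  Nat.ble (2 * r + 1) 1000000 && (Nat.ble 1000000 (2 * s * 1000000 + 2 * (1000000 - 2 * r)) &&
    Nat.ble ((3 * 4 ^ k * (2 * s * 1000000 + 2 * (1000000 - 2 * r) - 1000000)) ^ (2 * e))
      ((1000000 - 2 * r) ^ (2 * e) * Q))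

theorem rs_le (R l : List ℕ) (h : List.Forall₂ (· ≤ ·) R l) (hR : ∀ x ∈ R, 0 < x) :
    (l.map (fun p : ℕ => (p : ℝ)⁻¹)).sum ≤ (rs R : ℝ) / 1000000 := by
  induction h with
  | nil => simp [rs]
  | @cons a b R l hab _ ih =>
    have ih' := ih (fun x hx => hR x (List.mem_cons_of_mem _ hx))
    have ha : 0 < a := hR a List.mem_cons_self
    rw [List.map_cons, List.sum_cons, rs]
    push_cast
    rw [add_div]
    refine add_le_add ?_ ih'
    have ha' : (0 : ℝ) < a := by exact_mod_cast ha
    have hab' : (a : ℝ) ≤ b := by exact_mod_cast hab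
    have h1 : (b : ℝ)⁻¹ ≤ (a : ℝ)⁻¹ := inv_anti₀ ha' hab'
    refine h1.trans ?_
    rw [inv_le_iff_one_le_mul₀ ha', iv]
    have h2 : 1000000 ≤ (1000000 / a + 1) * a := by
      have := Nat.lt_div_mul_add (a := 1000000) ha
      nlinarith
    have h3 : (1000000 : ℝ) ≤ ((1000000 / a : ℕ) + 1) * a := by exact_mod_cast h2
    push_cast
    linarith

theorem good_of_lists (q : ℕ) (lK lR : List ℕ) (R : List ℕ)
    (hnd : (lK ++ lR).Nodup) (hS : (lK ++ lR).toFinset = (q ^ 3 - 1).primeFactors)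
    (hR : List.Forall₂ (· ≤ ·) R lR) (hR0 : ∀ x ∈ R, 0 < x) (e Q : ℕ) (he : e ≠ 0)
    (hQ : Q ≤ q ^ e) (h : tst lK.length R.length (rs R) e Q = true) : Good q := by
  classical
  rw [List.nodup_append'] at hnd
  obtain ⟨n1, n2, n3⟩ := hnd
  have hsum : ∑ p ∈ lR.toFinset, (p : ℝ)⁻¹ = (lR.map (fun p : ℕ => (p : ℝ)⁻¹)).sum :=
    List.sum_toFinset _ n2
  have hle := rs_le R lR hR hR0
  rw [← hsum] at hle
  set σ := ∑ p ∈ lR.toFinset, (p : ℝ)⁻¹ with hσ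
  rw [tst, Bool.and_eq_true, Bool.and_eq_true, Nat.ble_eq, Nat.ble_eq, Nat.ble_eq] at h
  obtain ⟨h1, h2, h3⟩ := h
  obtain ⟨r, hr⟩ : ∃ r, r = rs R := ⟨_, rfl⟩
  obtain ⟨s, hs⟩ : ∃ s, s = R.length := ⟨_, rfl⟩
  obtain ⟨k, hk⟩ : ∃ k, k = lK.length := ⟨_, rfl⟩
  rw [← hr] at h1 h2 h3 hle
  rw [← hs] at h2 h3
  rw [← hk] at h3
  obtain ⟨D, hD⟩ : ∃ D, D = 1000000 - 2 * r := ⟨_, rfl⟩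
  rw [← hD] at h2 h3
  have hDr : (D : ℝ) = 1000000 - 2 * r := by
    have : D + 2 * r = 1000000 := by omega
    have h' : (D : ℝ) + 2 * r = 1000000 := by exact_mod_cast this
    linarith
  have hD0 : 0 < D := by omega
  have hD0' : (0 : ℝ) < D := by exact_mod_cast hD0
  obtain ⟨Y, hY⟩ : ∃ Y, Y = 2 * s * 1000000 + 2 * D - 1000000 := ⟨_, rfl⟩
  rw [← hY] at h3
  have hYr : (Y : ℝ) = 2 * s * 1000000 + 2 * D - 1000000 := by
    have : Y + 1000000 = 2 * s * 1000000 + 2 * D := by omega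
    have h' : (Y : ℝ) + 1000000 = 2 * s * 1000000 + 2 * D := by exact_mod_cast this
    linarith
  clear hD hY h1 h2
  have key : (3 * 4 ^ k * Y : ℝ) ≤ D * Real.sqrt q := by
    have h4 : ((3 * 4 ^ k * Y : ℕ) : ℝ) ^ (2 * e) ≤ (D : ℝ) ^ (2 * e) * (q : ℝ) ^ e := by
      have := h3.trans (Nat.mul_le_mul_left _ hQ)
      exact_mod_cast this
    have h5 : (D : ℝ) ^ (2 * e) * (q : ℝ) ^ e = (D * Real.sqrt q) ^ (2 * e) := by
      rw [mul_pow, pow_mul (Real.sqrt q), Real.sq_sqrt (Nat.cast_nonneg q)]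
    rw [h5] at h4
    have := le_of_pow_le_pow_left₀ (by omega) (by positivity) h4
    exact_mod_cast this
  have hlen : lR.length = s := hR.length_eq.symm.trans hs.symm
  refine ⟨lK.toFinset, lR.toFinset, 1 - 2 * σ, ?_, ?_, rfl, ?_, ?_⟩
  · rw [Finset.disjoint_left]
    intro a ha hb
    rw [List.mem_toFinset] at ha hb
    exact n3 ha hb
  · rw [← hS, List.toFinset_append]
  · linarith
  · rw [List.toFinset_card_of_nodup n1, List.toFinset_card_of_nodup n2, hlen, ← hk]
    have hdle : (D : ℝ) / 1000000 ≤ 1 - 2 * σ := by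
      rw [hDr]; linarith
    have hkey2 : 3 * 4 ^ k * (2 * ((D : ℝ) / 1000000) + 2 * s - 1) ≤
        ((D : ℝ) / 1000000) * Real.sqrt q := by
      have : 3 * 4 ^ k * (2 * ((D : ℝ) / 1000000) + 2 * s - 1) = 3 * 4 ^ k * (Y : ℝ) / 1000000 := by
        rw [hYr]; ring
      rw [this, div_mul_eq_mul_div]
      gcongr
    clear h3
    rcases Nat.eq_zero_or_pos s with hs0 | hs0
    · have hl0 : lR = [] := List.length_eq_zero_iff.1 (hlen.trans hs0)
      have hR0' : R = [] := List.length_eq_zero_iff.1 (hs.symm.trans hs0)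
      have hr0 : r = 0 := by rw [hr, hR0']; rfl
      have hσ0 : σ = 0 := by rw [hσ, hl0]; simp
      have hD1 : (D : ℝ) / 1000000 = 1 := by rw [hDr, hr0]; norm_num
      rw [hD1] at hkey2
      rw [hσ0]
      simpa using hkey2
    · have hs1 : (1 : ℝ) ≤ s := by exact_mod_cast hs0
      have hd0 : 0 < (D : ℝ) / 1000000 := by positivity
      obtain ⟨d, hd⟩ : ∃ d, d = (D : ℝ) / 1000000 := ⟨_, rfl⟩
      rw [← hd] at hd0 hkey2 hdle
      have h4k : (0 : ℝ) < 3 * 4 ^ k := by positivity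
      have h6 : 0 ≤ d * (Real.sqrt q - 2 * (3 * 4 ^ k)) := by
        have : 0 ≤ 3 * 4 ^ k * (2 * (s : ℝ) - 1) := by
          apply mul_nonneg h4k.le; linarith
        nlinarith
      have h7 : 0 ≤ Real.sqrt q - 2 * (3 * 4 ^ k) := by
        by_contra hc
        push Not at hc
        nlinarith
      nlinarith [mul_le_mul_of_nonneg_right hdle h7]

theorem good_imp (q : ℕ) (hq : 2 ≤ q) (hg : Good q)
    (F E : Type*) [Field F] [Fintype F] [Field E] [Fintype E] [Algebra F E]
    (hF : Fintype.card F = q) (hE : Fintype.card E = q ^ 3) (a : F) :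
    ∃ ξ : E, orderOf ξ = q ^ 3 - 1 ∧ orderOf (ξ + ξ⁻¹) = q ^ 3 - 1 ∧ Algebra.trace F E ξ = a := by
  obtain ⟨core, rest, δ, h1, h2, h3, h4, h5⟩ := hg
  exact criterion q hq F E hF hE a core rest h1 h2 δ h3 h4 h5

/-- a strictly sorted list is bounded below by the candidates -/
theorem dom_take (B : ℕ) : ∀ (cs l : List ℕ), cs.SortedLT → l.SortedLT →
    (∀ x ∈ l, x ∈ cs ∨ B ≤ x) → (∀ x ∈ cs, x ≤ B) → l.length ≤ cs.length →
    List.Forall₂ (· ≤ ·) (cs.take l.length) l := by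
  intro cs
  induction cs with
  | nil =>
    intro l _ _ _ _ hl
    have : l = [] := by
      apply List.length_eq_zero_iff.1; simpa using hl
    subst this; simp
  | cons c cs ih =>
    intro l hcs hl hmem hB hlen
    cases l with
    | nil => simp
    | cons a l =>
      rw [List.sortedLT_iff_pairwise, List.pairwise_cons] at hcs hl
      have hca : c ≤ a := by
        rcases hmem a List.mem_cons_self with h | h
        · rcases List.mem_cons.1 h with h | h
          · exact h.ge
          · exact (hcs.1 a h).le
        · exact (hB c List.mem_cons_self).trans h
      rw [List.length_cons, List.take_succ_cons]
      refine List.Forall₂.cons hca (ih l hcs.2.sortedLT hl.2.sortedLT ?_ ?_ ?_)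
      · intro x hx
        rcases hmem x (List.mem_cons_of_mem _ hx) with h | h
        · rcases List.mem_cons.1 h with h | h
          · have := hl.1 x hx; omega
          · exact Or.inl h
        · exact Or.inr h
      · exact fun x hx => hB x (List.mem_cons_of_mem _ hx)
      · simpa using hlen

theorem pr_le (L l : List ℕ) (h : List.Forall₂ (· ≤ ·) L l) : pr L ≤ pr l := by
  induction h with
  | nil => exact le_rfl
  | cons hab _ ih => exact Nat.mul_le_mul hab ih

end Stp

end

section

namespace Stp

/-- the first 200 primes -/
def PL : List ℕ :=
  [2, 3, 5, 7, 11, 13, 17, 19, 23, 29, 31, 37, 41, 43, 47, 53, 59, 61, 67, 71, 73, 79, 83, 89, 97,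
   101, 103, 107, 109, 113, 127, 131, 137, 139, 149, 151, 157, 163, 167, 173, 179, 181, 191, 193,
   197, 199, 211, 223, 227, 229, 233, 239, 241, 251, 257, 263, 269, 271, 277, 281, 283, 293, 307,
   311, 313, 317, 331, 337, 347, 349, 353, 359, 367, 373, 379, 383, 389, 397, 401, 409, 419, 421,
   431, 433, 439, 443, 449, 457, 461, 463, 467, 479, 487, 491, 499, 503, 509, 521, 523, 541, 547,
   557, 563, 569, 571, 577, 587, 593, 599, 601, 607, 613, 617, 619, 631, 641, 643, 647, 653, 659,
   661, 673, 677, 683, 691, 701, 709, 719, 727, 733, 739, 743, 751, 757, 761, 769, 773, 787, 797,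
   809, 811, 821, 823, 827, 829, 839, 853, 857, 859, 863, 877, 881, 883, 887, 907, 911, 919, 929,
   937, 941, 947, 953, 967, 971, 977, 983, 991, 997, 1009, 1013, 1019, 1021, 1031, 1033, 1039,
   1049, 1051, 1061, 1063, 1069, 1087, 1091, 1093, 1097, 1103, 1109, 1117, 1123, 1129, 1151, 1153,
   1163, 1171, 1181, 1187, 1193, 1201, 1213, 1217, 1223]

theorem PL_sorted : PL.SortedLT := by
  rw [List.sortedLT_iff_pairwise]; decide +kernel

theorem PL_bd : ∀ x ∈ PL, x ≤ 1224 := by decide +kernel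

theorem PL_complete (p : ℕ) (hp : p.Prime) : p ∈ PL ∨ 1224 ≤ p := by
  by_cases h : 1224 ≤ p
  · exact Or.inr h
  · left
    have hall : (List.range 1224).all (fun n => Nat.blt n 2 ||
      ([2, 3, 5, 7, 11, 13, 17, 19, 23, 29, 31].any (fun d => Nat.beq (n % d) 0 && Nat.blt d n) ||
        PL.any (fun d => Nat.beq d n))) = true := by decide +kernel
    rw [List.all_eq_true] at hall
    have h1 := hall p (List.mem_range.2 (by omega))
    rw [Bool.or_eq_true, Bool.or_eq_true, Nat.blt_eq, List.any_eq_true, List.any_eq_true] at h1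
    rcases h1 with h1 | ⟨d, hd, h1⟩ | ⟨d, hd, h1⟩
    · have := hp.two_le; omega
    · exfalso
      rw [Bool.and_eq_true, Nat.beq_eq, Nat.blt_eq] at h1
      have h2 : d ∣ p := Nat.dvd_of_mod_eq_zero h1.1
      rcases (Nat.dvd_prime hp).1 h2 with h3 | h3
      · subst h3; revert hd; decide
      · omega
    · rw [Nat.beq_eq] at h1
      rw [← h1]; exact hd

theorem q3_pos (q : ℕ) (hq : 2 ≤ q) : q ^ 3 - 1 ≠ 0 := by
  have : 2 ^ 3 ≤ q ^ 3 := Nat.pow_le_pow_left hq 3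
  omega

theorem pr_dvd (l : List ℕ) (hnd : l.Nodup) (N : ℕ) (hl : ∀ p ∈ l, p.Prime ∧ p ∣ N) :
    pr l ∣ N := by
  rw [pr_eq, ← List.map_id l, ← List.prod_toFinset _ hnd]
  apply Finset.prod_primes_dvd
  · intro p hp
    exact (hl p (List.mem_toFinset.1 hp)).1.prime
  · intro p hp
    exact (hl p (List.mem_toFinset.1 hp)).2

theorem mem_sortS (q p : ℕ) (h : p ∈ (q ^ 3 - 1).primeFactors.sort) :
    p.Prime ∧ p ∣ q ^ 3 - 1 := by
  rw [Finset.mem_sort] at h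
  exact ⟨Nat.prime_of_mem_primeFactors h, Nat.dvd_of_mem_primeFactors h⟩

theorem pr_sort_le (q : ℕ) (hq : 2 ≤ q) : pr ((q ^ 3 - 1).primeFactors.sort) ≤ q ^ 3 :=
  (Nat.le_of_dvd (Nat.pos_of_ne_zero (q3_pos q hq))
    (pr_dvd _ (Finset.sort_nodup _ _) _ (mem_sortS q))).trans (Nat.sub_le _ _)

theorem PL_dom (l : List ℕ) (hl : l.SortedLT) (hp : ∀ p ∈ l, p.Prime) (hlen : l.length ≤ 200) :
    List.Forall₂ (· ≤ ·) (PL.take l.length) l :=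
  dom_take 1224 PL l PL_sorted hl (fun x hx => PL_complete x (hp x hx)) PL_bd hlen

theorem PL_pos : ∀ x ∈ PL, 0 < x := by decide +kernel

theorem table_mid : ∀ t ∈ List.range 201, 29 ≤ t →
    tst (t / 5 + 2) (t - (t / 5 + 2)) (rs ((PL.take t).drop (t / 5 + 2))) 3 (pr (PL.take t)) = true := by
  decide +kernel

theorem good_mid (q : ℕ) (hq : 2 ≤ q) (h1 : 29 ≤ (q ^ 3 - 1).primeFactors.card)
    (h2 : (q ^ 3 - 1).primeFactors.card ≤ 200) : Good q := by
  obtain ⟨l, hl⟩ : ∃ l, l = (q ^ 3 - 1).primeFactors.sort := ⟨_, rfl⟩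
  have hlen : l.length = (q ^ 3 - 1).primeFactors.card := by rw [hl, Finset.length_sort]
  rw [← hlen] at h1 h2
  have hd := PL_dom l (hl ▸ Finset.sortedLT_sort _) (fun p hp => (mem_sortS q p (hl ▸ hp)).1) h2
  have htab := table_mid l.length (List.mem_range.2 (by omega)) h1
  have hPL : PL.length = 200 := by decide +kernel
  refine good_of_lists q (l.take (l.length / 5 + 2)) (l.drop (l.length / 5 + 2))
    ((PL.take l.length).drop (l.length / 5 + 2)) ?_ ?_ (List.forall₂_drop _ hd) ?_ 3
    (pr (PL.take l.length)) (by norm_num) ?_ ?_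
  · rw [List.take_append_drop, hl]; exact Finset.sort_nodup _ _
  · rw [List.take_append_drop, hl]; exact Finset.sort_toFinset _ _
  · intro x hx
    exact PL_pos x (List.mem_of_mem_take (List.mem_of_mem_drop hx))
  · exact (pr_le _ _ hd).trans (hl ▸ pr_sort_le q hq)
  · rw [List.length_take, List.length_drop, List.length_take, hPL, min_eq_left (by omega),
      min_eq_left (by omega)]
    exact htab

theorem idx_ge (l : List ℕ) (hl : l.SortedLT) (hp : ∀ p ∈ l, p.Prime) :
    ∀ i (h : i < l.length), 2 * i ≤ l[i] ∧ (1 ≤ i → 2 * i + 1 ≤ l[i]) := by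
  intro i
  induction i with
  | zero => intro h; simp
  | succ i ih =>
    intro h
    have h0 : i < l.length := by omega
    have hlt : l[i] < l[i + 1] := hl.getElem_lt_getElem_of_lt (by omega)
    have hp0 := hp l[i] (List.getElem_mem h0)
    have hp1 := hp l[i + 1] (List.getElem_mem h)
    have := ih h0
    have h2 := hp0.two_le
    rcases Nat.eq_zero_or_pos i with hi | hi
    · subst hi; omega
    · have h3 := this.2 hi
      have h4 := hp0.eq_two_or_odd
      have h5 := hp1.eq_two_or_odd
      omega

theorem big_ineq (t : ℕ) (ht : 200 ≤ t) :
    (4 * t) ^ 6 * 4 ^ (4 * t + 4) ≤ pr PL * 400 ^ (t - 200) := by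
  induction t, ht using Nat.le_induction with
  | base => decide +kernel
  | succ t ht ih =>
    have e1 : t + 1 - 200 = (t - 200) + 1 := by omega
    rw [e1, pow_succ 400, ← mul_assoc]
    have h1 : (200 * (t + 1)) ^ 6 ≤ (201 * t) ^ 6 := Nat.pow_le_pow_left (by omega) 6
    have h2 : 256 * (t + 1) ^ 6 ≤ 400 * t ^ 6 := by
      rw [mul_pow, mul_pow] at h1
      have : 200 ^ 6 * (256 * (t + 1) ^ 6) ≤ 200 ^ 6 * (400 * t ^ 6) := by
        calc 200 ^ 6 * (256 * (t + 1) ^ 6) = 256 * (200 ^ 6 * (t + 1) ^ 6) := by ring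
          _ ≤ 256 * (201 ^ 6 * t ^ 6) := Nat.mul_le_mul_left _ h1
          _ = (256 * 201 ^ 6) * t ^ 6 := by ring
          _ ≤ (200 ^ 6 * 400) * t ^ 6 := Nat.mul_le_mul_right _ (by norm_num)
          _ = _ := by ring
      exact Nat.le_of_mul_le_mul_left this (by norm_num)
    calc (4 * (t + 1)) ^ 6 * 4 ^ (4 * (t + 1) + 4)
        = 4 ^ 6 * (256 * (t + 1) ^ 6) * 4 ^ (4 * t + 4) := by
          rw [show 4 * (t + 1) + 4 = (4 * t + 4) + 4 by ring, pow_add 4 (4 * t + 4) 4, mul_pow]; ring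
      _ ≤ 4 ^ 6 * (400 * t ^ 6) * 4 ^ (4 * t + 4) := by gcongr
      _ = (4 * t) ^ 6 * 4 ^ (4 * t + 4) * 400 := by rw [mul_pow]; ring
      _ ≤ _ := Nat.mul_le_mul_right _ ih

theorem pr_append (a b : List ℕ) : pr (a ++ b) = pr a * pr b := by
  rw [pr_eq, pr_eq, pr_eq, List.prod_append]

theorem good_big (q : ℕ) (hq : 2 ≤ q) (h1 : 200 ≤ (q ^ 3 - 1).primeFactors.card) : Good q := by
  classical
  obtain ⟨l, hl⟩ : ∃ l, l = (q ^ 3 - 1).primeFactors.sort := ⟨_, rfl⟩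
  have hlen : l.length = (q ^ 3 - 1).primeFactors.card := by rw [hl, Finset.length_sort]
  rw [← hlen] at h1
  have hsort : l.SortedLT := hl ▸ Finset.sortedLT_sort _
  have hnd : l.Nodup := hl ▸ Finset.sort_nodup _ _
  have htf : l.toFinset = (q ^ 3 - 1).primeFactors := by rw [hl]; exact Finset.sort_toFinset _ _
  have hprime : ∀ p ∈ l, p.Prime := fun p hp => (mem_sortS q p (hl ▸ hp)).1
  have hidx := idx_ge l hsort hprime
  have hdrop : ∀ k, ∀ x ∈ l.drop k, 2 * k ≤ x := by
    intro k x hx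
    obtain ⟨i, hi, rfl⟩ := List.getElem_of_mem hx
    rw [List.getElem_drop]
    rw [List.length_drop] at hi
    have := (hidx (k + i) (by omega)).1
    omega
  obtain ⟨t, ht⟩ : ∃ t, t = l.length := ⟨_, rfl⟩
  rw [← ht] at h1
  have hprod : (4 * t) ^ 6 * 4 ^ (4 * t + 4) ≤ q ^ 3 := by
    refine (big_ineq t h1).trans ?_
    refine le_trans ?_ (hl ▸ pr_sort_le q hq : pr l ≤ q ^ 3)
    rw [← List.take_append_drop 200 l, pr_append]
    refine Nat.mul_le_mul ?_ ?_
    · have h3 : (l.take 200).length = 200 := by rw [List.length_take]; omega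
      have h4 := PL_dom (l.take 200) (hsort.pairwise.sublist (List.take_sublist _ _)).sortedLT
        (fun p hp => hprime p (List.mem_of_mem_take hp)) h3.le
      rw [h3] at h4
      have h5 : PL.take 200 = PL := by decide +kernel
      rw [h5] at h4
      exact pr_le _ _ h4
    · rw [pr_eq]
      have h3 : (l.drop 200).length = t - 200 := by rw [List.length_drop, ht]
      rw [← h3]
      exact List.pow_card_le_prod _ _ (fun x hx => hdrop 200 x hx)
  obtain ⟨s, hs⟩ : ∃ s, s = t / 3 := ⟨_, rfl⟩
  obtain ⟨k, hk⟩ : ∃ k, k = t - s := ⟨_, rfl⟩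
  have hk2 : 2 * s ≤ k := by omega
  have hk3 : 6 * k ≤ 4 * t + 4 := by omega
  have hk0 : 0 < k := by omega
  have hs0 : 0 < s := by omega
  rw [← List.take_append_drop k l] at hnd htf
  rw [List.nodup_append'] at hnd
  obtain ⟨n1, n2, n3⟩ := hnd
  have hlR : (l.drop k).length = s := by rw [List.length_drop]; omega
  have hlK : (l.take k).length = k := by rw [List.length_take]; omega
  have hsum : ∑ p ∈ (l.drop k).toFinset, (p : ℝ)⁻¹ ≤ 1 / 4 := by
    have hkr : (0 : ℝ) < k := by exact_mod_cast hk0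
    have h2 : ∑ p ∈ (l.drop k).toFinset, (p : ℝ)⁻¹ ≤
        (l.drop k).toFinset.card • (2 * (k : ℝ))⁻¹ := by
      apply Finset.sum_le_card_nsmul
      intro p hp
      rw [List.mem_toFinset] at hp
      have := hdrop k p hp
      apply inv_anti₀ (by positivity)
      exact_mod_cast this
    refine h2.trans ?_
    rw [List.toFinset_card_of_nodup n2, hlR, nsmul_eq_mul, ← div_eq_mul_inv,
      div_le_iff₀ (by positivity)]
    have : (2 * s : ℝ) ≤ k := by exact_mod_cast hk2
    linarith
  refine ⟨(l.take k).toFinset, (l.drop k).toFinset, _, ?_, ?_, rfl, ?_, ?_⟩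
  · rw [Finset.disjoint_left]
    intro a ha hb
    rw [List.mem_toFinset] at ha hb
    exact n3 ha hb
  · rw [← htf, List.toFinset_append]
  · linarith
  · rw [List.toFinset_card_of_nodup n1, List.toFinset_card_of_nodup n2, hlR, hlK]
    obtain ⟨δ, hδ⟩ : ∃ δ, δ = 1 - 2 * ∑ p ∈ (l.drop k).toFinset, (p : ℝ)⁻¹ := ⟨_, rfl⟩
    rw [← hδ]
    have hδ2 : 1 / 2 ≤ δ := by linarith
    have hsq : ((4 * t * 4 ^ k : ℕ) : ℝ) ≤ Real.sqrt q := by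
      have h3 : (4 * t * 4 ^ k) ^ 6 ≤ q ^ 3 := by
        refine le_trans ?_ hprod
        rw [mul_pow, ← pow_mul]
        apply Nat.mul_le_mul_left
        apply Nat.pow_le_pow_right (by norm_num)
        omega
      have h4 : (((4 * t * 4 ^ k : ℕ) : ℝ)) ^ 6 ≤ (Real.sqrt q) ^ 6 := by
        rw [show (Real.sqrt q) ^ 6 = ((Real.sqrt q) ^ 2) ^ 3 by ring, Real.sq_sqrt (Nat.cast_nonneg q)]
        exact_mod_cast h3
      exact le_of_pow_le_pow_left₀ (by norm_num) (Real.sqrt_nonneg _) h4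
    have h3s : (3 * s : ℝ) ≤ t := by
      have : 3 * s ≤ t := by omega
      exact_mod_cast this
    have hs1 : (1 : ℝ) ≤ s := by exact_mod_cast hs0
    push_cast at hsq
    have h4k : (0 : ℝ) < 4 ^ k := by positivity
    have h6 : 3 * (2 * δ + 2 * s - 1) ≤ δ * (4 * t) := by
      nlinarith
    calc 3 * 4 ^ k * (2 * δ + 2 * (s : ℝ) - 1) = (3 * (2 * δ + 2 * s - 1)) * 4 ^ k := by ring
      _ ≤ (δ * (4 * t)) * 4 ^ k := mul_le_mul_of_nonneg_right h6 h4k.le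
      _ = δ * (4 * t * 4 ^ k) := by ring
      _ ≤ δ * Real.sqrt q := mul_le_mul_of_nonneg_left hsq (by linarith)

end Stp

end

section

namespace Stp

/-- the primes that are 2 mod 3 -/
def C2 : List ℕ :=
  [2, 5, 11, 17, 23, 29, 41, 47, 53, 59, 71, 83, 89, 101, 107, 113, 131, 137, 149, 167, 173,
   179, 191, 197, 227, 233, 239, 251, 257, 263, 269, 281, 293, 311, 317, 347, 353, 359, 383,
   389, 401, 419, 431, 443, 449, 461, 467, 479, 491, 503, 509, 521, 557, 563, 569, 587, 593,
   599, 617, 641, 647, 653, 659, 677, 683, 701, 719, 743, 761, 773, 797, 809, 821, 827, 839,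
   857, 863, 881, 887, 911, 929, 941, 947, 953, 971, 977, 983, 1013, 1019, 1031, 1049, 1061,
   1091, 1097, 1103, 1109, 1151, 1163, 1181, 1187, 1193, 1217, 1223, 1229, 1259, 1277, 1283,
   1289, 1301, 1307, 1319, 1361, 1367, 1373, 1409, 1427, 1433, 1439, 1451, 1481, 1487, 1493,
   1499, 1511, 1523, 1553, 1559, 1571, 1583, 1601, 1607, 1613, 1619, 1637, 1667, 1697, 1709,
   1721, 1733, 1787, 1811, 1823, 1847, 1871, 1877, 1889, 1901, 1907, 1913, 1931, 1949, 1973,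
   1979, 1997, 2003, 2027, 2039, 2063, 2069, 2081, 2087, 2099, 2111, 2129, 2141, 2153, 2207,
   2213, 2237, 2243, 2267, 2273, 2297, 2309, 2333, 2339, 2351, 2357, 2381, 2393, 2399, 2411,
   2417, 2423, 2441, 2447, 2459, 2477, 2531, 2543, 2549, 2579, 2591, 2609, 2621, 2633, 2657,
   2663, 2687, 2693, 2699, 2711, 2729, 2741, 2753, 2777, 2789, 2801, 2819, 2837, 2843, 2861,
   2879, 2897, 2903, 2909, 2927, 2939, 2957, 2963, 2969, 2999, 3011, 3023, 3041, 3083, 3089,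
   3119, 3137, 3167, 3191, 3203, 3209, 3221, 3251, 3257, 3299, 3323, 3329, 3347, 3359, 3371,
   3389, 3407, 3413, 3449, 3461, 3467, 3491, 3527, 3533, 3539, 3557, 3581, 3593, 3617, 3623,
   3659, 3671, 3677, 3701, 3719, 3761, 3767, 3779, 3797, 3803, 3821, 3833, 3851, 3863, 3881,
   3911, 3917, 3923, 3929, 3947, 3989, 4001, 4007, 4013, 4019, 4049, 4073, 4079, 4091, 4127,
   4133, 4139, 4157, 4211, 4217, 4229, 4241, 4253, 4259, 4271, 4283, 4289, 4337, 4349, 4373,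
   4391, 4397, 4409, 4421, 4451, 4457, 4463, 4481, 4493, 4517, 4523, 4547, 4583, 4637, 4643,
   4649, 4673, 4679, 4691, 4703, 4721, 4733, 4751, 4787, 4793, 4799, 4817, 4871, 4877, 4889,
   4919, 4931, 4937, 4943, 4967, 4973, 5003, 5009, 5021, 5039, 5051, 5081, 5087, 5099, 5147,
   5153, 5171, 5189, 5231, 5237, 5261, 5273, 5279, 5297, 5303, 5309, 5333, 5351, 5381, 5387,
   5393, 5399, 5417, 5441, 5471, 5477, 5483, 5501, 5507, 5519, 5531, 5573, 5591, 5639, 5651,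
   5657, 5669, 5693, 5711, 5717, 5741, 5783, 5801, 5807, 5813, 5843, 5849, 5861, 5867, 5879,
   5897, 5903, 5927, 5939, 5981, 5987]

/-- the primes that are 1 mod 3 -/
def C1 : List ℕ :=
  [7, 13, 19, 31, 37, 43, 61, 67, 73, 79, 97, 103, 109, 127, 139, 151, 157, 163, 181, 193, 199,
   211, 223, 229, 241, 271, 277, 283, 307, 313, 331, 337, 349, 367, 373, 379, 397, 409, 421, 433,
   439, 457, 463, 487, 499, 523, 541, 547, 571, 577, 601, 607, 613, 619]

/-- one option for the core -/
def tst2 (h : ℕ) (L2 L1 : List ℕ) (e Q a b : ℕ) : Bool :=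
  tst (h + (L2.take a).length + (L1.take b).length) ((L2.drop a).length + (L1.drop b).length)
    (rs (L2.drop a) + rs (L1.drop b)) e Q

/-- lower bound for `q` from the two products -/
def chkA (h : ℕ) (L2 L1 : List ℕ) (a b : ℕ) : Bool :=
  tst2 h L2 L1 1 (3 ^ h * pr L2) a b || tst2 h L2 L1 3 (9 ^ h * (pr L2 * pr L1)) a b

/-- some option works -/
def chkO (h : ℕ) (L2 L1 : List ℕ) (o : List (ℕ × ℕ)) : Bool :=
  o.any fun p => chkA h L2 L1 p.1 p.2

/-- lower bound test for the product of the primes `1 mod 3` -/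
def fl (v : ℕ) : List ℕ → ℕ → ℕ → Bool
  | [], u, acc => Nat.blt v (acc * 620 ^ u)
  | p :: cs, u, acc => Nat.blt v (acc * p ^ u) ||
      bif Nat.beq (v % p) 0 then
        (match u with
          | 0 => false
          | u + 1 => fl v cs u (acc * p))
      else fl v cs u acc

/-- `q ^ 3 - 1` as a function of `n = q - 1` -/
def vv (n : ℕ) : ℕ := n * (n * n + 3 * n + 3)

/-- all naturals below the given one -/
def allb (f : ℕ → Bool) : ℕ → Bool
  | 0 => true
  | k + 1 => f k && allb f k

theorem allb_spec (f : ℕ → Bool) (k : ℕ) (h : allb f k = true) (i : ℕ) (hi : i < k) :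
    f i = true := by
  induction k with
  | zero => omega
  | succ k ih =>
    rw [allb, Bool.and_eq_true] at h
    rcases Nat.lt_succ_iff_lt_or_eq.1 hi with h1 | h1
    · exact ih h.2 h1
    · rw [h1]; exact h.1

/-- the roots of `vv` modulo `91` or `1729` -/
def rts (m : ℕ) : List ℕ :=
  bif Nat.beq m 91 then
    [0, 8, 15, 21, 28, 52, 73, 78, 80]
  else
    [0, 143, 171, 190, 234, 437, 561, 637, 652, 665, 728, 808, 827, 899, 918, 931, 988, 1074,
     1165, 1235, 1302, 1393, 1568, 1625, 1653, 1659, 1716]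

theorem rts91 : allb (fun z => !Nat.beq (vv z % 91) 0 || (rts 91).any (Nat.beq z)) 91 = true := by
  decide +kernel

theorem rts1729 :
    allb (fun z => !Nat.beq (vv z % 1729) 0 || (rts 1729).any (Nat.beq z)) 1729 = true := by
  decide +kernel

/-- no `n` in one residue class -/
def lf (u m M A D r : ℕ) : Bool :=
  bif Nat.ble r D then
    allb (fun i => fl (vv (M * (A + r + m * i))) C1 u (3 * M)) ((D - r) / m + 1)
  else true

/-- an inverse of `M` modulo `91` or `1729` -/
def nv (m M : ℕ) : ℕ := (M % m) ^ 35 % m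

/-- no `n` with `LO ≤ n ≤ HI`, divisible by `M` -/
def leaf (u m LO HI M : ℕ) : Bool :=
  (Nat.beq m 91 || Nat.beq m 1729) && (Nat.beq (M * nv m M % m) 1 &&
    (rts m).all fun z => lf u m M (LO / M) (HI / M - LO / M) ((nv m M * z + (m - 1) * (LO / M)) % m))

/-- search through the sets of primes `2 mod 3` -/
def dfs (L1 : List ℕ) (m LO HI : ℕ) : List ℕ → ℕ → List ℕ → Bool
  | [], r, ch => (match r with
      | 0 => leaf L1.length m LO HI (3 * pr ch)
      | _ + 1 => false)
  | c :: cs, r, ch => (match r with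
      | 0 => leaf L1.length m LO HI (3 * pr ch)
      | r + 1 => (Nat.beq (cs.take r).length r && chkO 1 (ch ++ c :: cs.take r) L1 [(3, 2), (3, 1)]) ||
        (dfs L1 m LO HI cs r (ch ++ [c]) && dfs L1 m LO HI cs (r + 1) ch))

/-- the exceptional cases -/
def prm : List (ℕ × ℕ × List ℕ × ℕ × ℕ) :=
  [(6, 17, [7, 13, 19], 2174573015533, 2487000000000),
   (7, 16, [7, 13, 19], 1389959232658, 5227000000000),
   (8, 15, [7, 13, 19], 941981483972, 7281000000000),
   (9, 14, [7, 13], 683066084953, 9937000000000),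
   (8, 16, [7, 13, 19], 5016121129149, 9639000000000),
   (9, 15, [7, 13, 19], 3538351628989, 13819000000000),
   (9, 16, [7, 13, 19], 18841984338875, 19239000000000),
   (10, 15, [7, 13, 19], 13774790209758, 29115000000000)]

/-- the check of an exceptional case -/
def run (t2 u : ℕ) (ms : List ℕ) (LO HI : ℕ) : Bool :=
  (tst2 1 (C2.take t2) (C1.take u) 1 HI 3 2 || tst2 1 (C2.take t2) (C1.take u) 1 HI 3 1) && (Nat.ble ((LO + 1) ^ 3) (9 * (pr (C2.take t2) * pr (C1.take u))) &&
    ((ms.all fun p => chkO 1 (C2.take t2) ((C1.filter fun x => !Nat.beq x p).take u) [(3, 2), (3, 1)]) &&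
      dfs (C1.take u) (pr ms) LO HI C2 t2 []))

/-- table -/
def tab (h t2 u : ℕ) : Bool :=
  chkO h (C2.take t2) (C1.take u) [(3, 2), (3, 3), (2, 2), (3, 1), (1, 3), (4, 3)] ||
    ((Nat.blt (h + t2 + u) 24 && tst2 h (C2.take t2) (C1.take u) 1 8000000000000 3 2) ||
    (Nat.beq h 1 && prm.any fun x => Nat.beq x.1 t2 && Nat.beq x.2.1 u))


set_option maxRecDepth 20000

theorem run_0 : run 6 17 [7, 13, 19] 2174573015533 2487000000000 = true := by
  decide +kernel

theorem run_1 : run 7 16 [7, 13, 19] 1389959232658 5227000000000 = true := by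
  decide +kernel

theorem run_2 : run 8 15 [7, 13, 19] 941981483972 7281000000000 = true := by
  decide +kernel

theorem run_3 : run 9 14 [7, 13] 683066084953 9937000000000 = true := by
  decide +kernel

theorem run_4 : run 8 16 [7, 13, 19] 5016121129149 9639000000000 = true := by
  decide +kernel

theorem run_5 : run 9 15 [7, 13, 19] 3538351628989 13819000000000 = true := by
  decide +kernel

theorem run_6 : run 9 16 [7, 13, 19] 18841984338875 19239000000000 = true := by
  decide +kernel

theorem run_7 : run 10 15 [7, 13, 19] 13774790209758 29115000000000 = true := by
  decide +kernel

theorem run_ok (x : ℕ × ℕ × List ℕ × ℕ × ℕ) (hx : x ∈ prm) :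
    run x.1 x.2.1 x.2.2.1 x.2.2.2.1 x.2.2.2.2 = true := by
  rw [prm] at hx
  rcases List.mem_cons.1 hx with rfl | hx
  · exact run_0
  rcases List.mem_cons.1 hx with rfl | hx
  · exact run_1
  rcases List.mem_cons.1 hx with rfl | hx
  · exact run_2
  rcases List.mem_cons.1 hx with rfl | hx
  · exact run_3
  rcases List.mem_cons.1 hx with rfl | hx
  · exact run_4
  rcases List.mem_cons.1 hx with rfl | hx
  · exact run_5
  rcases List.mem_cons.1 hx with rfl | hx
  · exact run_6
  rcases List.mem_cons.1 hx with rfl | hx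
  · exact run_7
  exact absurd hx List.not_mem_nil

theorem tab_ok : (allb (fun h => allb (fun t2 => allb (fun u =>
    Nat.blt 28 (h + t2 + u) || tab h t2 u) 29) 29) 2) = true := by
  decide +kernel

theorem prm_ok : ∀ x ∈ prm, x.2.2.1.Nodup ∧ ∀ p ∈ x.2.2.1,
    x.2.1 ≤ (C1.filter fun y => !Nat.beq y p).length := by
  decide +kernel

theorem C2_len : 28 ≤ C2.length := by decide +kernel

theorem C1_len : 28 ≤ C1.length := by decide +kernel

theorem C2_sorted : C2.SortedLT := by
  rw [List.sortedLT_iff_isChain]; decide +kernel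

theorem C1_sorted : C1.SortedLT := by
  rw [List.sortedLT_iff_isChain]; decide +kernel

theorem C2_bd : ∀ x ∈ C2, x ≤ 6000 := by decide +kernel

theorem C1_bd : ∀ x ∈ C1, x ≤ 620 := by decide +kernel

theorem C2_pos : ∀ x ∈ C2, 0 < x := by decide +kernel

theorem C1_pos : ∀ x ∈ C1, 0 < x := by decide +kernel

theorem C2_complete (p : ℕ) (hp : p.Prime) (h3 : p % 3 = 2) : p ∈ C2 ∨ 6000 ≤ p := by
  by_cases h : 6000 ≤ p
  · exact Or.inr h
  · left
    have hall : allb (fun i => Nat.blt (3 * i + 2) 2 ||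
      ([2, 5, 7, 11, 13, 17, 19, 23, 29, 31, 37, 41, 43, 47, 53, 59, 61, 67, 71, 73].any
        (fun d => Nat.beq ((3 * i + 2) % d) 0 && Nat.blt d (3 * i + 2)) ||
        C2.any (fun d => Nat.beq d (3 * i + 2)))) 2000 = true := by decide +kernel
    have h1 := allb_spec _ _ hall (p / 3) (by omega)
    have hpe : 3 * (p / 3) + 2 = p := by omega
    rw [Bool.or_eq_true, Bool.or_eq_true, Nat.blt_eq, List.any_eq_true, List.any_eq_true, hpe] at h1
    rcases h1 with h1 | ⟨d, hd, h1⟩ | ⟨d, hd, h1⟩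
    · have := hp.two_le; omega
    · exfalso
      rw [Bool.and_eq_true, Nat.beq_eq, Nat.blt_eq] at h1
      have h2 : d ∣ p := Nat.dvd_of_mod_eq_zero h1.1
      rcases (Nat.dvd_prime hp).1 h2 with h3 | h3
      · subst h3; revert hd; decide
      · omega
    · rw [Nat.beq_eq] at h1
      rw [← h1]; exact hd

theorem C1_complete (p : ℕ) (hp : p.Prime) (h3 : p % 3 = 1) : p ∈ C1 ∨ 620 ≤ p := by
  by_cases h : 620 ≤ p
  · exact Or.inr h
  · left
    have hall : allb (fun i => Nat.blt (3 * i + 1) 2 ||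
      ([2, 5, 7, 11, 13, 17, 19, 23].any
        (fun d => Nat.beq ((3 * i + 1) % d) 0 && Nat.blt d (3 * i + 1)) ||
        C1.any (fun d => Nat.beq d (3 * i + 1)))) 207 = true := by decide +kernel
    have h1 := allb_spec _ _ hall (p / 3) (by omega)
    have hpe : 3 * (p / 3) + 1 = p := by omega
    rw [Bool.or_eq_true, Bool.or_eq_true, Nat.blt_eq, List.any_eq_true, List.any_eq_true, hpe] at h1
    rcases h1 with h1 | ⟨d, hd, h1⟩ | ⟨d, hd, h1⟩
    · have := hp.two_le; omega
    · exfalso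
      rw [Bool.and_eq_true, Nat.beq_eq, Nat.blt_eq] at h1
      have h2 : d ∣ p := Nat.dvd_of_mod_eq_zero h1.1
      rcases (Nat.dvd_prime hp).1 h2 with h3 | h3
      · subst h3; revert hd; decide
      · omega
    · rw [Nat.beq_eq] at h1
      rw [← h1]; exact hd

end Stp

end

section

namespace Stp

theorem rs_append (a b : List ℕ) : rs (a ++ b) = rs a + rs b := by
  induction a with
  | nil => simp [rs]
  | cons x a ih => rw [List.cons_append, rs, rs, ih, Nat.add_assoc]

theorem forall2_append {A B C D : List ℕ} (h : List.Forall₂ (· ≤ ·) A B)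
    (h' : List.Forall₂ (· ≤ ·) C D) : List.Forall₂ (· ≤ ·) (A ++ C) (B ++ D) := by
  induction h with
  | nil => exact h'
  | cons hab _ ih => exact List.Forall₂.cons hab ih

/-- the configuration of the primes dividing `q ^ 3 - 1` -/
structure Cfg (q h : ℕ) (l2 l1 : List ℕ) : Prop where
  hq : 2 ≤ q
  hh : h < 2
  s2 : l2.SortedLT
  s1 : l1.SortedLT
  p2 : ∀ p ∈ l2, p.Prime ∧ p % 3 = 2
  p1 : ∀ p ∈ l1, p.Prime ∧ p % 3 = 1
  nd : (List.replicate h 3 ++ (l2 ++ l1)).Nodup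
  tf : (List.replicate h 3 ++ (l2 ++ l1)).toFinset = (q ^ 3 - 1).primeFactors
  d1 : 3 ^ h * pr l2 ∣ q - 1
  d2 : 9 ^ h * (pr l2 * pr l1) ∣ q ^ 3 - 1

theorem Cfg.card {q h : ℕ} {l2 l1 : List ℕ} (c : Cfg q h l2 l1) :
    (q ^ 3 - 1).primeFactors.card = h + l2.length + l1.length := by
  rw [← c.tf, List.toFinset_card_of_nodup c.nd]
  simp [Nat.add_assoc]

theorem Cfg.le1 {q h : ℕ} {l2 l1 : List ℕ} (c : Cfg q h l2 l1) : 3 ^ h * pr l2 ≤ q - 1 :=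
  Nat.le_of_dvd (by have := c.hq; omega) c.d1

theorem Cfg.le2 {q h : ℕ} {l2 l1 : List ℕ} (c : Cfg q h l2 l1) :
    9 ^ h * (pr l2 * pr l1) ≤ q ^ 3 - 1 :=
  Nat.le_of_dvd (Nat.pos_of_ne_zero (q3_pos q c.hq)) c.d2

theorem good_tst2 {q h : ℕ} {l2 l1 : List ℕ} (c : Cfg q h l2 l1) (L2 L1 : List ℕ)
    (h2 : List.Forall₂ (· ≤ ·) L2 l2) (h1 : List.Forall₂ (· ≤ ·) L1 l1)
    (n2 : ∀ x ∈ L2, 0 < x) (n1 : ∀ x ∈ L1, 0 < x) (e Q a b : ℕ) (he : e ≠ 0) (hQ : Q ≤ q ^ e)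
    (ht : tst2 h L2 L1 e Q a b = true) : Good q := by
  have hperm : List.Perm ((List.replicate h 3 ++ (l2.take a ++ l1.take b)) ++
      (l2.drop a ++ l1.drop b)) (List.replicate h 3 ++ (l2 ++ l1)) := by
    conv_rhs => rw [← List.take_append_drop a l2, ← List.take_append_drop b l1]
    rw [List.perm_iff_count]
    intro x
    simp only [List.count_append]
    omega
  refine good_of_lists q (List.replicate h 3 ++ (l2.take a ++ l1.take b)) (l2.drop a ++ l1.drop b)
    (L2.drop a ++ L1.drop b) (hperm.nodup_iff.2 c.nd) ?_
    (forall2_append (List.forall₂_drop _ h2) (List.forall₂_drop _ h1)) ?_ e Q he hQ ?_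
  · rw [List.toFinset_eq_of_perm _ _ hperm, c.tf]
  · intro x hx
    rcases List.mem_append.1 hx with hx | hx
    · exact n2 x (List.mem_of_mem_drop hx)
    · exact n1 x (List.mem_of_mem_drop hx)
  · rw [rs_append, List.length_append, List.length_append, List.length_replicate, List.length_append,
      ← (List.forall₂_take a h2).length_eq, ← (List.forall₂_take b h1).length_eq, ← Nat.add_assoc]
    exact ht

theorem good_chkO {q h : ℕ} {l2 l1 : List ℕ} (c : Cfg q h l2 l1) (L2 L1 : List ℕ)
    (h2 : List.Forall₂ (· ≤ ·) L2 l2) (h1 : List.Forall₂ (· ≤ ·) L1 l1)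
    (n2 : ∀ x ∈ L2, 0 < x) (n1 : ∀ x ∈ L1, 0 < x) (o : List (ℕ × ℕ))
    (h : chkO h L2 L1 o = true) : Good q := by
  rw [chkO, List.any_eq_true] at h
  obtain ⟨p, -, h⟩ := h
  rw [chkA, Bool.or_eq_true] at h
  rcases h with h | h
  · refine good_tst2 c L2 L1 h2 h1 n2 n1 1 _ _ _ one_ne_zero ?_ h
    rw [pow_one]
    exact (Nat.mul_le_mul_left _ (pr_le _ _ h2)).trans (c.le1.trans (Nat.sub_le _ _))
  · refine good_tst2 c L2 L1 h2 h1 n2 n1 3 _ _ _ three_ne_zero ?_ h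
    exact (Nat.mul_le_mul_left _ (Nat.mul_le_mul (pr_le _ _ h2) (pr_le _ _ h1))).trans
      (c.le2.trans (Nat.sub_le _ _))

theorem Cfg.dom2 {q h : ℕ} {l2 l1 : List ℕ} (c : Cfg q h l2 l1) (hl : l2.length ≤ 28) :
    List.Forall₂ (· ≤ ·) (C2.take l2.length) l2 :=
  dom_take 6000 C2 l2 C2_sorted c.s2 (fun x hx => C2_complete x (c.p2 x hx).1 (c.p2 x hx).2)
    C2_bd (hl.trans C2_len)

theorem Cfg.dom1 {q h : ℕ} {l2 l1 : List ℕ} (c : Cfg q h l2 l1) (hl : l1.length ≤ 28) :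
    List.Forall₂ (· ≤ ·) (C1.take l1.length) l1 :=
  dom_take 620 C1 l1 C1_sorted c.s1 (fun x hx => C1_complete x (c.p1 x hx).1 (c.p1 x hx).2)
    C1_bd (hl.trans C1_len)

theorem pow_le_pr (b : ℕ) (l : List ℕ) (h : ∀ x ∈ l, b ≤ x) : b ^ l.length ≤ pr l := by
  induction l with
  | nil => simp [pr]
  | cons a l ih =>
    rw [List.length_cons, pow_succ', pr]
    exact Nat.mul_le_mul (h a List.mem_cons_self) (ih fun x hx => h x (List.mem_cons_of_mem _ hx))

theorem fl_cons (v p : ℕ) (cs : List ℕ) (u acc : ℕ) (h : fl v (p :: cs) u acc = true) :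
    v < acc * p ^ u ∨ (v % p = 0 ∧ ∃ w, u = w + 1 ∧ fl v cs w (acc * p) = true) ∨
      (v % p ≠ 0 ∧ fl v cs u acc = true) := by
  by_cases h0 : v < acc * p ^ u
  · exact Or.inl h0
  right
  have hb : Nat.blt v (acc * p ^ u) = false := by
    rw [Bool.eq_false_iff, Ne, Nat.blt_eq]; exact h0
  by_cases hp : v % p = 0
  · have hc : Nat.beq (v % p) 0 = true := by rw [Nat.beq_eq]; exact hp
    left
    refine ⟨hp, ?_⟩
    cases u with
    | zero =>
      rw [fl.eq_def] at h
      simp only [] at h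
      rw [hb, hc, cond_true, Bool.false_or] at h
      exact absurd h (by decide)
    | succ w =>
      rw [fl.eq_def] at h
      simp only [] at h
      rw [hb, hc, cond_true, Bool.false_or] at h
      exact ⟨w, rfl, h⟩
  · have hc : Nat.beq (v % p) 0 = false := by
      rw [Bool.eq_false_iff, Ne, Nat.beq_eq]; exact hp
    right
    refine ⟨hp, ?_⟩
    rw [fl.eq_def] at h
    simp only [] at h
    rw [hb, hc, cond_false, Bool.false_or] at h
    exact h

theorem fl_sound (v : ℕ) : ∀ (cs : List ℕ) (u acc : ℕ) (l : List ℕ), cs.SortedLT → l.SortedLT →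
    (∀ x ∈ l, x ∈ cs ∨ 620 ≤ x) → (∀ x ∈ cs, x ≤ 620) → l.length = u → (∀ x ∈ l, x ∣ v) →
    fl v cs u acc = true → v < acc * pr l := by
  intro cs
  induction cs with
  | nil =>
    intro u acc l _ _ hmem _ hlen _ h
    rw [fl, Nat.blt_eq] at h
    refine h.trans_le (Nat.mul_le_mul_left _ ?_)
    rw [← hlen]
    exact pow_le_pr _ _ fun x hx => by simpa using hmem x hx
  | cons p cs ih =>
    intro u acc l hcs hl hmem hB hlen hdv h
    rw [List.sortedLT_iff_pairwise, List.pairwise_cons] at hcs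
    have hge : ∀ x ∈ l, p ≤ x := by
      intro x hx
      rcases hmem x hx with h | h
      · rcases List.mem_cons.1 h with h | h
        · exact h.ge
        · exact (hcs.1 x h).le
      · exact (hB p List.mem_cons_self).trans h
    have hB' : ∀ x ∈ cs, x ≤ 620 := fun x hx => hB x (List.mem_cons_of_mem _ hx)
    rcases fl_cons v p cs u acc h with h | ⟨hp, w, hw, h⟩ | ⟨hp, h⟩
    · refine h.trans_le (Nat.mul_le_mul_left _ ?_)
      rw [← hlen]
      exact pow_le_pr _ _ hge
    · rw [hw] at hlen
      cases l with
      | nil => simp at hlen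
      | cons x l =>
        rw [List.sortedLT_iff_pairwise, List.pairwise_cons] at hl
        have h2 := ih w (acc * p) l hcs.2.sortedLT hl.2.sortedLT ?_ hB' (by simpa using hlen)
          (fun y hy => hdv y (List.mem_cons_of_mem _ hy)) h
        · refine h2.trans_le ?_
          rw [pr, Nat.mul_assoc]
          exact Nat.mul_le_mul_left _ (Nat.mul_le_mul_right _ (hge x List.mem_cons_self))
        · intro y hy
          rcases hmem y (List.mem_cons_of_mem _ hy) with h | h
          · rcases List.mem_cons.1 h with h | h
            · have := hl.1 y hy
              have := hge x List.mem_cons_self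
              omega
            · exact Or.inl h
          · exact Or.inr h
    · refine ih u acc l hcs.2.sortedLT hl ?_ hB' hlen hdv h
      intro y hy
      rcases hmem y hy with h | h
      · rcases List.mem_cons.1 h with h | h
        · exact absurd (Nat.mod_eq_zero_of_dvd (h ▸ hdv y hy)) hp
        · exact Or.inl h
      · exact Or.inr h

theorem vv_eq (q : ℕ) (hq : 2 ≤ q) : vv (q - 1) = q ^ 3 - 1 := by
  obtain ⟨n, rfl⟩ : ∃ n, q = n + 1 := ⟨q - 1, by omega⟩
  rw [Nat.add_sub_cancel, vv]
  symm
  apply Nat.sub_eq_of_eq_add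
  ring

theorem vv_mod (a b m : ℕ) (h : a ≡ b [MOD m]) : vv a ≡ vv b [MOD m] := by
  unfold vv
  exact h.mul (((h.mul h).add (h.mul_left 3)).add_right 3)

theorem rts_spec (m : ℕ) (hm : m = 91 ∨ m = 1729) (z : ℕ) (hz : z < m) (h : vv z % m = 0) :
    z ∈ rts m := by
  have key : (!Nat.beq (vv z % m) 0 || (rts m).any (Nat.beq z)) = true := by
    rcases hm with rfl | rfl
    · exact allb_spec _ _ rts91 z hz
    · exact allb_spec _ _ rts1729 z hz
  rw [(Nat.beq_eq.symm ▸ h : Nat.beq (vv z % m) 0 = true), Bool.not_true, Bool.false_or,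
    List.any_eq_true] at key
  obtain ⟨x, hx, h1⟩ := key
  rw [Nat.beq_eq] at h1
  rw [h1]; exact hx

theorem leaf_sound {q : ℕ} {l2 l1 : List ℕ} (c : Cfg q 1 l2 l1) (m LO HI : ℕ)
    (hm : m ∣ vv (q - 1)) (hLO : LO ≤ q - 1) (hHI : q - 1 ≤ HI) :
    leaf l1.length m LO HI (3 * pr l2) = false := by
  rw [Bool.eq_false_iff]
  intro h
  have hd1 := c.d1
  rw [pow_one] at hd1
  obtain ⟨M, hM⟩ : ∃ M, M = 3 * pr l2 := ⟨_, rfl⟩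
  rw [← hM] at hd1 h
  obtain ⟨J, hJ⟩ := hd1
  have hq := c.hq
  have hM0 : 0 < M := by
    rcases Nat.eq_zero_or_pos M with h0 | h0
    · rw [h0, Nat.zero_mul] at hJ; omega
    · exact h0
  have hJ' : (q - 1) / M = J := by rw [hJ, Nat.mul_div_cancel_left _ hM0]
  have h1 : LO / M ≤ J := hJ' ▸ Nat.div_le_div_right hLO
  have h2 : J ≤ HI / M := hJ' ▸ Nat.div_le_div_right hHI
  obtain ⟨A, hA⟩ : ∃ A, A = LO / M := ⟨_, rfl⟩
  obtain ⟨B, hB⟩ : ∃ B, B = HI / M := ⟨_, rfl⟩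
  obtain ⟨w, hw⟩ : ∃ w, w = nv m M := ⟨_, rfl⟩
  rw [leaf, ← hA, ← hB, ← hw, Bool.and_eq_true, Bool.and_eq_true, Bool.or_eq_true, Nat.beq_eq,
    Nat.beq_eq, Nat.beq_eq, List.all_eq_true] at h
  obtain ⟨hmm, hinv, h⟩ := h
  have hm0 : 0 < m := by omega
  rw [← hA] at h1
  rw [← hB] at h2
  have hz : vv ((q - 1) % m) % m = 0 := by
    have h5 := vv_mod _ _ _ (Nat.mod_modEq (q - 1) m)
    rw [Nat.ModEq, Nat.mod_eq_zero_of_dvd hm] at h5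
    exact h5
  have h3 := h _ (rts_spec m hmm _ (Nat.mod_lt _ hm0) hz)
  have hr : (w * ((q - 1) % m) + (m - 1) * A) % m = (J - A) % m := by
    have e1 : w * ((q - 1) % m) ≡ w * (M * J) [MOD m] := by
      rw [← hJ]; exact (Nat.mod_modEq _ _).mul_left _
    have e2 : w * (M * J) ≡ J [MOD m] := by
      have e3 : M * w ≡ 1 [MOD m] := by
        rw [Nat.ModEq, hinv, Nat.mod_eq_of_lt (by omega)]
      have e4 := e3.mul_right J
      rw [one_mul] at e4
      rw [show w * (M * J) = M * w * J by ring]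
      exact e4
    have e5 := (e1.trans e2).add_right ((m - 1) * A)
    have e6 : J + (m - 1) * A = (J - A) + m * A := by
      obtain ⟨m', rfl⟩ : ∃ m', m = m' + 1 := ⟨m - 1, by omega⟩
      rw [Nat.add_sub_cancel, Nat.add_mul, one_mul]
      omega
    rw [e6] at e5
    rw [Nat.ModEq, Nat.add_mul_mod_self_left] at e5
    exact e5
  rw [hr] at h3
  have hdm := Nat.mod_add_div (J - A) m
  obtain ⟨r, hrr⟩ : ∃ r, r = (J - A) % m := ⟨_, rfl⟩
  obtain ⟨i, hii⟩ : ∃ i, i = (J - A) / m := ⟨_, rfl⟩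
  rw [← hrr] at hdm h3
  rw [← hii] at hdm
  have hJe : A + r + m * i = J := by omega
  have hrD : r ≤ B - A := by omega
  rw [lf, (Nat.ble_eq.symm ▸ hrD : Nat.ble r (B - A) = true), cond_true] at h3
  have hi : i < (B - A - r) / m + 1 := by
    apply Nat.lt_succ_of_le
    rw [Nat.le_div_iff_mul_le hm0, Nat.mul_comm]
    omega
  have h4 := allb_spec _ _ h3 i hi
  rw [hJe, ← hJ] at h4
  have h5 := fl_sound (vv (q - 1)) C1 l1.length (3 * M) l1 C1_sorted c.s1
    (fun x hx => C1_complete x (c.p1 x hx).1 (c.p1 x hx).2) C1_bd rfl ?_ h4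
  · have h6 := c.le2
    rw [vv_eq q hq, hM] at h5
    rw [pow_one] at h6
    have : 3 * (3 * pr l2) * pr l1 = 9 * (pr l2 * pr l1) := by ring
    omega
  · intro x hx
    rw [vv_eq q hq]
    refine (Nat.dvd_of_mem_primeFactors ?_)
    rw [← c.tf, List.mem_toFinset]
    simp [hx]

theorem dfs_sound {q : ℕ} {l2 l1 : List ℕ} (c : Cfg q 1 l2 l1) (L1 : List ℕ)
    (h1 : List.Forall₂ (· ≤ ·) L1 l1) (n1 : ∀ x ∈ L1, 0 < x) (m LO HI : ℕ)
    (hm : m ∣ vv (q - 1)) (hLO : LO ≤ q - 1) (hHI : q - 1 ≤ HI) :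
    ∀ (cs : List ℕ) (r : ℕ) (ch l : List ℕ), cs.SortedLT → l.SortedLT → l2 = ch ++ l →
    (∀ x ∈ l, x ∈ cs ∨ 6000 ≤ x) → (∀ x ∈ cs, x ≤ 6000) → (∀ x ∈ cs, 0 < x) → l.length = r →
    dfs L1 m LO HI cs r ch = true → Good q := by
  have hleaf := leaf_sound c m LO HI hm hLO hHI
  rw [← h1.length_eq] at hleaf
  have hleaf2 : ∀ ch l : List ℕ, l2 = ch ++ l → l.length = 0 →
      leaf L1.length m LO HI (3 * pr ch) = true → Good q := by
    intro ch l h2 hl h3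
    rw [List.length_eq_zero_iff.1 hl, List.append_nil] at h2
    rw [← h2, hleaf] at h3
    exact absurd h3 (by decide)
  intro cs
  induction cs with
  | nil =>
    intro r ch l _ _ h2 _ _ _ hlen h
    cases r with
    | zero => exact hleaf2 ch l h2 hlen h
    | succ r => rw [dfs] at h; exact absurd h (by decide)
  | cons p cs ih =>
    intro r ch l hcs hl h2 hmem hB hpos hlen h
    cases r with
    | zero => exact hleaf2 ch l h2 hlen h
    | succ r =>
      rw [dfs] at h
      rw [Bool.or_eq_true, Bool.and_eq_true, Bool.and_eq_true, Nat.beq_eq] at h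
      rcases h with ⟨h3, h⟩ | ⟨h3, h4⟩
      · have hlen2 : l.length ≤ (p :: cs).length := by
          rw [List.length_take] at h3
          rw [List.length_cons]
          omega
        have hd := dom_take 6000 (p :: cs) l hcs hl hmem hB hlen2
        rw [hlen, List.take_succ_cons] at hd
        refine good_chkO c _ L1 ?_ h1 ?_ n1 _ h
        · rw [h2]
          exact forall2_append (List.forall₂_same.2 fun x _ => le_rfl) hd
        · intro x hx
          rcases List.mem_append.1 hx with hx | hx
          · exact (c.p2 x (h2 ▸ List.mem_append_left _ hx)).1.pos
          · refine hpos x ?_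
            rcases List.mem_cons.1 hx with hx | hx
            · rw [hx]; exact List.mem_cons_self
            · exact List.mem_cons_of_mem _ (List.mem_of_mem_take hx)
      · have hB' : ∀ x ∈ cs, x ≤ 6000 := fun x hx => hB x (List.mem_cons_of_mem _ hx)
        have hpos' : ∀ x ∈ cs, 0 < x := fun x hx => hpos x (List.mem_cons_of_mem _ hx)
        have hBp := hB p List.mem_cons_self
        rw [List.sortedLT_iff_pairwise, List.pairwise_cons] at hcs
        cases l with
        | nil => simp at hlen
        | cons x l =>
          have hl' := hl
          rw [List.sortedLT_iff_pairwise, List.pairwise_cons] at hl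
          by_cases hx : x = p
          · refine ih r (ch ++ [p]) l hcs.2.sortedLT hl.2.sortedLT ?_ ?_ hB' hpos'
              (by simpa using hlen) h3
            · rw [h2, hx]; simp
            · intro y hy
              rcases hmem y (List.mem_cons_of_mem _ hy) with h | h
              · rcases List.mem_cons.1 h with h | h
                · have := hl.1 y hy
                  omega
                · exact Or.inl h
              · exact Or.inr h
          · refine ih (r + 1) ch (x :: l) hcs.2.sortedLT hl' h2 ?_ hB' hpos' hlen h4
            intro y hy
            rcases hmem y hy with h | h
            · rcases List.mem_cons.1 h with h | h
              · exfalso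
                have hpx : p ≤ x := by
                  rcases hmem x List.mem_cons_self with h | h
                  · rcases List.mem_cons.1 h with h | h
                    · exact h.ge
                    · exact (hcs.1 x h).le
                  · exact hBp.trans h
                rcases List.mem_cons.1 hy with h5 | h5
                · omega
                · have := hl.1 y h5
                  omega
              · exact Or.inl h
            · exact Or.inr h

end Stp

end

section

namespace Stp

theorem run_sound {q : ℕ} {l2 l1 : List ℕ} (c : Cfg q 1 l2 l1) (h2 : l2.length ≤ 28)
    (h1 : l1.length ≤ 28) (ms : List ℕ) (LO HI : ℕ) (hms : ms.Nodup)
    (hmsl : ∀ p ∈ ms, l1.length ≤ (C1.filter fun y => !Nat.beq y p).length)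
    (h : run l2.length l1.length ms LO HI = true) : Good q := by
  have hd2 := c.dom2 h2
  have hd1 := c.dom1 h1
  have hp2 : ∀ x ∈ C2.take l2.length, 0 < x := fun x hx => C2_pos x (List.mem_of_mem_take hx)
  have hp1 : ∀ x ∈ C1.take l1.length, 0 < x := fun x hx => C1_pos x (List.mem_of_mem_take hx)
  have hq := c.hq
  rw [run, Bool.and_eq_true, Bool.and_eq_true, Bool.and_eq_true, Bool.or_eq_true, Nat.ble_eq] at h
  obtain ⟨e1, e2, e3, e4⟩ := h
  by_cases hHI : HI ≤ q
  · have hQ : HI ≤ q ^ 1 := by rw [pow_one]; exact hHI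
    rcases e1 with e1 | e1
    · exact good_tst2 c _ _ hd2 hd1 hp2 hp1 1 _ _ _ one_ne_zero hQ e1
    · exact good_tst2 c _ _ hd2 hd1 hp2 hp1 1 _ _ _ one_ne_zero hQ e1
  · have hLO : LO + 1 ≤ q := by
      have h3 : (LO + 1) ^ 3 ≤ q ^ 3 := by
        refine e2.trans ?_
        refine le_trans ?_ (c.le2.trans (Nat.sub_le _ _))
        rw [pow_one]
        exact Nat.mul_le_mul_left _ (Nat.mul_le_mul (pr_le _ _ hd2) (pr_le _ _ hd1))
      exact (Nat.pow_le_pow_iff_left three_ne_zero).1 h3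
    by_cases hall : ∀ p ∈ ms, p ∈ l1
    · have hpd : ∀ p ∈ ms, p.Prime ∧ p ∣ vv (q - 1) := by
        intro p hp
        have hp' := hall p hp
        refine ⟨(c.p1 p hp').1, ?_⟩
        rw [vv_eq q hq]
        refine (Nat.dvd_of_mem_primeFactors ?_)
        rw [← c.tf, List.mem_toFinset]
        simp [hp']
      have hdv := pr_dvd ms hms _ hpd
      exact dfs_sound c _ hd1 hp1 (pr ms) LO HI hdv (by omega) (by omega) C2 _ [] l2
        C2_sorted c.s2 rfl (fun x hx => C2_complete x (c.p2 x hx).1 (c.p2 x hx).2) C2_bd C2_pos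
        rfl e4
    · push Not at hall
      obtain ⟨p, hp, hpl⟩ := hall
      rw [List.all_eq_true] at e3
      have e5 := e3 p hp
      refine good_chkO c _ _ hd2 ?_ hp2 ?_ _ e5
      · refine dom_take 620 _ l1 ?_ c.s1 ?_ ?_ (hmsl p hp)
        · rw [List.sortedLT_iff_pairwise]
          exact (List.sortedLT_iff_pairwise.1 C1_sorted).sublist List.filter_sublist
        · intro x hx
          rcases C1_complete x (c.p1 x hx).1 (c.p1 x hx).2 with h | h
          · left
            rw [List.mem_filter]
            refine ⟨h, ?_⟩
            have hb : Nat.beq x p = false := by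
              rw [Bool.eq_false_iff, Ne, Nat.beq_eq]
              rintro rfl
              exact hpl hx
            rw [hb]; rfl
          · exact Or.inr h
        · exact fun x hx => C1_bd x (List.mem_of_mem_filter hx)
      · exact fun x hx => C1_pos x (List.mem_of_mem_filter (List.mem_of_mem_take hx))

theorem dvd_of_two_mod (q p : ℕ) (hq : 2 ≤ q) (hp : p.Prime) (h3 : p % 3 = 2)
    (h : p ∣ q ^ 3 - 1) : p ∣ q - 1 := by
  haveI : Fact p.Prime := ⟨hp⟩
  have hc : (q : ZMod p) ^ 3 = 1 := by
    have h1 := (ZMod.natCast_eq_zero_iff (q ^ 3 - 1) p).2 h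
    rw [Nat.cast_sub (Nat.one_le_pow _ _ (by omega))] at h1
    push_cast at h1
    exact sub_eq_zero.1 h1
  have hne : (q : ZMod p) ≠ 0 := by
    intro h0
    rw [h0] at hc
    simp at hc
  have hf := ZMod.pow_card_sub_one_eq_one hne
  have hpe : p - 1 = 3 * (p / 3) + 1 := by omega
  rw [hpe, pow_succ, pow_mul, hc, one_pow, one_mul] at hf
  rw [← ZMod.natCast_eq_zero_iff, Nat.cast_sub (by omega), hf]
  simp

theorem three_dvd (q : ℕ) (hq : 2 ≤ q) (h : 3 ∣ q ^ 3 - 1) : 3 ∣ q - 1 := by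
  rw [← vv_eq q hq, vv] at h
  obtain ⟨n, hn⟩ : ∃ n, n = q - 1 := ⟨_, rfl⟩
  rw [← hn] at h ⊢
  rcases (Nat.prime_three.dvd_mul).1 h with h | h
  · exact h
  · have h1 : 3 ∣ n * n := by
      have h2 : n * n + 3 * n + 3 = n * n + 3 * (n + 1) := by ring
      rw [h2] at h
      exact (Nat.dvd_add_left (dvd_mul_right _ _)).1 h
    rcases (Nat.prime_three.dvd_mul).1 h1 with h | h <;> exact h

theorem nine_dvd (q : ℕ) (hq : 2 ≤ q) (h : 3 ∣ q ^ 3 - 1) : 9 ∣ q ^ 3 - 1 := by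
  obtain ⟨k, hk⟩ := three_dvd q hq h
  rw [← vv_eq q hq, hk, vv]
  exact ⟨k * (3 * k * k + 3 * k + 1), by ring⟩

theorem pr_coprime_three (l : List ℕ) (h : ∀ p ∈ l, p % 3 ≠ 0) : Nat.Coprime 3 (pr l) := by
  induction l with
  | nil => simp [pr]
  | cons a l ih =>
    rw [pr]
    refine Nat.Coprime.mul_right ?_ (ih fun x hx => h x (List.mem_cons_of_mem _ hx))
    rw [Nat.Prime.coprime_iff_not_dvd Nat.prime_three]
    have := h a List.mem_cons_self
    omega

theorem exists_cfg (q : ℕ) (hq : 2 ≤ q) : ∃ h l2 l1, Cfg q h l2 l1 := by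
  obtain ⟨S, hS⟩ : ∃ S, S = (q ^ 3 - 1).primeFactors := ⟨_, rfl⟩
  obtain ⟨h, hh⟩ : ∃ h, h = if 3 ∈ S then 1 else 0 := ⟨_, rfl⟩
  obtain ⟨l2, hl2⟩ : ∃ l2 : List ℕ, l2 = (S.filter (fun p => p % 3 = 2)).sort (· ≤ ·) := ⟨_, rfl⟩
  obtain ⟨l1, hl1⟩ : ∃ l1 : List ℕ, l1 = (S.filter (fun p => p % 3 = 1)).sort (· ≤ ·) := ⟨_, rfl⟩
  have hSp : ∀ p ∈ S, p.Prime ∧ p ∣ q ^ 3 - 1 := fun p hp =>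
    ⟨Nat.prime_of_mem_primeFactors (hS ▸ hp), Nat.dvd_of_mem_primeFactors (hS ▸ hp)⟩
  have m2 : ∀ p, p ∈ l2 ↔ p ∈ S ∧ p % 3 = 2 := by
    intro p; rw [hl2, Finset.mem_sort, Finset.mem_filter]
  have m1 : ∀ p, p ∈ l1 ↔ p ∈ S ∧ p % 3 = 1 := by
    intro p; rw [hl1, Finset.mem_sort, Finset.mem_filter]
  have m3 : ∀ p, p ∈ List.replicate h 3 ↔ p ∈ S ∧ p = 3 := by
    intro p
    rw [List.mem_replicate, hh]
    split_ifs with h3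
    · constructor
      · rintro ⟨-, rfl⟩; exact ⟨h3, rfl⟩
      · rintro ⟨-, rfl⟩; exact ⟨one_ne_zero, rfl⟩
    · constructor
      · rintro ⟨h0, -⟩; exact absurd rfl h0
      · rintro ⟨h0, rfl⟩; exact absurd h0 h3
  have hlt : h < 2 := by rw [hh]; split_ifs <;> norm_num
  have n2 : l2.Nodup := hl2 ▸ Finset.sort_nodup _ _
  have n1 : l1.Nodup := hl1 ▸ Finset.sort_nodup _ _
  have n3 : (List.replicate h 3).Nodup := by
    rw [List.nodup_replicate]; omega
  have n21 : (l2 ++ l1).Nodup := by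
    rw [List.nodup_append']
    refine ⟨n2, n1, ?_⟩
    intro x hx hy
    have := ((m2 x).1 hx).2
    have := ((m1 x).1 hy).2
    omega
  have n32 : (List.replicate h 3 ++ l2).Nodup := by
    rw [List.nodup_append']
    refine ⟨n3, n2, ?_⟩
    intro x hx hy
    have := ((m3 x).1 hx).2
    have := ((m2 x).1 hy).2
    omega
  have n321 : (List.replicate h 3 ++ (l2 ++ l1)).Nodup := by
    rw [List.nodup_append']
    refine ⟨n3, n21, ?_⟩
    intro x hx hy
    have := ((m3 x).1 hx).2
    rcases List.mem_append.1 hy with hy | hy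
    · have := ((m2 x).1 hy).2
      omega
    · have := ((m1 x).1 hy).2
      omega
  have hprep : pr (List.replicate h 3) = 3 ^ h := by rw [pr_eq, List.prod_replicate]
  refine ⟨h, l2, l1, hq, hlt, hl2 ▸ Finset.sortedLT_sort _, hl1 ▸ Finset.sortedLT_sort _,
    fun p hp => ⟨(hSp p ((m2 p).1 hp).1).1, ((m2 p).1 hp).2⟩,
    fun p hp => ⟨(hSp p ((m1 p).1 hp).1).1, ((m1 p).1 hp).2⟩, n321, ?_, ?_, ?_⟩
  · rw [← hS]
    ext x
    rw [List.mem_toFinset, List.mem_append, List.mem_append, m3, m2, m1]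
    constructor
    · rintro (h | h | h) <;> exact h.1
    · intro hx
      have h1 := (hSp x hx).1
      have h2 : x % 3 = 0 ∨ x % 3 = 1 ∨ x % 3 = 2 := by omega
      rcases h2 with h2 | h2 | h2
      · left
        exact ⟨hx, ((Nat.prime_dvd_prime_iff_eq Nat.prime_three h1).1
          (Nat.dvd_of_mod_eq_zero h2)).symm⟩
      · exact Or.inr (Or.inr ⟨hx, h2⟩)
      · exact Or.inr (Or.inl ⟨hx, h2⟩)
  · rw [← hprep, ← pr_append]
    refine pr_dvd _ n32 _ ?_
    intro p hp
    rcases List.mem_append.1 hp with hp | hp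
    · obtain ⟨h1, rfl⟩ := (m3 p).1 hp
      exact ⟨Nat.prime_three, three_dvd q hq (hSp 3 h1).2⟩
    · obtain ⟨h1, h2⟩ := (m2 p).1 hp
      exact ⟨(hSp p h1).1, dvd_of_two_mod q p hq (hSp p h1).1 h2 (hSp p h1).2⟩
  · have hd : pr (l2 ++ l1) ∣ q ^ 3 - 1 := by
      refine pr_dvd _ n21 _ ?_
      intro p hp
      rcases List.mem_append.1 hp with hp | hp
      · exact hSp p ((m2 p).1 hp).1
      · exact hSp p ((m1 p).1 hp).1
    rw [← pr_append]
    have hcop : Nat.Coprime (9 ^ h) (pr (l2 ++ l1)) := by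
      apply Nat.Coprime.pow_left
      rw [show 9 = 3 ^ 2 by norm_num]
      apply Nat.Coprime.pow_left
      apply pr_coprime_three
      intro p hp
      rcases List.mem_append.1 hp with hp | hp
      · have := ((m2 p).1 hp).2; omega
      · have := ((m1 p).1 hp).2; omega
    refine hcop.mul_dvd_of_dvd_of_dvd ?_ hd
    rw [hh]
    split_ifs with h3
    · rw [pow_one]
      exact nine_dvd q hq (hSp 3 h3).2
    · rw [pow_zero]; exact one_dvd _

theorem good_small (q : ℕ) (hq : 2 ≤ q) (h28 : (q ^ 3 - 1).primeFactors.card ≤ 28)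
    (hcond : 24 ≤ (q ^ 3 - 1).primeFactors.card ∨ 8 * 10 ^ 12 ≤ q) : Good q := by
  obtain ⟨h, l2, l1, c⟩ := exists_cfg q hq
  rw [c.card] at h28 hcond
  have hlt := c.hh
  have h0 := allb_spec _ _ tab_ok h hlt
  have h1 := allb_spec _ _ h0 l2.length (by omega)
  have h2 := allb_spec _ _ h1 l1.length (by omega)
  rw [Bool.or_eq_true, Nat.blt_eq] at h2
  rcases h2 with h2 | h2
  · omega
  have k2 : l2.length ≤ 28 := by omega
  have k1 : l1.length ≤ 28 := by omega
  have hd2 := c.dom2 k2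
  have hd1 := c.dom1 k1
  have hp2 : ∀ x ∈ C2.take l2.length, 0 < x := fun x hx => C2_pos x (List.mem_of_mem_take hx)
  have hp1 : ∀ x ∈ C1.take l1.length, 0 < x := fun x hx => C1_pos x (List.mem_of_mem_take hx)
  rw [tab, Bool.or_eq_true, Bool.or_eq_true, Bool.and_eq_true, Bool.and_eq_true, Nat.blt_eq,
    Nat.beq_eq, List.any_eq_true] at h2
  rcases h2 with h2 | ⟨h3, h2⟩ | ⟨h3, x, hx, h2⟩
  · exact good_chkO c _ _ hd2 hd1 hp2 hp1 _ h2
  · refine good_tst2 c _ _ hd2 hd1 hp2 hp1 1 _ _ _ one_ne_zero ?_ h2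
    rw [pow_one]
    rcases hcond with h4 | h4
    · omega
    · norm_num at h4
      exact h4
  · subst h3
    rw [Bool.and_eq_true, Nat.beq_eq, Nat.beq_eq] at h2
    have hr := run_ok x hx
    have hpo := prm_ok x hx
    rw [h2.1, h2.2] at hr
    rw [h2.2] at hpo
    exact run_sound c k2 k1 _ _ _ hpo.1 hpo.2 hr

theorem good_all (q : ℕ) (hq : 2 ≤ q)
    (hcond : 24 ≤ (q ^ 3 - 1).primeFactors.card ∨ 8 * 10 ^ 12 ≤ q) : Good q := by
  by_cases h1 : (q ^ 3 - 1).primeFactors.card ≤ 28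
  · exact good_small q hq h1 hcond
  · by_cases h2 : (q ^ 3 - 1).primeFactors.card ≤ 200
    · exact good_mid q hq (by omega) h2
    · exact good_big q hq (by omega)

end Stp

end

/-- If `q` is a prime power with `ω(q^3 - 1) ≥ 24` or `q ≥ 8·10^12`, then for
every `a ∈ F_q` there is a primitive `ξ ∈ F_{q^3}` with `ξ + ξ⁻¹` also primitive
and `Tr ξ = a`. -/
theorem stmt17 (q : ℕ) (hq : IsPrimePow q)
    (hcond : 24 ≤ (q ^ 3 - 1).primeFactors.card ∨ 8 * 10 ^ 12 ≤ q)
    (F E : Type*) [Field F] [Fintype F] [Field E] [Fintype E] [Algebra F E]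
    (hF : Fintype.card F = q) (hE : Fintype.card E = q ^ 3) (a : F) :
    ∃ ξ : E, orderOf ξ = q ^ 3 - 1 ∧ orderOf (ξ + ξ⁻¹) = q ^ 3 - 1 ∧
      Algebra.trace F E ξ = a :=
  Stp.good_imp q hq.two_le (Stp.good_all q hq.two_le hcond) F E hF hE a
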